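/- (Low-order pure multipole expansion for point defects.) Let N = d, let 0 ≤ p < d and J ≥ 0 be integers, and let V ∈ C^K(ℝ^{d×ℛ}) with K ≥ J + 2 satisfy the point symmetry. Let C_{σρ} := ∂²V/∂g_σ∂g_ρ(0), assume H is stable and admits a lattice Green's function 𝒢. Let g : Λ → ℝ^{d×ℛ} have compact support and let ū ∈ 𝓗¹ satisfy δE(ū)[v] = ∑_{ℓ∈Λ}∑_{ρ∈ℛ} g_ρ(ℓ)·D_ρ v(ℓ) for all v ∈ 𝓗ᶜ. Then for any lattice basis 𝒮 there exist symmetric arrays b^{(i,k)} ∈ (ℝ^𝒮)^{⊙i} for 1 ≤ i ≤ p, 1 ≤ k ≤ d, such that the remainder r_{p+1} := ū − ∑_{i=1}^{p}∑_{k=1}^{d} b^{(i,k)} : D_𝒮^i 𝒢_k satisfies |D^j r_{p+1}(ℓ)| ≤ C⟨ℓ⟩^{1−d−p−j} for all ℓ ∈ Λ and j = 1,…,J (with no logarithmic factor). -/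

import Mathlib

noncomputable section

open scoped BigOperators
open MeasureTheory Filter Topology

namespace Defect

abbrev Vec (n : ℕ) : Type := Fin n → ℝ

/-- Euclidean norm of a vector in `ℝ^n`. -/
def enorm {n : ℕ} (v : Vec n) : ℝ := Real.sqrt (∑ i, (v i) ^ 2)

/-- `⟨x⟩ := |x| + 2`. -/
def ang {n : ℕ} (v : Vec n) : ℝ := enorm v + 2

def dotV {n : ℕ} (x y : Vec n) : ℝ := ∑ i, x i * y i

/-- Matrix-vector product for a plain `Fin N → Fin N → ℝ` matrix. -/
def mulV {N : ℕ} (M : Fin N → Fin N → ℝ) (v : Vec N) : Vec N := fun i => ∑ j, M i j * v j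

/-- Euclidean (Frobenius) norm of an `N × N` array. -/
def mnorm {N : ℕ} (M : Fin N → Fin N → ℝ) : ℝ := Real.sqrt (∑ i, ∑ j, (M i j) ^ 2)

/-- The lattice point `A z` for `z ∈ ℤ^d`. -/
def latticePt (d : ℕ) (A : Matrix (Fin d) (Fin d) ℝ) (z : Fin d → ℤ) : Vec d :=
  fun i => ∑ j, A i j * (z j : ℝ)

/-- The Bravais lattice `Λ = A ℤ^d`. -/
def Lattice (d : ℕ) (A : Matrix (Fin d) (Fin d) ℝ) : Set (Vec d) :=
  Set.range (latticePt d A)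

/-- First-order finite difference `D_ρ u (ℓ) = u(ℓ+ρ) - u(ℓ)`. -/
def D1 {d : ℕ} {M : Type} [AddCommGroup M] (ρ : Vec d) (u : Vec d → M) (ℓ : Vec d) : M :=
  u (ℓ + ρ) - u ℓ

/-- Iterated finite difference `D_{ρ₁} ⋯ D_{ρ_j} u (ℓ)` (closed form). -/
def Dmulti {d : ℕ} {M : Type} [AddCommGroup M] [Module ℝ M] {j : ℕ}
    (ρs : Fin j → Vec d) (u : Vec d → M) (ℓ : Vec d) : M :=
  ∑ S : Finset (Fin j), ((-1 : ℝ) ^ (j - S.card)) • u (ℓ + ∑ i ∈ S, ρs i)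

/-- `|Du(ℓ)|²`, the squared Euclidean norm of the stencil of first differences. -/
def Dnorm1Sq {d N : ℕ} (R : Finset (Vec d)) (u : Vec d → Vec N) (ℓ : Vec d) : ℝ :=
  ∑ ρ ∈ R, (enorm (D1 ρ u ℓ)) ^ 2

/-- `|D^j u(ℓ)|`, the Euclidean norm of the array `(D_{ρ⃗} u(ℓ))_{ρ⃗ ∈ R^j}`. -/
def DnormJ {d N : ℕ} (R : Finset (Vec d)) (j : ℕ) (u : Vec d → Vec N) (ℓ : Vec d) : ℝ :=
  Real.sqrt (∑ ρs : Fin j → {x // x ∈ R},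
    (enorm (Dmulti (fun i => (ρs i : Vec d)) u ℓ)) ^ 2)

/-- The linearized lattice operator
`H[u](ℓ) = ∑_{σ,ρ∈R} (C_{σρ} D_ρ u(ℓ-σ) - C_{σρ} D_ρ u(ℓ))`. -/
def Hop (d N : ℕ) (R : Finset (Vec d)) (C : Vec d → Vec d → Fin N → Fin N → ℝ)
    (u : Vec d → Vec N) (ℓ : Vec d) : Vec N :=
  ∑ σ ∈ R, ∑ ρ ∈ R, (mulV (C σ ρ) (D1 ρ u (ℓ - σ)) - mulV (C σ ρ) (D1 ρ u ℓ))

/-- `u ∈ 𝓗¹`. -/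
def InH1 {d N : ℕ} (A : Matrix (Fin d) (Fin d) ℝ) (R : Finset (Vec d))
    (u : Vec d → Vec N) : Prop :=
  Summable fun z : Fin d → ℤ => Dnorm1Sq R u (latticePt d A z)

/-- `u ∈ 𝓗ᶜ` : the stencil `Du` has bounded support on the lattice. -/
def InHc {d N : ℕ} (A : Matrix (Fin d) (Fin d) ℝ) (R : Finset (Vec d))
    (u : Vec d → Vec N) : Prop :=
  ∃ rad : ℝ, ∀ z : Fin d → ℤ, rad ≤ enorm (latticePt d A z) →
    ∀ ρ ∈ R, D1 ρ u (latticePt d A z) = 0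

/-- Stability of the lattice operator `H`. -/
def IsStable (d N : ℕ) (A : Matrix (Fin d) (Fin d) ℝ) (R : Finset (Vec d))
    (C : Vec d → Vec d → Fin N → Fin N → ℝ) : Prop :=
  ∃ c₀ : ℝ, 0 < c₀ ∧ ∀ u : Vec d → Vec N, InHc A R u →
    c₀ * (∑' z : Fin d → ℤ, Dnorm1Sq R u (latticePt d A z)) ≤
      ∑' z : Fin d → ℤ, ∑ σ ∈ R, ∑ ρ ∈ R,
        dotV (D1 σ u (latticePt d A z)) (mulV (C σ ρ) (D1 ρ u (latticePt d A z)))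

/-- `k`-th column of a matrix-valued function. -/
def col {d N : ℕ} (G : Vec d → Fin N → Fin N → ℝ) (k : Fin N) : Vec d → Vec N :=
  fun x i => G x i k

/-- `|D^j 𝒢(ℓ)|` for matrix-valued `𝒢`. -/
def DnormJmat {d N : ℕ} (R : Finset (Vec d)) (j : ℕ)
    (G : Vec d → Fin N → Fin N → ℝ) (ℓ : Vec d) : ℝ :=
  Real.sqrt (∑ k : Fin N, (DnormJ R j (col G k) ℓ) ^ 2)

/-- `𝒢` is a lattice Green's function for `H`. -/
def IsLatticeGreen (d N : ℕ) (A : Matrix (Fin d) (Fin d) ℝ) (R : Finset (Vec d))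
    (C : Vec d → Vec d → Fin N → Fin N → ℝ) (G : Vec d → Fin N → Fin N → ℝ) : Prop :=
  (∀ (k : Fin N) (z : Fin d → ℤ),
      Hop d N R C (col G k) (latticePt d A z) =
        if latticePt d A z = 0 then Pi.single k 1 else 0) ∧
  (∀ j : ℕ, 1 ≤ j → ∃ cj : ℝ, ∀ z : Fin d → ℤ,
      DnormJmat R j G (latticePt d A z) ≤
        cj * ang (latticePt d A z) ^ ((2 : ℝ) - d - j))

/-- A symmetric array `b ∈ (ℝ^{Fin d})^{⊙ i}`. -/
def SymArr {d i : ℕ} (b : (Fin i → Fin d) → ℝ) : Prop :=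
  ∀ (π : Equiv.Perm (Fin i)) (σv : Fin i → Fin d), b (σv ∘ π) = b σv

/-- `b : D_𝒮^i f`, a multipole term built from the basis `s`. -/
def multipole (d N : ℕ) (s : Fin d → Vec d) (i : ℕ) (b : (Fin i → Fin d) → ℝ)
    (f : Vec d → Vec N) : Vec d → Vec N :=
  fun ℓ => ∑ σv : Fin i → Fin d, b σv • Dmulti (fun m => s (σv m)) f ℓ

/-- Iterated partial derivative `∂_{j₁} ⋯ ∂_{j_i} f (x)`. -/
def pderivMulti {d : ℕ} (i : ℕ) (js : Fin i → Fin d) (f : Vec d → ℝ) (x : Vec d) : ℝ :=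
  iteratedFDeriv ℝ i f x (fun m => Pi.single (js m) (1 : ℝ))

/-- `a : ∇^i f (x)` for a tensor `a ∈ (ℝ^d)^{⊗ i}`. -/
def aContract {d : ℕ} (i : ℕ) (a : (Fin i → Fin d) → ℝ) (f : Vec d → ℝ) (x : Vec d) : ℝ :=
  ∑ js : Fin i → Fin d, a js * pderivMulti i js f x

/-- Elementary tensor `σ⃗^⊗` as an array. -/
def tensorPow {d k : ℕ} (σs : Fin k → Vec d) : (Fin k → Fin d) → ℝ :=
  fun js => ∏ m, σs m (js m)

/-- Symmetric tensor product `σ⃗^⊙`. -/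
def symTensor {d k : ℕ} (σs : Fin k → Vec d) : (Fin k → Fin d) → ℝ :=
  fun js => ((k.factorial : ℝ))⁻¹ * ∑ π : Equiv.Perm (Fin k), tensorPow (σs ∘ π) js

/-- A symmetric tensor (array invariant under index permutations). -/
def SymTensor {d k : ℕ} (T : (Fin k → Fin d) → ℝ) : Prop :=
  ∀ (π : Equiv.Perm (Fin k)) (js : Fin k → Fin d), T (js ∘ π) = T js

/-- `∂V/∂g_ρ (gs)` as a vector in `ℝ^N`. -/
def gradV {d N : ℕ} (R : Finset (Vec d)) (V : ({x // x ∈ R} → Vec N) → ℝ)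
    (ρ : {x // x ∈ R}) (gs : {x // x ∈ R} → Vec N) : Vec N :=
  fun i => fderiv ℝ V gs (Pi.single ρ (Pi.single i 1))

/-- The finite-difference stencil `Du(ℓ) = (D_ρ u(ℓ))_{ρ ∈ R}`. -/
def Dstencil {d N : ℕ} (R : Finset (Vec d)) (u : Vec d → Vec N) (ℓ : Vec d) :
    {x // x ∈ R} → Vec N :=
  fun ρ => D1 (ρ : Vec d) u ℓ

/-- `C_{σρ} = ∂²V/∂g_σ ∂g_ρ (0)`. -/
def CofV {d N : ℕ} (R : Finset (Vec d)) (V : ({x // x ∈ R} → Vec N) → ℝ)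
    (σ ρ : Vec d) (i j : Fin N) : ℝ :=
  if hσ : σ ∈ R then
    if hρ : ρ ∈ R then
      iteratedFDeriv ℝ 2 V 0
        ![Pi.single ⟨σ, hσ⟩ (Pi.single i 1), Pi.single ⟨ρ, hρ⟩ (Pi.single j 1)]
    else 0
  else 0

/-- Summand of the first variation `δE(u)[v]` at a site. -/
def deltaEsite {d N : ℕ} (R : Finset (Vec d)) (V : ({x // x ∈ R} → Vec N) → ℝ)
    (u v : Vec d → Vec N) (ℓ : Vec d) : ℝ :=
  ∑ ρ ∈ R.attach, dotV (gradV R V ρ (Dstencil R u ℓ)) (D1 (ρ : Vec d) v ℓ)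

/-- The pointwise atomistic force `δE(u)(ℓ)`. -/
def deltaEpt {d N : ℕ} (R : Finset (Vec d)) (V : ({x // x ∈ R} → Vec N) → ℝ)
    (u : Vec d → Vec N) (ℓ : Vec d) : Vec N :=
  ∑ ρ ∈ R.attach,
    (gradV R V ρ (Dstencil R u (ℓ - (ρ : Vec d))) - gradV R V ρ (Dstencil R u ℓ))

/-- Point symmetry of the site potential. -/
def PointSym {d N : ℕ} (R : Finset (Vec d)) (hRsym : ∀ ρ ∈ R, -ρ ∈ R)
    (V : ({x // x ∈ R} → Vec N) → ℝ) : Prop :=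
  ∀ gs : {x // x ∈ R} → Vec N,
    V (fun ρ => -(gs ⟨-(ρ : Vec d), hRsym _ ρ.2⟩)) = V gs

/-- The Cauchy–Born elasticity tensor `ℂ_{iajb}`. -/
def CB {d N : ℕ} (A : Matrix (Fin d) (Fin d) ℝ) (R : Finset (Vec d))
    (C : Vec d → Vec d → Fin N → Fin N → ℝ)
    (i : Fin N) (a : Fin d) (j : Fin N) (b : Fin d) : ℝ :=
  (|A.det|)⁻¹ * ∑ ρ ∈ R, ∑ σ ∈ R, C ρ σ i j * ρ a * σ b

open scoped fwdDiff

/-! The equilibrium equation reads `H u = div (g - Φ(Du))`, where the nonlinear part `Φ` of the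
force vanishes to second order. By stability, `Du` is the gradient of the potential
`∑ F_{ρk} ∗ D_{-ρ} 𝒢_k` of the source `F = g - Φ(Du)`. As `F` is quadratic in `Du ∈ ℓ²`, a
weighted supremum argument gives `|Du| = O(⟨ℓ⟩⁻ᵈ)`, so that `F = O(⟨ℓ⟩⁻²ᵈ)`, and feeding this back
into the representation shows that each further difference gains one power.

The multipoles arise by Taylor expanding the kernel `D_{-ρ} 𝒢_k (ℓ - m)` at `m = 0` along the
lattice basis: the coefficients are moments of `F`, and because `p < d` even the moment
`∑ ⟨m⟩ᵖ |F(m)|` in the remainder converges, which is why no logarithm appears. Near `m = ℓ`, where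
the expansion is useless, summation by parts moves differences from the kernel onto the smooth
density `F`. -/

/-! ### Iterated finite differences -/

section IteratedDifferences

variable {Z E : Type*} [AddCommGroup Z] [AddCommGroup E]

/-- The iterated forward difference `D_{τ₁} ⋯ D_{τ_j} f` along a list of directions. -/
def fwdDiffs (l : List Z) (f : Z → E) : Z → E := l.foldl (fun h τ => Δ_[τ] h) f

@[simp] lemma fwdDiffs_nil (f : Z → E) : fwdDiffs [] f = f := rfl

@[simp] lemma fwdDiffs_cons (τ : Z) (l : List Z) (f : Z → E) :
    fwdDiffs (τ :: l) f = fwdDiffs l (Δ_[τ] f) := rfl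

lemma fwdDiffs_append (l l' : List Z) (f : Z → E) :
    fwdDiffs (l ++ l') f = fwdDiffs l' (fwdDiffs l f) := List.foldl_append

lemma fwdDiff_sub (τ : Z) (f g : Z → E) : Δ_[τ] (f - g) = Δ_[τ] f - Δ_[τ] g :=
  funext fun z => by simp only [fwdDiff, Pi.sub_apply]; abel

lemma fwdDiff_comm (σ τ : Z) (f : Z → E) : Δ_[σ] (Δ_[τ] f) = Δ_[τ] (Δ_[σ] f) :=
  funext fun z => by simp only [fwdDiff, add_right_comm z σ τ]; abel

lemma fwdDiff_zero_left (f : Z → E) : Δ_[(0 : Z)] f = 0 :=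
  funext fun z => by simp [fwdDiff]

lemma fwdDiff_add_left (σ τ : Z) (f : Z → E) :
    Δ_[σ + τ] f = (fun z => Δ_[σ] f (z + τ)) + Δ_[τ] f :=
  funext fun z => by simp only [fwdDiff, Pi.add_apply, add_assoc, add_comm τ σ]; abel

lemma fwdDiff_neg_left (τ : Z) (f : Z → E) : Δ_[-τ] f = fun z => -Δ_[τ] f (z + -τ) :=
  funext fun z => by simp [fwdDiff]

lemma fwdDiffs_perm {l l' : List Z} (h : l.Perm l') (f : Z → E) :
    fwdDiffs l f = fwdDiffs l' f :=
  haveI : RightCommutative fun (h : Z → E) (τ : Z) => Δ_[τ] h := ⟨fun h σ τ => fwdDiff_comm τ σ h⟩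
  h.foldl_eq f

lemma fwdDiffs_comm (l l' : List Z) (f : Z → E) :
    fwdDiffs l (fwdDiffs l' f) = fwdDiffs l' (fwdDiffs l f) := by
  rw [← fwdDiffs_append, ← fwdDiffs_append, fwdDiffs_perm List.perm_append_comm]

lemma fwdDiffs_fwdDiff (l : List Z) (τ : Z) (f : Z → E) :
    fwdDiffs l (Δ_[τ] f) = Δ_[τ] (fwdDiffs l f) :=
  fwdDiffs_comm l [τ] f

lemma fwdDiffs_add (l : List Z) (f g : Z → E) :
    fwdDiffs l (f + g) = fwdDiffs l f + fwdDiffs l g := by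
  induction l generalizing f g with
  | nil => rfl
  | cons τ l ih => rw [fwdDiffs_cons, fwdDiff_add, ih]; rfl

lemma fwdDiffs_sub (l : List Z) (f g : Z → E) :
    fwdDiffs l (f - g) = fwdDiffs l f - fwdDiffs l g := by
  induction l generalizing f g with
  | nil => rfl
  | cons τ l ih => rw [fwdDiffs_cons, fwdDiff_sub, ih]; rfl

lemma fwdDiffs_const_smul {S : Type*} [Monoid S] [DistribMulAction S E] (l : List Z) (c : S)
    (f : Z → E) : fwdDiffs l (c • f) = c • fwdDiffs l f := by
  induction l generalizing f with
  | nil => rfl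
  | cons τ l ih => rw [fwdDiffs_cons, fwdDiff_const_smul, ih]; rfl

lemma fwdDiffs_zero (l : List Z) : fwdDiffs l (0 : Z → E) = 0 := by
  simpa using fwdDiffs_const_smul l (0 : ℤ) (0 : Z → E)

lemma fwdDiffs_finsetSum {κ : Type*} (s : Finset κ) (l : List Z) (f : κ → Z → E) :
    fwdDiffs l (∑ k ∈ s, f k) = ∑ k ∈ s, fwdDiffs l (f k) := by
  induction l generalizing f with
  | nil => rfl
  | cons τ l ih => rw [fwdDiffs_cons, fwdDiff_finsetSum, ih]; rfl

lemma fwdDiffs_comp_addMonoidHom {X F : Type*} [AddCommGroup X] [AddCommGroup F] (T : Z →+ X)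
    (S : E →+ F) (l : List Z) (f : X → E) (x : X) :
    fwdDiffs l (fun z => S (f (T z + x))) = fun z => S (fwdDiffs (l.map T) f (T z + x)) := by
  induction l generalizing f with
  | nil => rfl
  | cons τ l ih =>
    rw [fwdDiffs_cons, List.map_cons, fwdDiffs_cons, ← ih]
    congr 1
    funext y
    simp only [fwdDiff, map_sub, map_add, add_right_comm]

lemma fwdDiffs_comp_add (l : List Z) (τ : Z) (f : Z → E) :
    fwdDiffs l (fun z => f (z + τ)) = fun z => fwdDiffs l f (z + τ) := by
  simpa using fwdDiffs_comp_addMonoidHom (.id Z) (.id E) l f τ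

lemma fwdDiffs_map {F : Type*} [AddCommGroup F] (S : E →+ F) (l : List Z) (f : Z → E) :
    fwdDiffs l (fun z => S (f z)) = fun z => S (fwdDiffs l f z) := by
  simpa using fwdDiffs_comp_addMonoidHom (.id Z) S l f 0

end IteratedDifferences

/-! ### Decay rates and symbol classes -/

section DecayCalculus

/-- A family of weights `w i : Z → [1, ∞)` that changes by at most a bounded factor, uniformly in
`i`, under each fixed translation. -/
structure SlowlyVarying {I Z : Type*} [AddCommGroup Z] (w : I → Z → ℝ) : Prop where
  one_le : ∀ i z, 1 ≤ w i z
  shift : ∀ τ, ∃ C, 0 ≤ C ∧ ∀ i z, w i z ≤ C * w i (z + τ)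

/-- The family `f i` is bounded by `C (w i)⁻ˢ` with `C` independent of `i`. -/
def UniformDecay {I Z E : Type*} [NormedAddCommGroup E] (w : I → Z → ℝ) (s : ℕ)
    (f : I → Z → E) : Prop :=
  ∃ C, 0 ≤ C ∧ ∀ i z, ‖f i z‖ ≤ C * (w i z ^ s)⁻¹

/-- Discrete symbol classes: the family `f i` decays at rate `s`, and each of up to `n` finite
differences improves the rate by one. -/
def UniformSymbol {I Z E : Type*} [AddCommGroup Z] [NormedAddCommGroup E] (w : I → Z → ℝ)
    (n s : ℕ) (f : I → Z → E) : Prop :=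
  ∀ l : List Z, l.length ≤ n → UniformDecay w (s + l.length) fun i => fwdDiffs l (f i)

/-- Decay at rate `s` of a single function, seen as a family indexed by `Unit`. -/
abbrev Decay {Z E : Type*} [NormedAddCommGroup E] (w : Z → ℝ) (s : ℕ) (f : Z → E) : Prop :=
  UniformDecay (fun _ : Unit => w) s fun _ => f

/-- Membership of a single function in a symbol class, as a family indexed by `Unit`. -/
abbrev Symbol {Z E : Type*} [AddCommGroup Z] [NormedAddCommGroup E] (w : Z → ℝ) (n s : ℕ)
    (f : Z → E) : Prop :=
  UniformSymbol (fun _ : Unit => w) n s fun _ => f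

variable {I Z E E₁ E₂ : Type*} [AddCommGroup Z]
  [NormedAddCommGroup E] [NormedAddCommGroup E₁] [NormedAddCommGroup E₂] {w : I → Z → ℝ}

namespace UniformDecay

section NoTranslations

variable {Z : Type*} {w : I → Z → ℝ}

lemma zero (s : ℕ) : UniformDecay w s fun _ => (0 : Z → E) := ⟨0, le_rfl, fun i z => by simp⟩

lemma add {s : ℕ} {f g : I → Z → E} (hf : UniformDecay w s f) (hg : UniformDecay w s g) :
    UniformDecay w s fun i => f i + g i := by
  obtain ⟨C, hC, hf⟩ := hf
  obtain ⟨C', hC', hg⟩ := hg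
  exact ⟨C + C', by positivity, fun i z => by
    rw [add_mul]; exact norm_add_le_of_le (hf i z) (hg i z)⟩

lemma neg {s : ℕ} {f : I → Z → E} (hf : UniformDecay w s f) : UniformDecay w s fun i => -f i := by
  simpa [UniformDecay] using hf

lemma sub {s : ℕ} {f g : I → Z → E} (hf : UniformDecay w s f) (hg : UniformDecay w s g) :
    UniformDecay w s fun i => f i - g i := by
  simpa only [sub_eq_add_neg] using hf.add hg.neg

end NoTranslations

lemma mono (hw : SlowlyVarying w) {s t : ℕ} {f : I → Z → E} (hf : UniformDecay w t f)
    (hst : s ≤ t) : UniformDecay w s f := by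
  obtain ⟨C, hC, hf⟩ := hf
  refine ⟨C, hC, fun i z => (hf i z).trans ?_⟩
  have := hw.one_le i z
  gcongr

lemma shift (hw : SlowlyVarying w) {s : ℕ} {f : I → Z → E} (hf : UniformDecay w s f) (τ : Z) :
    UniformDecay w s fun i z => f i (z + τ) := by
  obtain ⟨C, hC, hf⟩ := hf
  obtain ⟨K, hK, hshift⟩ := hw.shift τ
  refine ⟨C * K ^ s, by positivity, fun i z => ?_⟩
  have h₁ := hw.one_le i z
  have h₂ := hw.one_le i (z + τ)
  have hpow : w i z ^ s ≤ K ^ s * w i (z + τ) ^ s := by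
    rw [← mul_pow]
    gcongr
    exact hshift i z
  calc ‖f i (z + τ)‖ ≤ C * (w i (z + τ) ^ s)⁻¹ := hf i (z + τ)
    _ ≤ C * (K ^ s * (w i z ^ s)⁻¹) := by
        gcongr
        rw [← div_eq_mul_inv, inv_le_iff_one_le_mul₀ (by positivity), div_mul_eq_mul_div]
        exact (one_le_div (by positivity)).2 hpow
    _ = C * K ^ s * (w i z ^ s)⁻¹ := by ring

lemma fwdDiff (hw : SlowlyVarying w) {s : ℕ} {f : I → Z → E} (hf : UniformDecay w s f) (τ : Z) :
    UniformDecay w s fun i => Δ_[τ] (f i) :=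
  (hf.shift hw τ).sub hf

lemma fwdDiffs (hw : SlowlyVarying w) {s : ℕ} {f : I → Z → E} (hf : UniformDecay w s f)
    (l : List Z) : UniformDecay w s fun i => fwdDiffs l (f i) := by
  induction l generalizing f with
  | nil => exact hf
  | cons _ _ ih => exact ih (hf.fwdDiff hw _)

lemma pi {ι : Type*} [Fintype ι] (hw : SlowlyVarying w) {s : ℕ} {f : I → Z → ι → E}
    (hf : ∀ k, UniformDecay w s fun i z => f i z k) : UniformDecay w s f := by
  choose C hC hf using hf
  refine ⟨∑ k, C k, Finset.sum_nonneg fun k _ => hC k, fun i z => ?_⟩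
  have := hw.one_le i z
  have hsum : 0 ≤ ∑ k, C k := Finset.sum_nonneg fun k _ => hC k
  refine (pi_norm_le_iff_of_nonneg (by positivity)).2 fun k => (hf k i z).trans ?_
  gcongr
  exact Finset.single_le_sum (fun k _ => hC k) (Finset.mem_univ k)

variable [NormedSpace ℝ E] [NormedSpace ℝ E₁] [NormedSpace ℝ E₂]

lemma clm (L : E →L[ℝ] E₁) {s : ℕ} {f : I → Z → E} (hw : SlowlyVarying w)
    (hf : UniformDecay w s f) : UniformDecay w s fun i z => L (f i z) := by
  obtain ⟨C, hC, hf⟩ := hf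
  refine ⟨‖L‖ * C, by positivity, fun i z => ?_⟩
  have := hw.one_le i z
  calc ‖L (f i z)‖ ≤ ‖L‖ * ‖f i z‖ := L.le_opNorm _
    _ ≤ ‖L‖ * (C * (w i z ^ s)⁻¹) := by gcongr; exact hf i z
    _ = ‖L‖ * C * (w i z ^ s)⁻¹ := by ring

lemma bilin (B : E →L[ℝ] E₁ →L[ℝ] E₂) {s t : ℕ} {f : I → Z → E} {g : I → Z → E₁}
    (hw : SlowlyVarying w) (hf : UniformDecay w s f) (hg : UniformDecay w t g) :
    UniformDecay w (s + t) fun i z => B (f i z) (g i z) := by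
  obtain ⟨C, hC, hf⟩ := hf
  obtain ⟨C', hC', hg⟩ := hg
  refine ⟨‖B‖ * C * C', by positivity, fun i z => ?_⟩
  have := hw.one_le i z
  calc ‖B (f i z) (g i z)‖ ≤ ‖B‖ * ‖f i z‖ * ‖g i z‖ := B.le_opNorm₂ _ _
    _ ≤ ‖B‖ * (C * (w i z ^ s)⁻¹) * (C' * (w i z ^ t)⁻¹) := by
        gcongr
        exacts [hf i z, hg i z]
    _ = ‖B‖ * C * C' * (w i z ^ (s + t))⁻¹ := by rw [pow_add, mul_inv]; ring

end UniformDecay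

namespace UniformSymbol

lemma decay {n s : ℕ} {f : I → Z → E} (hf : UniformSymbol w n s f) : UniformDecay w s f :=
  hf [] (Nat.zero_le n)

lemma of_le {n m s : ℕ} {f : I → Z → E} (hf : UniformSymbol w n s f) (hm : m ≤ n) :
    UniformSymbol w m s f := fun l hl => hf l (hl.trans hm)

lemma succ_iff {n s : ℕ} {f : I → Z → E} : UniformSymbol w (n + 1) s f ↔
    UniformDecay w s f ∧ ∀ τ, UniformSymbol w n (s + 1) fun i => Δ_[τ] (f i) := by
  constructor
  · intro hf
    refine ⟨hf.decay, fun τ l hl => ?_⟩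
    rw [add_right_comm]
    exact hf (τ :: l) (Nat.succ_le_succ hl)
  · rintro ⟨hf, hdf⟩ (_ | ⟨τ, l⟩) hl
    · exact hf
    · have := hdf τ l (Nat.le_of_succ_le_succ hl)
      rwa [add_right_comm] at this

lemma of_decay (hw : SlowlyVarying w) {n s : ℕ} {f : I → Z → E} (hf : UniformDecay w (s + n) f) :
    UniformSymbol w n s f := fun l _ => (hf.fwdDiffs hw l).mono hw (by omega)

lemma add {n s : ℕ} {f g : I → Z → E} (hf : UniformSymbol w n s f) (hg : UniformSymbol w n s g) :
    UniformSymbol w n s fun i => f i + g i := fun l hl => by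
  simpa only [fwdDiffs_add] using (hf l hl).add (hg l hl)

lemma sub {n s : ℕ} {f g : I → Z → E} (hf : UniformSymbol w n s f) (hg : UniformSymbol w n s g) :
    UniformSymbol w n s fun i => f i - g i := fun l hl => by
  simpa only [fwdDiffs_sub] using (hf l hl).sub (hg l hl)

lemma zero (n s : ℕ) : UniformSymbol w n s fun _ => (0 : Z → E) := fun l _ => by
  simpa only [fwdDiffs_zero] using UniformDecay.zero _

lemma const (n : ℕ) (c : E) : UniformSymbol w n 0 fun (_ : I) (_ : Z) => c := by
  rintro (_ | ⟨τ, l⟩) _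
  · exact ⟨‖c‖, norm_nonneg c, fun i z => by simp [fwdDiffs_nil]⟩
  · have hzero : fwdDiffs (τ :: l) (fun _ : Z => c) = 0 := by
      rw [fwdDiffs_cons, fwdDiff_const]
      exact fwdDiffs_zero l
    simp only [hzero]
    exact .zero _

lemma sum {κ : Type*} (S : Finset κ) {n s : ℕ} {f : κ → I → Z → E}
    (hf : ∀ k ∈ S, UniformSymbol w n s (f k)) :
    UniformSymbol w n s fun i => ∑ k ∈ S, f k i := by
  classical
  induction S using Finset.induction_on with
  | empty => simpa only [Finset.sum_empty] using zero n s
  | insert k S hk ih =>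
    simp only [Finset.sum_insert hk]
    exact (hf k (by simp)).add (ih fun j hj => hf j (by simp [hj]))

lemma shift (hw : SlowlyVarying w) {n s : ℕ} {f : I → Z → E} (hf : UniformSymbol w n s f)
    (τ : Z) : UniformSymbol w n s fun i z => f i (z + τ) := fun l hl => by
  simpa only [fwdDiffs_comp_add] using (hf l hl).shift hw τ

lemma mono (hw : SlowlyVarying w) {n s t : ℕ} {f : I → Z → E} (hf : UniformSymbol w n t f)
    (hst : s ≤ t) : UniformSymbol w n s f := fun l hl => (hf l hl).mono hw (by omega)

lemma pi {ι : Type*} [Fintype ι] (hw : SlowlyVarying w) {n s : ℕ} {f : I → Z → ι → E}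
    (hf : ∀ k, UniformSymbol w n s fun i z => f i z k) : UniformSymbol w n s f :=
  fun l hl => .pi hw fun k => by
    convert hf k l hl using 3 with i z
    exact (congrFun (fwdDiffs_map (Pi.evalAddMonoidHom _ k) l (f i)) z).symm

variable [NormedSpace ℝ E] [NormedSpace ℝ E₁] [NormedSpace ℝ E₂]

lemma clm (hw : SlowlyVarying w) (L : E →L[ℝ] E₁) {n s : ℕ} {f : I → Z → E}
    (hf : UniformSymbol w n s f) : UniformSymbol w n s fun i z => L (f i z) := fun l hl => by
  convert UniformDecay.clm L hw (hf l hl) using 3 with i z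
  exact congrFun (fwdDiffs_map (L : E →+ E₁) l (f i)) z

lemma bilin (hw : SlowlyVarying w) (B : E →L[ℝ] E₁ →L[ℝ] E₂) {n s t : ℕ} {f : I → Z → E}
    {g : I → Z → E₁} (hf : UniformSymbol w n s f) (hg : UniformSymbol w n t g) :
    UniformSymbol w n (s + t) fun i z => B (f i z) (g i z) := by
  induction n generalizing s t f g with
  | zero =>
    intro l hl
    obtain rfl := List.eq_nil_of_length_eq_zero (Nat.le_zero.1 hl)
    have hfg := UniformDecay.bilin B hw hf.decay hg.decay
    exact hfg
  | succ n ih =>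
    rw [succ_iff]
    refine ⟨UniformDecay.bilin B hw hf.decay hg.decay, fun τ => ?_⟩
    have hfg := ih ((succ_iff.1 hf).2 τ) ((hg.of_le n.le_succ).shift hw τ)
    have hgf := ih (hf.of_le n.le_succ) ((succ_iff.1 hg).2 τ)
    rw [Nat.add_right_comm] at hfg
    convert hfg.add hgf using 3 with i
    funext z
    simp only [fwdDiff, map_sub, sub_apply, Pi.add_apply]
    abel

lemma multilinear_diag (hw : SlowlyVarying w) {n t : ℕ} {f : I → Z → E}
    (hf : UniformSymbol w n t f) (k : ℕ) {s : ℕ}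
    {T : I → Z → ContinuousMultilinearMap ℝ (fun _ : Fin k => E) E₁} (hT : UniformSymbol w n s T) :
    UniformSymbol w n (s + k * t) fun i z => T i z fun _ => f i z := by
  induction k generalizing s with
  | zero =>
    have hT₀ := hT.clm hw
      (continuousMultilinearCurryFin0 ℝ E E₁).toContinuousLinearEquiv.toContinuousLinearMap
    simp only [zero_mul, add_zero]
    convert hT₀ using 3 with i z
    exact congrArg (T i z) (Subsingleton.elim _ _)
  | succ k ih =>
    have hcurry := hT.clm (E₁ := E →L[ℝ] ContinuousMultilinearMap ℝ (fun _ : Fin k => E) E₁) hw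
      (continuousMultilinearCurryLeftEquiv ℝ (fun _ : Fin (k + 1) => E)
        E₁).toContinuousLinearEquiv.toContinuousLinearMap
    have h := ih (hcurry.bilin hw (ContinuousLinearMap.id ℝ _) hf)
    rw [show s + (k + 1) * t = s + t + k * t by ring]
    convert h using 3 with i z
    exact congrArg (T i z) (Fin.cons_self_tail fun _ : Fin (k + 1) => f i z).symm

end UniformSymbol

end DecayCalculus

/-! ### Lattice weights and discrete Taylor expansion -/

section LatticeWeight

/-- A weight `w` on an abelian group that behaves like `⟨z⟩` on a lattice of dimension `d`. -/
structure LatticeWeight {Z : Type*} [AddCommGroup Z] (d : ℕ) (w : Z → ℝ) : Prop where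
  two_le : ∀ z, 2 ≤ w z
  map_neg : ∀ z, w (-z) = w z
  map_add_le : ∀ z y, w (z + y) ≤ w z + w y
  summable_inv_pow_succ : Summable fun z => (w z ^ (d + 1))⁻¹

namespace LatticeWeight

variable {Z : Type*} [AddCommGroup Z] {d : ℕ} {w : Z → ℝ}

lemma pos (hw : LatticeWeight d w) (z : Z) : 0 < w z := two_pos.trans_le (hw.two_le z)

lemma one_le (hw : LatticeWeight d w) (z : Z) : 1 ≤ w z := one_le_two.trans (hw.two_le z)

lemma map_add_le_mul (hw : LatticeWeight d w) (z y : Z) : w (z + y) ≤ w z * w y := by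
  nlinarith [hw.map_add_le z y, hw.two_le z, hw.two_le y]

lemma le_mul_map_add (hw : LatticeWeight d w) (z y : Z) : w z ≤ w y * w (z + y) := by
  have h := hw.map_add_le_mul (z + y) (-y)
  rwa [hw.map_neg, add_neg_cancel_right, mul_comm] at h

lemma le_map_sub_add (hw : LatticeWeight d w) (z y : Z) : w z ≤ w (z - y) + w y := by
  simpa using hw.map_add_le (z - y) y

lemma map_sub_le (hw : LatticeWeight d w) (z y : Z) : w (z - y) ≤ w z + w y := by
  simpa [sub_eq_add_neg, hw.map_neg] using hw.map_add_le z (-y)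

lemma map_zero_le (hw : LatticeWeight d w) (z : Z) : w 0 ≤ 2 * w z := by
  simpa [two_mul] using hw.map_sub_le z z

lemma slowlyVarying (hw : LatticeWeight d w) : SlowlyVarying fun _ : Unit => w :=
  ⟨fun _ z => hw.one_le z, fun τ => ⟨w τ, (hw.pos τ).le, fun _ z => hw.le_mul_map_add z τ⟩⟩

lemma slowlyVarying_min (hw : LatticeWeight d w) : SlowlyVarying fun z m : Z => min (w m) (w z) :=
  ⟨fun _ _ => le_min (hw.one_le _) (hw.one_le _), fun τ => ⟨w τ, (hw.pos τ).le, fun z m => by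
    rw [mul_min_of_nonneg _ _ (hw.pos τ).le]
    exact min_le_min (hw.le_mul_map_add m τ)
      (le_mul_of_one_le_left (hw.pos z).le (hw.one_le τ))⟩⟩

lemma summable_inv_pow (hw : LatticeWeight d w) {s : ℕ} (hs : d + 1 ≤ s) :
    Summable fun z => (w z ^ s)⁻¹ := by
  refine hw.summable_inv_pow_succ.of_nonneg_of_le (fun z => ?_) fun z => ?_
  · have := hw.pos z
    positivity
  · have := hw.one_le z
    gcongr

lemma exists_norm_le (hw : LatticeWeight d w) {E : Type*} [NormedAddCommGroup E] {s : ℕ}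
    {f : Z → E} (hf : Decay w s f) : ∃ C, ∀ z, ‖f z‖ ≤ C := by
  obtain ⟨C, hC, hf⟩ := hf
  exact ⟨C, fun z => (hf () z).trans <| mul_le_of_le_one_right hC <|
    inv_le_one_of_one_le₀ <| one_le_pow₀ (hw.one_le z)⟩

lemma summable (hw : LatticeWeight d w) {s : ℕ} {f : Z → ℝ} (hf : Decay w s f)
    (hs : d + 1 ≤ s) : Summable f := by
  obtain ⟨C, -, hf⟩ := hf
  exact .of_norm_bounded ((hw.summable_inv_pow hs).mul_left C) fun z => hf () z

end LatticeWeight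

end LatticeWeight

section Taylor

variable {Z κ E : Type*} [AddCommGroup Z] [NormedAddCommGroup E] [NormedSpace ℝ E]

/-- A lattice path of `n` steps from `0` to `m` along the generators `a`, within `{w ≤ B}`: an
expression of translation by `m` through signed differences along the generators. -/
structure LatticePath (E : Type*) [NormedAddCommGroup E] [NormedSpace ℝ E] (w : Z → ℝ) (a : κ → Z)
    (n : ℕ) (B : ℝ) (m : Z) where
  /-- `1` for a forward step and `-1` for a backward one. -/
  sign : Fin n → ℝ
  /-- The generator used by each step. -/
  gen : Fin n → κ
  /-- The base point of the difference taken by each step. -/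
  base : Fin n → Z
  abs_sign_le : ∀ t, |sign t| ≤ 1
  weight_base_le : ∀ t, w (base t) ≤ B
  sub_eq_sum : ∀ (h : Z → E) z,
    h (z + m) - h z = ∑ t, sign t • Δ_[a (gen t)] h (z + base t)

/-- Every lattice point `m` is reached by a path whose length and extent are `O(w m)`. -/
structure ShortPaths (E : Type*) [NormedAddCommGroup E] [NormedSpace ℝ E] (w : Z → ℝ)
    (a : κ → Z) where
  /-- The constant in the bounds on length and extent. -/
  const : ℝ
  one_le_const : 1 ≤ const
  length : Z → ℕ
  length_le : ∀ m, length m ≤ const * w m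
  path : ∀ m, LatticePath E w a (length m) (const * w m) m

/-- The words of length less than `p`. -/
def shortWords (κ : Type*) [Finite κ] (p : ℕ) : Finset (List κ) :=
  (List.finite_length_lt κ p).toFinset

@[simp] lemma mem_shortWords [Finite κ] {p : ℕ} {σ : List κ} :
    σ ∈ shortWords κ p ↔ σ.length < p := by simp [shortWords]

lemma sum_shortWords_succ [Fintype κ] {M : Type*} [AddCommMonoid M] (p : ℕ) (f : List κ → M) :
    ∑ σ ∈ shortWords κ (p + 1), f σ = f [] + ∑ k, ∑ σ ∈ shortWords κ p, f (k :: σ) := by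
  classical
  have himage : shortWords κ (p + 1) =
      insert [] ((Finset.univ ×ˢ shortWords κ p).image fun x => x.1 :: x.2) := by
    ext (_ | ⟨k, σ⟩) <;> simp
  rw [himage, Finset.sum_insert (by simp), Finset.sum_image (by rintro ⟨⟩ _ ⟨⟩ _; simp),
    Finset.sum_product]

/-- Coefficients of a discrete Taylor expansion
`h (z + m) = ∑_{|σ| < p} coeff σ m • D_σ h z + O(w m ^ p ‖D^p h‖)` along the generators `a`. -/
structure TaylorScheme (E : Type*) [NormedAddCommGroup E] [NormedSpace ℝ E] [Finite κ] (w : Z → ℝ)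
    (a : κ → Z) (p : ℕ) where
  /-- The constant in the coefficient and remainder bounds. -/
  const : ℝ
  one_le_const : 1 ≤ const
  /-- The coefficient of the difference `D_σ h z` in the expansion of `h (z + m)`. -/
  coeff : List κ → Z → ℝ
  abs_coeff_le : ∀ σ ∈ shortWords κ p, ∀ m, |coeff σ m| ≤ const * w m ^ σ.length
  norm_remainder_le : ∀ (h : Z → E) (B : ℝ) (z m : Z), 0 ≤ B →
    (∀ l : List κ, l.length = p → ∀ y, w y ≤ const * w m →
      ‖fwdDiffs (l.map a) h (z + y)‖ ≤ B) →
    ‖h (z + m) - ∑ σ ∈ shortWords κ p, coeff σ m • fwdDiffs (σ.map a) h z‖ ≤ const * w m ^ p * B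

namespace TaylorScheme

variable {d : ℕ} {w : Z → ℝ} {a : κ → Z}

/-- The expansion of order `0`, whose remainder is `h (z + m)` itself. -/
def zero [Finite κ] : TaylorScheme E w a 0 where
  const := 1
  one_le_const := le_rfl
  coeff _ _ := 0
  abs_coeff_le _ hσ := by simp at hσ
  norm_remainder_le h B z m _ hB := by simpa using hB [] rfl m (by simp)

variable [DecidableEq κ]

/-- Expand each difference along the path to `m` with the coefficients `c`. -/
def succCoeff (P : ShortPaths E w a) (c : List κ → Z → ℝ) : List κ → Z → ℝ
  | [], _ => 1
  | k :: σ, m => ∑ t, if (P.path m).gen t = k then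
      (P.path m).sign t * c σ ((P.path m).base t) else 0

lemma abs_succCoeff_cons_le (hw : LatticeWeight d w) (P : ShortPaths E w a) {c : List κ → Z → ℝ}
    {C : ℝ} (hC : 1 ≤ C) {σ : List κ} (hc : ∀ m, |c σ m| ≤ C * w m ^ σ.length) (k : κ) (m : Z) :
    |succCoeff P c (k :: σ) m| ≤ C * P.const ^ (σ.length + 1) * w m ^ (σ.length + 1) := by
  have hP := P.one_le_const
  have hm := hw.pos m
  have hterm : ∀ t, |if (P.path m).gen t = k then
      (P.path m).sign t * c σ ((P.path m).base t) else 0| ≤ C * (P.const * w m) ^ σ.length := by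
    intro t
    split_ifs
    · have := hw.pos ((P.path m).base t)
      calc |(P.path m).sign t * c σ ((P.path m).base t)|
          ≤ 1 * (C * w ((P.path m).base t) ^ σ.length) := by
            rw [abs_mul]
            gcongr
            exacts [(P.path m).abs_sign_le t, hc _]
        _ ≤ C * (P.const * w m) ^ σ.length := by
            rw [one_mul]
            gcongr
            exact (P.path m).weight_base_le t
    · rw [abs_zero]
      positivity
  calc |succCoeff P c (k :: σ) m| ≤ ∑ _t : Fin (P.length m), C * (P.const * w m) ^ σ.length :=
        (Finset.abs_sum_le_sum_abs _ _).trans (Finset.sum_le_sum fun t _ => hterm t)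
    _ = P.length m * (C * (P.const * w m) ^ σ.length) := by simp
    _ ≤ P.const * w m * (C * (P.const * w m) ^ σ.length) := by
        gcongr
        exact P.length_le m
    _ = _ := by ring

lemma remainder_succCoeff [Finite κ] (P : ShortPaths E w a) (c : List κ → Z → ℝ) (p : ℕ)
    (h : Z → E) (z m : Z) :
    h (z + m) - ∑ σ ∈ shortWords κ (p + 1), succCoeff P c σ m • fwdDiffs (σ.map a) h z =
      ∑ t, (P.path m).sign t • (Δ_[a ((P.path m).gen t)] h (z + (P.path m).base t) -
        ∑ σ ∈ shortWords κ p, c σ ((P.path m).base t) •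
          fwdDiffs (σ.map a) (Δ_[a ((P.path m).gen t)] h) z) := by
  cases nonempty_fintype κ
  have hcons : ∀ k, ∑ σ ∈ shortWords κ p, succCoeff P c (k :: σ) m •
      fwdDiffs ((k :: σ).map a) h z = ∑ t, if (P.path m).gen t = k then (P.path m).sign t •
        ∑ σ ∈ shortWords κ p, c σ ((P.path m).base t) • fwdDiffs (σ.map a) (Δ_[a k] h) z
        else 0 := by
    intro k
    simp only [succCoeff, Finset.sum_smul, ite_smul, zero_smul, List.map_cons, fwdDiffs_cons]
    rw [Finset.sum_comm]
    refine Finset.sum_congr rfl fun t _ => ?_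
    split_ifs
    · simp only [mul_smul, Finset.smul_sum]
    · exact Finset.sum_const_zero
  rw [sum_shortWords_succ, Finset.sum_congr rfl fun k _ => hcons k, Finset.sum_comm]
  simp only [succCoeff, one_smul, List.map_nil, fwdDiffs_nil, Finset.sum_ite_eq, Finset.mem_univ,
    if_true, smul_sub, Finset.sum_sub_distrib]
  rw [← (P.path m).sub_eq_sum h z, sub_sub]

lemma norm_remainder_succCoeff_le [Finite κ] (hw : LatticeWeight d w) (P : ShortPaths E w a)
    {p : ℕ} (S : TaylorScheme E w a p) {h : Z → E} {B : ℝ} {z m : Z} (hB₀ : 0 ≤ B)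
    (hB : ∀ l : List κ, l.length = p + 1 → ∀ y, w y ≤ S.const * P.const ^ (p + 1) * w m →
      ‖fwdDiffs (l.map a) h (z + y)‖ ≤ B) :
    ‖h (z + m) - ∑ σ ∈ shortWords κ (p + 1), succCoeff P S.coeff σ m • fwdDiffs (σ.map a) h z‖ ≤
      S.const * P.const ^ (p + 1) * w m ^ (p + 1) * B := by
  have hP := P.one_le_const
  have hS := S.one_le_const
  have hm := hw.pos m
  rw [remainder_succCoeff P S.coeff p]
  set r : Fin (P.length m) → E := fun t => Δ_[a ((P.path m).gen t)] h (z + (P.path m).base t) -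
    ∑ σ ∈ shortWords κ p, S.coeff σ ((P.path m).base t) •
      fwdDiffs (σ.map a) (Δ_[a ((P.path m).gen t)] h) z
  have hr : ∀ t, ‖r t‖ ≤ S.const * (P.const * w m) ^ p * B := by
    intro t
    have hbase := (P.path m).weight_base_le t
    have hpos := hw.pos ((P.path m).base t)
    refine (S.norm_remainder_le _ B z _ hB₀ fun l hl y hy => ?_).trans (by gcongr)
    refine hB ((P.path m).gen t :: l) (by simp [hl]) y (hy.trans ?_)
    calc S.const * w ((P.path m).base t) ≤ S.const * (P.const ^ 1 * w m) := by
          rw [pow_one]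
          gcongr
      _ ≤ S.const * (P.const ^ (p + 1) * w m) := by
          gcongr
          · omega
      _ = S.const * P.const ^ (p + 1) * w m := by ring
  calc ‖∑ t, (P.path m).sign t • r t‖ ≤ ∑ _t : Fin (P.length m),
        S.const * (P.const * w m) ^ p * B := by
        refine norm_sum_le_of_le _ fun t _ => ?_
        rw [norm_smul]
        exact (mul_le_of_le_one_left (norm_nonneg _) ((P.path m).abs_sign_le t)).trans (hr t)
    _ = P.length m * (S.const * (P.const * w m) ^ p * B) := by simp
    _ ≤ P.const * w m * (S.const * (P.const * w m) ^ p * B) := by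
        gcongr
        exact P.length_le m
    _ = _ := by ring

/-- The expansion of order `p + 1` obtained by expanding the differences along short paths. -/
def succ [Finite κ] (hw : LatticeWeight d w) (P : ShortPaths E w a) {p : ℕ}
    (S : TaylorScheme E w a p) : TaylorScheme E w a (p + 1) where
  const := S.const * P.const ^ (p + 1)
  one_le_const := one_le_mul_of_one_le_of_one_le S.one_le_const (one_le_pow₀ P.one_le_const)
  coeff := succCoeff P S.coeff
  abs_coeff_le := by
    have hP := P.one_le_const
    have hS := S.one_le_const
    rintro (_ | ⟨k, σ⟩) hσ m
    · simpa [succCoeff] using one_le_mul_of_one_le_of_one_le hS (one_le_pow₀ hP (n := p + 1))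
    · have hσ : σ.length < p := by simpa using hσ
      have hm := hw.pos m
      refine (abs_succCoeff_cons_le hw P hS
        (fun m => S.abs_coeff_le σ (by simpa using hσ) m) k m).trans ?_
      rw [List.length_cons]
      gcongr
  norm_remainder_le _ _ _ _ hB₀ hB := norm_remainder_succCoeff_le hw P S hB₀ hB

/-- Discrete Taylor expansion of any order. -/
def ofShortPaths [Finite κ] (hw : LatticeWeight d w) (P : ShortPaths E w a) :
    (p : ℕ) → TaylorScheme E w a p
  | 0 => zero
  | p + 1 => (ofShortPaths hw P p).succ hw P

end TaylorScheme

end Taylor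

/-! ### Convolutions -/

section Convolution

variable {Z E : Type*} [AddCommGroup Z] [NormedAddCommGroup E]

lemma exists_norm_fwdDiff_le {K : Z → E} (hK : ∃ C, ∀ z, ‖K z‖ ≤ C) (τ : Z) :
    ∃ C, ∀ z, ‖Δ_[τ] K z‖ ≤ C := by
  obtain ⟨C, hC⟩ := hK
  exact ⟨C + C, fun z => norm_sub_le_of_le (hC _) (hC _)⟩

lemma exists_norm_fwdDiffs_le {K : Z → E} (hK : ∃ C, ∀ z, ‖K z‖ ≤ C) (l : List Z) :
    ∃ C, ∀ z, ‖fwdDiffs l K z‖ ≤ C := by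
  induction l generalizing K with
  | nil => exact hK
  | cons _ _ ih => exact ih (exists_norm_fwdDiff_le hK _)

variable [NormedSpace ℝ E]

/-- The convolution `F ∗ K` of a scalar function with a vector-valued kernel. -/
def latticeConv (F : Z → ℝ) (K : Z → E) (z : Z) : E := ∑' m, F m • K (z - m)

variable [CompleteSpace E] {F : Z → ℝ} {K : Z → E}

lemma summable_latticeConv (hF : Summable F) (hK : ∃ C, ∀ z, ‖K z‖ ≤ C) (z : Z) :
    Summable fun m => F m • K (z - m) := by
  obtain ⟨C, hC⟩ := hK
  refine .of_norm_bounded (hF.abs.mul_right C) fun m => ?_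
  rw [norm_smul, Real.norm_eq_abs]
  gcongr
  exact hC _

lemma fwdDiff_latticeConv (hF : Summable F) (hK : ∃ C, ∀ z, ‖K z‖ ≤ C) (τ : Z) :
    Δ_[τ] (latticeConv F K) = latticeConv F (Δ_[τ] K) := by
  funext z
  simp only [fwdDiff, latticeConv]
  rw [← (summable_latticeConv hF hK _).tsum_sub (summable_latticeConv hF hK _)]
  exact tsum_congr fun m => by rw [← smul_sub, add_sub_right_comm]

lemma latticeConv_fwdDiff (hF : Summable F) (hK : ∃ C, ∀ z, ‖K z‖ ≤ C) (τ : Z) :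
    latticeConv (Δ_[τ] F) K = latticeConv F (Δ_[τ] K) := by
  funext z
  have hshift : ∀ m, F (m + τ) • K (z - m) = F (m + τ) • K (z + τ - (m + τ)) := fun m => by
    rw [add_sub_add_right_eq_sub]
  have hsum : Summable fun m => F (m + τ) • K (z + τ - (m + τ)) :=
    (Equiv.addRight τ).summable_iff.2 (summable_latticeConv hF hK (z + τ))
  rw [← fwdDiff_latticeConv hF hK]
  simp only [fwdDiff, latticeConv, sub_smul, hshift]
  rw [hsum.tsum_sub (summable_latticeConv hF hK z)]
  exact congrArg (· - _) ((Equiv.addRight τ).tsum_eq fun m => F m • K (z + τ - m))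

lemma fwdDiffs_latticeConv (hF : Summable F) (hK : ∃ C, ∀ z, ‖K z‖ ≤ C) (l : List Z) :
    fwdDiffs l (latticeConv F K) = latticeConv F (fwdDiffs l K) := by
  induction l generalizing K with
  | nil => rfl
  | cons τ l ih =>
    rw [fwdDiffs_cons, fwdDiff_latticeConv hF hK, ih (exists_norm_fwdDiff_le hK τ), fwdDiffs_cons]

lemma latticeConv_fwdDiffs (hF : Summable F) (hK : ∃ C, ∀ z, ‖K z‖ ≤ C) (l : List Z) :
    latticeConv (fwdDiffs l F) K = latticeConv F (fwdDiffs l K) := by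
  induction l generalizing F with
  | nil => rfl
  | cons τ l ih =>
    have hdF : Summable (Δ_[τ] F) := ((Equiv.addRight τ).summable_iff.2 hF).sub hF
    rw [fwdDiffs_cons, ih hdF, latticeConv_fwdDiff hF (exists_norm_fwdDiffs_le hK l),
      ← fwdDiffs_fwdDiff, fwdDiffs_cons]

end Convolution

/-! ### The near field -/

section NearField

/-- A family of cutoffs `χ z`, smooth at scale `w z`, supported where `w (z - m) ≤ w z / 2` and
equal to `1` on a comparable neighbourhood of `z`. -/
structure IsSmoothCutoff {Z : Type*} [AddCommGroup Z] (w : Z → ℝ) (χ : Z → Z → ℝ) : Prop where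
  symbol : ∀ n, UniformSymbol (fun z m => min (w m) (w z)) n 0 χ
  weight_sub_le : ∀ z m, χ z m ≠ 0 → w (z - m) ≤ w z / 2
  eq_one : ∃ c, 0 < c ∧ ∀ z m, w (z - m) < c * w z → χ z m = 1

variable {Z E : Type*} [AddCommGroup Z] [NormedAddCommGroup E] {d : ℕ} {w : Z → ℝ}

lemma exists_ne_zero_of_fwdDiffs_ne_zero (hw : LatticeWeight d w) (l : List Z) :
    ∃ W, 1 ≤ W ∧ ∀ (f : Z → E) m, fwdDiffs l f m ≠ 0 → ∃ y, w y ≤ W ∧ f (m + y) ≠ 0 := by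
  induction l with
  | nil => exact ⟨w 0, hw.one_le 0, fun f m h => ⟨0, le_rfl, by simpa using h⟩⟩
  | cons τ l ih =>
    obtain ⟨W, hW, H⟩ := ih
    refine ⟨W * w τ, one_le_mul_of_one_le_of_one_le hW (hw.one_le τ), fun f m h => ?_⟩
    obtain ⟨y, hy, hne⟩ := H (Δ_[τ] f) m h
    by_cases h₀ : f (m + y) = 0
    · refine ⟨y + τ, (hw.map_add_le_mul y τ).trans ?_, ?_⟩
      · have := hw.pos τ
        gcongr
      · rwa [fwdDiff, h₀, sub_zero, add_assoc] at hne
    · exact ⟨y, hy.trans (le_mul_of_one_le_right (by linarith) (hw.one_le τ)), h₀⟩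

lemma UniformSymbol.min_weight (hw : LatticeWeight d w) {n s : ℕ} {f : Z → E}
    (hf : Symbol w n s f) : UniformSymbol (fun z m => min (w m) (w z)) n s fun _ => f := by
  intro l hl
  obtain ⟨C, hC, hf⟩ := hf l hl
  refine ⟨C, hC, fun z m => (hf () m).trans ?_⟩
  have : 0 < min (w m) (w z) := lt_min (hw.pos m) (hw.pos z)
  gcongr
  exact min_le_left _ _

namespace IsSmoothCutoff

variable {χ : Z → Z → ℝ}

lemma weight_bounds (hw : LatticeWeight d w) (hχ : IsSmoothCutoff w χ) {z m y : Z} {W : ℝ}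
    (hy : w y ≤ W) (hne : χ z (m + y) ≠ 0) : w z ≤ 2 * W * w m ∧ w (z - m) ≤ W * w z := by
  have hsupp := hχ.weight_sub_le z (m + y) hne
  have hm := hw.pos m
  have hz := hw.pos z
  have hW : 0 < W := (hw.pos y).trans_le hy
  constructor
  · have hfar := hw.le_map_sub_add z (m + y)
    have hmy : w (m + y) ≤ w m * W :=
      (hw.map_add_le_mul m y).trans (mul_le_mul_of_nonneg_left hy hm.le)
    linarith
  · calc w (z - m) = w (z - (m + y) + y) := by rw [sub_add_eq_sub_sub, sub_add_cancel]
      _ ≤ w (z - (m + y)) * w y := hw.map_add_le_mul _ _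
      _ ≤ w z / 2 * W := by
          have := hw.pos y
          gcongr
      _ ≤ W * w z := by nlinarith

variable [NormedSpace ℝ E] {K : Z → E} {F : Z → ℝ} {n : ℕ}

lemma symbol_mul (hw : LatticeWeight d w) (hχ : IsSmoothCutoff w χ)
    (hF : Symbol w n (2 * d) F) :
    UniformSymbol (fun z m => min (w m) (w z)) n (2 * d) fun z m => χ z m * F m := by
  simpa using (hχ.symbol n).bilin hw.slowlyVarying_min (ContinuousLinearMap.mul ℝ ℝ)
    (hF.min_weight hw)

lemma norm_fwdDiffs_smul_fwdDiffs_le (hw : LatticeWeight d w) (hd : 2 ≤ d)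
    (hχ : IsSmoothCutoff w χ) (hK : ∀ n, Symbol w n (d - 1) K) (hF : Symbol w n (2 * d) F)
    {l₁ l₂ : List Z} (h₁ : l₁.length ≤ n) (h₂ : l₂.length ≤ 2) :
    ∃ C, 0 ≤ C ∧ ∀ z m, ‖fwdDiffs l₁ (fun m => χ z m * F m) m • fwdDiffs l₂ K (z - m)‖ ≤
      C * (w z ^ (2 * d + l₁.length + l₂.length - 2))⁻¹ * (w (z - m) ^ (d + 1))⁻¹ := by
  obtain ⟨C₁, hC₁, hdF⟩ := hχ.symbol_mul hw hF l₁ h₁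
  obtain ⟨C₂, hC₂, hdK⟩ := hK 2 l₂ h₂
  obtain ⟨W, hW, hsupp⟩ := exists_ne_zero_of_fwdDiffs_ne_zero (E := ℝ) hw l₁
  set q := l₁.length
  set e := l₂.length
  refine ⟨C₁ * (2 * W) ^ (2 * d + q) * (C₂ * W ^ (2 - e)), by positivity, fun z m => ?_⟩
  have hz := hw.pos z
  have hm := hw.pos m
  have hzm := hw.pos (z - m)
  by_cases h₀ : fwdDiffs l₁ (fun m => χ z m * F m) m = 0
  · rw [h₀, zero_smul, norm_zero]
    positivity
  obtain ⟨y, hy, hne⟩ := hsupp _ _ h₀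
  obtain ⟨hm_far, hzm_near⟩ := hχ.weight_bounds hw hy (left_ne_zero_of_mul hne)
  have hmin : w z ≤ min (w m) (w z) * (2 * W) := by
    rw [min_mul_of_nonneg _ _ (by positivity)]
    exact le_min (by linarith) (by nlinarith)
  have hF_le : ‖fwdDiffs l₁ (fun m => χ z m * F m) m‖ ≤
      C₁ * (2 * W) ^ (2 * d + q) * (w z ^ (2 * d + q))⁻¹ := by
    have : 0 < min (w m) (w z) := lt_min hm hz
    refine (hdF z m).trans ?_
    rw [mul_assoc]
    gcongr
    rw [← div_eq_mul_inv, le_div_iff₀ (by positivity), inv_mul_le_iff₀ (by positivity), ← mul_pow]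
    exact pow_le_pow_left₀ hz.le hmin _
  have hK_le : ‖fwdDiffs l₂ K (z - m)‖ ≤ C₂ * W ^ (2 - e) * w z ^ (2 - e) *
      (w (z - m) ^ (d + 1))⁻¹ := by
    have hsplit : w (z - m) ^ (d + 1) = w (z - m) ^ (d - 1 + e) * w (z - m) ^ (2 - e) := by
      rw [← pow_add]
      congr 1
      omega
    calc ‖fwdDiffs l₂ K (z - m)‖ ≤ C₂ * (w (z - m) ^ (d - 1 + e))⁻¹ := hdK () _
      _ = C₂ * (w (z - m) ^ (2 - e) * (w (z - m) ^ (d + 1))⁻¹) := by rw [hsplit]; field_simp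
      _ ≤ C₂ * ((W * w z) ^ (2 - e) * (w (z - m) ^ (d + 1))⁻¹) := by gcongr
      _ = _ := by ring
  have hsplit : w z ^ (2 * d + q) = w z ^ (2 * d + q + e - 2) * w z ^ (2 - e) := by
    rw [← pow_add]
    congr 1
    omega
  rw [norm_smul]
  calc _ ≤ C₁ * (2 * W) ^ (2 * d + q) * (w z ^ (2 * d + q))⁻¹ *
        (C₂ * W ^ (2 - e) * w z ^ (2 - e) * (w (z - m) ^ (d + 1))⁻¹) := by gcongr
    _ = _ := by rw [hsplit]; field_simp

lemma summable_mul (hw : LatticeWeight d w) (hd : 2 ≤ d) (hχ : IsSmoothCutoff w χ)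
    (hF : Decay w (2 * d) F) (z : Z) : Summable fun m => χ z m * F m := by
  obtain ⟨C, -, hC⟩ := (hχ.symbol 0).decay
  refine .of_norm_bounded ((hw.summable hF (by omega)).abs.mul_left C) fun m => ?_
  rw [norm_mul, Real.norm_eq_abs (F m)]
  gcongr
  simpa using hC z m

/-- Summation by parts moves the differences `l₁` onto the density, which is smooth at scale `w z`
near `z`; the differences `l₂` left on the kernel keep it from growing too fast to sum. -/
lemma decay_latticeConv_mul [CompleteSpace E] (hw : LatticeWeight d w) (hd : 2 ≤ d)
    (hχ : IsSmoothCutoff w χ) (hK : ∀ n, Symbol w n (d - 1) K) (hF : Symbol w n (2 * d) F)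
    {l₁ l₂ : List Z} (h₁ : l₁.length ≤ n) (h₂ : l₂.length ≤ 2) :
    Decay w (2 * d + l₁.length + l₂.length - 2) fun z =>
      latticeConv (fun m => χ z m * F m) (fwdDiffs (l₁ ++ l₂) K) z := by
  obtain ⟨C, hC, hterm⟩ := hχ.norm_fwdDiffs_smul_fwdDiffs_le hw hd hK hF h₁ h₂
  have hK_bdd := hw.exists_norm_le (hK 0).decay
  have hparts : ∀ z, latticeConv (fun m => χ z m * F m) (fwdDiffs (l₁ ++ l₂) K) z =
      latticeConv (fwdDiffs l₁ fun m => χ z m * F m) (fwdDiffs l₂ K) z := fun z => by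
    rw [latticeConv_fwdDiffs (hχ.summable_mul hw hd hF.decay z)
      (exists_norm_fwdDiffs_le hK_bdd l₂), fwdDiffs_append, fwdDiffs_comm]
  refine ⟨C * ∑' z, (w z ^ (d + 1))⁻¹, mul_nonneg hC (tsum_nonneg fun z => ?_), fun _ z => ?_⟩
  · have := hw.pos z
    positivity
  · have hsum : HasSum (fun m => (w (z - m) ^ (d + 1))⁻¹) (∑' z, (w z ^ (d + 1))⁻¹) :=
      (Equiv.subLeft z).hasSum_iff.2 hw.summable_inv_pow_succ.hasSum
    refine (congrArg norm (hparts z)).trans_le ?_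
    refine (tsum_of_norm_bounded (hsum.mul_left _) (hterm z)).trans_eq ?_
    ring

end IsSmoothCutoff

end NearField

/-! ### Multipole expansion of convolutions -/

section Expansion

variable {Z κ E : Type*} [AddCommGroup Z] [Finite κ] [NormedAddCommGroup E]
  {d : ℕ} {w : Z → ℝ} {a : κ → Z} {p D : ℕ} {K : Z → E} {χ : Z → Z → ℝ}

lemma exists_norm_fwdDiffs_map_le (hw : LatticeWeight d w)
    (hK : ∀ l, Decay w (D + l.length) (fwdDiffs l K)) (a : κ → Z) (p : ℕ) :
    ∃ B, 0 ≤ B ∧ ∀ l : List κ, l.length = p → ∀ z,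
      ‖fwdDiffs (l.map a) K z‖ ≤ B * (w z ^ (D + p))⁻¹ := by
  choose b hb₀ hb using hK
  set words := (List.finite_length_eq κ p).toFinset
  refine ⟨∑ l ∈ words, b (l.map a), Finset.sum_nonneg fun l _ => hb₀ _, fun l hl z => ?_⟩
  have hz := hw.pos z
  have hle := hb (l.map a) () z
  rw [List.length_map, hl] at hle
  refine hle.trans ?_
  gcongr
  exact Finset.single_le_sum (f := fun l => b (l.map a)) (fun l _ => hb₀ _)
    ((List.finite_length_eq κ p).mem_toFinset.2 hl)

variable [NormedSpace ℝ E]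

namespace TaylorScheme

/-- The Taylor polynomial `∑_{|σ| < p} coeff σ m • D_σ h z` approximating `h (z + m)`. -/
def taylorPoly (S : TaylorScheme E w a p) (h : Z → E) (z m : Z) : E :=
  ∑ σ ∈ shortWords κ p, S.coeff σ m • fwdDiffs (σ.map a) h z

lemma exists_norm_sub_taylorPoly_le (S : TaylorScheme E w a p) (hw : LatticeWeight d w)
    (hK : ∀ l, Decay w (D + l.length) (fwdDiffs l K)) :
    ∃ C, 0 ≤ C ∧ ∀ z m, S.const * w m ≤ w z / 2 →
      ‖K (z + m) - S.taylorPoly K z m‖ ≤ C * (w m ^ p * (w z ^ (D + p))⁻¹) := by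
  obtain ⟨B, hB₀, hB⟩ := exists_norm_fwdDiffs_map_le hw hK a p
  have hS := S.one_le_const
  refine ⟨S.const * (B * 2 ^ (D + p)), by positivity, fun z m hm => ?_⟩
  have hz := hw.pos z
  refine (S.norm_remainder_le K (B * 2 ^ (D + p) * (w z ^ (D + p))⁻¹) z m (by positivity)
    fun l hl y hy => (hB l hl _).trans ?_).trans_eq (by ring)
  have hhalf : w z / 2 ≤ w (z + y) := by
    have h := hw.le_map_sub_add z (-y)
    rw [sub_neg_eq_add, hw.map_neg] at h
    linarith
  calc B * (w (z + y) ^ (D + p))⁻¹ ≤ B * ((w z / 2) ^ (D + p))⁻¹ := by gcongr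
    _ = B * 2 ^ (D + p) * (w z ^ (D + p))⁻¹ := by rw [div_pow, inv_div]; ring

lemma exists_norm_taylorPoly_le (S : TaylorScheme E w a p) (hw : LatticeWeight d w)
    (hK : ∀ l, Decay w (D + l.length) (fwdDiffs l K)) {k : ℝ} (hk : 0 < k) :
    ∃ C, 0 ≤ C ∧ ∀ z m, k * w z ≤ w m →
      ‖S.taylorPoly K z m‖ ≤ C * (w m ^ p * (w z ^ (D + p))⁻¹) := by
  choose b hb₀ hb using fun σ : List κ => hK (σ.map a)
  have hS := S.one_le_const
  refine ⟨∑ σ ∈ shortWords κ p, S.const * b σ * (k ^ (p - σ.length))⁻¹, Finset.sum_nonneg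
    fun σ _ => mul_nonneg (mul_nonneg (by linarith) (hb₀ σ)) (by positivity), fun z m hzm => ?_⟩
  rw [Finset.sum_mul]
  refine norm_sum_le_of_le _ fun σ hσ => ?_
  have hz := hw.pos z
  have hm := hw.pos m
  have hb₀ := hb₀ σ
  have hb := hb σ () z
  rw [List.length_map] at hb
  obtain ⟨e, rfl⟩ := Nat.exists_eq_add_of_le (mem_shortWords.1 hσ).le
  have hpow : w m ^ σ.length * (w z ^ (D + σ.length))⁻¹ ≤
      (k ^ e)⁻¹ * (w m ^ (σ.length + e) * (w z ^ (D + (σ.length + e)))⁻¹) := by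
    calc w m ^ σ.length * (w z ^ (D + σ.length))⁻¹ = w m ^ σ.length *
          ((k ^ e)⁻¹ * (k * w z) ^ e * (w z ^ (D + (σ.length + e)))⁻¹) := by
            rw [← add_assoc, pow_add _ (D + _), mul_pow]; field_simp
      _ ≤ w m ^ σ.length * ((k ^ e)⁻¹ * w m ^ e * (w z ^ (D + (σ.length + e)))⁻¹) := by gcongr
      _ = _ := by rw [pow_add (w m)]; ring
  rw [norm_smul, Real.norm_eq_abs, Nat.add_sub_cancel_left]
  calc _ ≤ S.const * w m ^ σ.length * (b σ * (w z ^ (D + σ.length))⁻¹) := by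
        gcongr
        exact S.abs_coeff_le σ hσ m
    _ = S.const * b σ * (w m ^ σ.length * (w z ^ (D + σ.length))⁻¹) := by ring
    _ ≤ S.const * b σ *
        ((k ^ e)⁻¹ * (w m ^ (σ.length + e) * (w z ^ (D + (σ.length + e)))⁻¹)) := by gcongr
    _ = _ := by ring

/-- The moments of `F` against the coefficients of the expansion of a kernel `K (z - m)`. -/
def moment (S : TaylorScheme E w a p) (F : Z → ℝ) (σ : List κ) : ℝ :=
  ∑' m, F m * S.coeff σ (-m)

/-- The part of `F ∗ K` left after subtracting the multipoles of order less than `p`. -/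
def convRemainder (S : TaylorScheme E w a p) (F : Z → ℝ) (K : Z → E) : Z → E :=
  latticeConv F K - ∑ σ ∈ shortWords κ p, S.moment F σ • fwdDiffs (σ.map a) K

/-- The kernel `K (z - m)` minus its Taylor polynomial at `z`, cut off near `m = z`. -/
def farKernel (S : TaylorScheme E w a p) (χ : Z → Z → ℝ) (K : Z → E) (z m : Z) : E :=
  (1 - χ z m) • K (z - m) - S.taylorPoly K z (-m)

end TaylorScheme

lemma IsSmoothCutoff.exists_abs_le {Z : Type*} [AddCommGroup Z] {w : Z → ℝ} {χ : Z → Z → ℝ}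
    (hχ : IsSmoothCutoff w χ) : ∃ X, 0 ≤ X ∧ ∀ z m, |χ z m| ≤ X := by
  obtain ⟨X, hX₀, hX⟩ := (hχ.symbol 0).decay
  exact ⟨X, hX₀, fun z m => by simpa using hX z m⟩

lemma IsSmoothCutoff.exists_norm_one_sub_smul_le {Z E : Type*} [AddCommGroup Z]
    [NormedAddCommGroup E] [NormedSpace ℝ E] {d : ℕ} {w : Z → ℝ} {χ : Z → Z → ℝ} {K : Z → E}
    {D : ℕ} (hχ : IsSmoothCutoff w χ) (hw : LatticeWeight d w) (hK : Decay w D K) (p : ℕ) {k : ℝ}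
    (hk : 0 < k) : ∃ C, 0 ≤ C ∧ ∀ z m, k * w z ≤ w m →
      ‖(1 - χ z m) • K (z - m)‖ ≤ C * (w m ^ p * (w z ^ (D + p))⁻¹) := by
  obtain ⟨X, hX₀, hX⟩ := hχ.exists_abs_le
  obtain ⟨c, hc, hone⟩ := hχ.eq_one
  obtain ⟨b, hb₀, hb⟩ := hK
  refine ⟨(1 + X) * (b * (c ^ D)⁻¹ * (k ^ p)⁻¹), by positivity, fun z m hzm => ?_⟩
  have hz := hw.pos z
  have hm := hw.pos m
  obtain hnear | hfar := lt_or_ge (w (z - m)) (c * w z)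
  · rw [hone z m hnear, sub_self, zero_smul, norm_zero]
    positivity
  have hcut : ‖1 - χ z m‖ ≤ 1 + X := by
    simpa using norm_sub_le_of_le (norm_one (α := ℝ)).le (hX z m)
  have hkernel : ‖K (z - m)‖ ≤ b * (c ^ D)⁻¹ * (k ^ p)⁻¹ * (w m ^ p * (w z ^ (D + p))⁻¹) := by
    calc ‖K (z - m)‖ ≤ b * (w (z - m) ^ D)⁻¹ := hb () _
      _ ≤ b * ((c * w z) ^ D)⁻¹ := by gcongr
      _ = b * (c ^ D)⁻¹ * (k ^ p)⁻¹ * ((k * w z) ^ p * (w z ^ (D + p))⁻¹) := by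
          rw [pow_add, mul_pow, mul_pow]; field_simp
      _ ≤ _ := by gcongr
  calc _ ≤ (1 + X) * (b * (c ^ D)⁻¹ * (k ^ p)⁻¹ * (w m ^ p * (w z ^ (D + p))⁻¹)) := by
        rw [norm_smul]; gcongr
    _ = _ := by ring

lemma LatticeWeight.exists_abs_mul_pow_le {Z : Type*} [AddCommGroup Z] {d p : ℕ} {w : Z → ℝ}
    {F : Z → ℝ} (hw : LatticeWeight d w) (hF : Decay w (2 * d) F) (hp : p + 1 ≤ d) :
    ∃ C, 0 ≤ C ∧ ∀ q ≤ p, ∀ m, |F m| * w m ^ q ≤ C * (w m ^ (d + 1))⁻¹ := by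
  obtain ⟨C, hC, hF⟩ := hF
  refine ⟨C, hC, fun q hq m => ?_⟩
  have hm := hw.one_le m
  have hsplit : w m ^ (2 * d) = w m ^ (2 * d - q) * w m ^ q := by
    rw [← pow_add]
    congr 1
    omega
  calc |F m| * w m ^ q ≤ C * (w m ^ (2 * d))⁻¹ * w m ^ q := by
        gcongr
        exact hF () m
    _ = C * (w m ^ (2 * d - q))⁻¹ := by rw [hsplit]; field_simp
    _ ≤ C * (w m ^ (d + 1))⁻¹ := by
        gcongr
        omega

namespace TaylorScheme

variable {F : Z → ℝ}

/-- For `w m` small against `w z` the cutoff vanishes and this is the Taylor estimate; otherwise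
each of the two terms is small by itself. -/
lemma exists_norm_farKernel_le (S : TaylorScheme E w a p) (hw : LatticeWeight d w)
    (hχ : IsSmoothCutoff w χ) (hK : ∀ l, Decay w (D + l.length) (fwdDiffs l K)) :
    ∃ C, 0 ≤ C ∧ ∀ z m, ‖S.farKernel χ K z m‖ ≤ C * (w m ^ p * (w z ^ (D + p))⁻¹) := by
  have hS := S.one_le_const
  set k : ℝ := (4 * S.const)⁻¹ with hk
  have hk₀ : 0 < k := by positivity
  obtain ⟨C₁, hC₁, hnear⟩ := S.exists_norm_sub_taylorPoly_le hw hK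
  obtain ⟨C₂, hC₂, hcut⟩ := hχ.exists_norm_one_sub_smul_le hw (hK []) p hk₀
  obtain ⟨C₃, hC₃, hpoly⟩ := S.exists_norm_taylorPoly_le hw hK hk₀
  refine ⟨C₁ + (C₂ + C₃), by positivity, fun z m => ?_⟩
  have hz := hw.pos z
  have hm := hw.pos m
  obtain hsmall | hlarge := le_total (w m) (k * w z)
  · have hconst : S.const * w m ≤ w z / 4 := by
      calc S.const * w m ≤ S.const * (k * w z) := by gcongr
        _ = w z / 4 := by rw [hk]; field_simp
    have hχ₀ : χ z m = 0 := by
      by_contra hne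
      have := hχ.weight_sub_le z m hne
      have := hw.le_map_sub_add z m
      nlinarith
    have h := hnear z (-m) (by rw [hw.map_neg]; linarith)
    rw [hw.map_neg, ← sub_eq_add_neg] at h
    rw [farKernel, hχ₀, sub_zero, one_smul]
    refine h.trans ?_
    gcongr
    linarith
  · have h := hpoly z (-m) (by rwa [hw.map_neg])
    rw [hw.map_neg] at h
    calc _ ≤ C₂ * (w m ^ p * (w z ^ (D + p))⁻¹) + C₃ * (w m ^ p * (w z ^ (D + p))⁻¹) :=
          norm_sub_le_of_le (hcut z m hlarge) h
      _ = (C₂ + C₃) * (w m ^ p * (w z ^ (D + p))⁻¹) := by ring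
      _ ≤ _ := mul_le_mul_of_nonneg_right (le_add_of_nonneg_left hC₁) (by positivity)

lemma summable_moment (S : TaylorScheme E w a p) (hw : LatticeWeight d w)
    (hF : Decay w (2 * d) F) (hp : p + 1 ≤ d) {σ : List κ} (hσ : σ ∈ shortWords κ p) :
    Summable fun m => F m * S.coeff σ (-m) := by
  obtain ⟨C, -, hC⟩ := hw.exists_abs_mul_pow_le hF hp
  have hS := S.one_le_const
  refine .of_norm_bounded (hw.summable_inv_pow_succ.mul_left (S.const * C)) fun m => ?_
  have hcoeff := S.abs_coeff_le σ hσ (-m)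
  rw [hw.map_neg] at hcoeff
  rw [norm_mul, Real.norm_eq_abs, Real.norm_eq_abs]
  calc _ ≤ |F m| * (S.const * w m ^ σ.length) := by gcongr
    _ = S.const * (|F m| * w m ^ σ.length) := by ring
    _ ≤ S.const * (C * (w m ^ (d + 1))⁻¹) := by
        exact mul_le_mul_of_nonneg_left (hC _ (mem_shortWords.1 hσ).le m) (by linarith)
    _ = _ := by ring

lemma decay_tsum_smul_farKernel (S : TaylorScheme E w a p) (hw : LatticeWeight d w)
    (hχ : IsSmoothCutoff w χ) (hF : Decay w (2 * d) F) (hp : p + 1 ≤ d)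
    (hK : ∀ l, Decay w (D + l.length) (fwdDiffs l K)) :
    Decay w (D + p) fun z => ∑' m, F m • S.farKernel χ K z m := by
  obtain ⟨C, hC, hfar⟩ := S.exists_norm_farKernel_le hw hχ hK
  obtain ⟨C', hC', hF⟩ := hw.exists_abs_mul_pow_le hF hp
  refine ⟨C * C' * ∑' m, (w m ^ (d + 1))⁻¹, mul_nonneg (by positivity) <| tsum_nonneg fun m => ?_,
    fun _ z => ?_⟩
  · have := hw.pos m
    positivity
  have hz := hw.pos z
  refine (tsum_of_norm_bounded (hw.summable_inv_pow_succ.hasSum.mul_left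
    (C * C' * (w z ^ (D + p))⁻¹)) fun m => ?_).trans_eq (by ring)
  rw [norm_smul, Real.norm_eq_abs]
  calc _ ≤ |F m| * (C * (w m ^ p * (w z ^ (D + p))⁻¹)) := by
        gcongr
        exact hfar z m
    _ = C * (w z ^ (D + p))⁻¹ * (|F m| * w m ^ p) := by ring
    _ ≤ C * (w z ^ (D + p))⁻¹ * (C' * (w m ^ (d + 1))⁻¹) := by
        exact mul_le_mul_of_nonneg_left (hF p le_rfl m) (by positivity)
    _ = _ := by ring

variable [CompleteSpace E]

lemma fwdDiffs_convRemainder (S : TaylorScheme E w a p) (hF : Summable F)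
    (hK : ∃ C, ∀ z, ‖K z‖ ≤ C) (l : List Z) :
    fwdDiffs l (S.convRemainder F K) = S.convRemainder F (fwdDiffs l K) := by
  simp only [convRemainder, fwdDiffs_sub, fwdDiffs_finsetSum, fwdDiffs_const_smul,
    fwdDiffs_latticeConv hF hK, fwdDiffs_comm l]

lemma convRemainder_eq_near_add_far (S : TaylorScheme E w a p) (hw : LatticeWeight d w)
    (hd : 2 ≤ d) (hχ : IsSmoothCutoff w χ) (hF : Decay w (2 * d) F) (hp : p + 1 ≤ d)
    (hK : ∃ C, ∀ z, ‖K z‖ ≤ C) (z : Z) : S.convRemainder F K z =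
      latticeConv (fun m => χ z m * F m) K z + ∑' m, F m • S.farKernel χ K z m := by
  have hconv := summable_latticeConv (hw.summable hF (by omega)) hK z
  have hnear := summable_latticeConv (hχ.summable_mul hw hd hF z) hK z
  have hpoly : ∀ σ ∈ shortWords κ p,
      Summable fun m => (F m * S.coeff σ (-m)) • fwdDiffs (σ.map a) K z :=
    fun σ hσ => (S.summable_moment hw hF hp hσ).smul_const _
  have hterm : ∀ m, F m • S.farKernel χ K z m = F m • K (z - m) - (χ z m * F m) • K (z - m) -
      ∑ σ ∈ shortWords κ p, (F m * S.coeff σ (-m)) • fwdDiffs (σ.map a) K z := fun m => by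
    simp only [farKernel, taylorPoly, smul_sub, Finset.smul_sum, smul_smul, ← sub_smul]
    ring_nf
  simp only [hterm]
  rw [(hconv.sub hnear).tsum_sub (summable_sum hpoly), hconv.tsum_sub hnear,
    Summable.tsum_finsetSum hpoly]
  simp only [convRemainder, moment, Pi.sub_apply, Finset.sum_apply, Pi.smul_apply, latticeConv]
  rw [Finset.sum_congr rfl fun σ hσ => (S.summable_moment hw hF hp hσ).tsum_smul_const _]
  abel

lemma decay_fwdDiffs_convRemainder (S : TaylorScheme E w a p) (hw : LatticeWeight d w)
    (hd : 2 ≤ d) (hχ : IsSmoothCutoff w χ) (hp : p + 1 ≤ d) (hK : ∀ n, Symbol w n (d - 1) K)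
    {n : ℕ} (hF : Symbol w n (2 * d) F) {l : List Z} (hl : l.length ≤ n + 2) :
    Decay w (d - 1 + p + l.length) (fwdDiffs l (S.convRemainder F K)) := by
  have hK_bdd := hw.exists_norm_le (hK 0).decay
  have hdK : ∀ l', Decay w (d - 1 + l.length + l'.length) (fwdDiffs l' (fwdDiffs l K)) := by
    intro l'
    have h : Decay w _ (fwdDiffs (l ++ l') K) := hK (l ++ l').length (l ++ l') le_rfl
    rwa [List.length_append, ← add_assoc, fwdDiffs_append] at h
  have hfar := S.decay_tsum_smul_farKernel hw hχ hF.decay hp hdK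
  have hnear := hχ.decay_latticeConv_mul hw hd hK hF (l₁ := l.take (l.length - 2))
    (l₂ := l.drop (l.length - 2)) (by simp; omega) (by simp; omega)
  rw [List.take_append_drop] at hnear
  rw [fwdDiffs_convRemainder S (hw.summable hF.decay (by omega)) hK_bdd,
    funext (S.convRemainder_eq_near_add_far hw hd hχ hF.decay hp
      (exists_norm_fwdDiffs_le hK_bdd l))]
  refine UniformDecay.add (hnear.mono hw.slowlyVarying ?_) (hfar.mono hw.slowlyVarying ?_)
  · simp only [List.length_take, List.length_drop]
    omega
  · omega

end TaylorScheme

end Expansion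

/-! ### Multipoles and remainders -/

section MultipoleSpace

variable {Z κ ι E : Type*} [AddCommGroup Z] [NormedAddCommGroup E] [NormedSpace ℝ E]
  {d : ℕ} {w : Z → ℝ} {a : κ → Z}

/-- The span of the multipoles `D_σ (h k)`, of orders `1` to `p` along the generators `a`. -/
def multipoleSpan (a : κ → Z) (p : ℕ) (h : ι → Z → E) : Submodule ℝ (Z → E) :=
  Submodule.span ℝ {f | ∃ (σ : List κ) (k : ι), 1 ≤ σ.length ∧ σ.length ≤ p ∧
    f = fwdDiffs (σ.map a) (h k)}

/-- The functions `r` with `D_l r = O(w ^ (-s - |l|))` for all `l` with `1 ≤ |l| ≤ J`. -/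
def remainderSpace (w : Z → ℝ) (s J : ℕ) : Submodule ℝ (Z → E) where
  carrier := {r | ∀ l : List Z, 1 ≤ l.length → l.length ≤ J → Decay w (s + l.length) (fwdDiffs l r)}
  add_mem' hf hg l h₁ hJ := by
    rw [fwdDiffs_add]
    exact (hf l h₁ hJ).add (hg l h₁ hJ)
  zero_mem' l _ _ := by
    rw [fwdDiffs_zero]
    exact .zero _
  smul_mem' c f hf l h₁ hJ := by
    obtain ⟨C, hC, hf⟩ := hf l h₁ hJ
    rw [fwdDiffs_const_smul]
    refine ⟨|c| * C, by positivity, fun i z => ?_⟩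
    calc ‖c • fwdDiffs l f z‖ = |c| * ‖fwdDiffs l f z‖ := norm_smul _ _
      _ ≤ |c| * (C * (w z ^ (s + l.length))⁻¹) := by gcongr; exact hf i z
      _ = |c| * C * (w z ^ (s + l.length))⁻¹ := (mul_assoc _ _ _).symm

lemma LatticePath.fwdDiff_eq_sum {n : ℕ} {B : ℝ} {m : Z} (P : LatticePath E w a n B m)
    (f : Z → E) : Δ_[m] f =
      ∑ t, P.sign t • (Δ_[a (P.gen t)] f + Δ_[P.base t] (Δ_[a (P.gen t)] f)) := by
  funext z
  rw [fwdDiff, P.sub_eq_sum, Finset.sum_apply]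
  exact Finset.sum_congr rfl fun t _ => congrArg (P.sign t • ·) (by simp [fwdDiff])

/-- Trading a difference along `m` for differences along generators costs only differences of
higher order. -/
lemma ShortPaths.fwdDiffs_mem_of_length_eq (P : ShortPaths E w a) (W : Submodule ℝ (Z → E)) {q : ℕ}
    {f : Z → E} (hlong : ∀ l : List Z, q < l.length → fwdDiffs l f ∈ W)
    (hgen : ∀ σ : List κ, σ.length = q → fwdDiffs (σ.map a) f ∈ W) {l : List Z}
    (hl : l.length = q) : fwdDiffs l f ∈ W := by
  suffices H : ∀ (l : List Z) (σ : List κ), σ.length + l.length = q →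
      fwdDiffs (σ.map a ++ l) f ∈ W from H l [] (by simpa using hl)
  intro l
  induction l with
  | nil => exact fun σ hσ => by simpa using hgen σ hσ
  | cons τ l ih =>
    intro σ hσ
    rw [List.length_cons] at hσ
    rw [fwdDiffs_append, fwdDiffs_cons, (P.path τ).fwdDiff_eq_sum, fwdDiffs_finsetSum]
    refine Submodule.sum_mem _ fun t _ => ?_
    rw [fwdDiffs_const_smul, fwdDiffs_add]
    refine W.smul_mem _ (W.add_mem ?_ ?_)
    · have h := ih (σ ++ [(P.path τ).gen t]) (by simp; omega)
      simpa only [List.map_append, List.map_cons, List.map_nil, fwdDiffs_append, fwdDiffs_cons,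
        fwdDiffs_nil] using h
    · have h := hlong (σ.map a ++ a ((P.path τ).gen t) :: (P.path τ).base t :: l) (by simp; omega)
      simpa only [fwdDiffs_append, fwdDiffs_cons] using h

variable {p J s : ℕ} {h : ι → Z → E}

lemma fwdDiffs_mem_sup (hw : LatticeWeight d w) (P : ShortPaths E w a)
    (hh : ∀ k τ n, Symbol w n s (Δ_[τ] (h k))) (k : ι) {l : List Z} (hl : 1 ≤ l.length) :
    fwdDiffs l (h k) ∈ multipoleSpan a p h ⊔ remainderSpace w (s + p) J := by
  by_cases hp : l.length ≤ p
  · refine P.fwdDiffs_mem_of_length_eq _ (fun l' hl' => ?_) (fun σ hσ => ?_) rfl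
    · exact fwdDiffs_mem_sup hw P hh k (hl.trans hl'.le)
    · exact Submodule.mem_sup_left (Submodule.subset_span
        ⟨σ, k, hl.trans_eq hσ.symm, hσ.trans_le hp, rfl⟩)
  · refine Submodule.mem_sup_right fun l' _ _ => ?_
    obtain _ | ⟨τ, l⟩ := l
    · simp at hl
    have hdecay : Decay w _ (fwdDiffs (l ++ l') (Δ_[τ] (h k))) :=
      hh k τ (l ++ l').length (l ++ l') le_rfl
    rw [fwdDiffs_append] at hdecay
    refine hdecay.mono hw.slowlyVarying ?_
    simp only [List.length_cons, List.length_append] at hp ⊢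
    omega
termination_by p + 1 - l.length

variable [CompleteSpace E] [Finite κ]

lemma latticeConv_fwdDiff_mem_sup (hw : LatticeWeight d w) (hd : 2 ≤ d) (P : ShortPaths E w a)
    {χ : Z → Z → ℝ} (hχ : IsSmoothCutoff w χ) (hp : p + 1 ≤ d)
    (hh : ∀ k τ n, Symbol w n (d - 1) (Δ_[τ] (h k))) (k : ι) (ρ : Z) {F : Z → ℝ} {n : ℕ}
    (hF : Symbol w n (2 * d) F) : latticeConv F (Δ_[ρ] (h k)) ∈
      multipoleSpan a p h ⊔ remainderSpace w (d - 1 + p) (n + 2) := by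
  classical
  set S : TaylorScheme E w a p := .ofShortPaths hw P p
  rw [← sub_add_cancel (latticeConv F (Δ_[ρ] (h k)))
    (∑ σ ∈ shortWords κ p, S.moment F σ • fwdDiffs (σ.map a) (Δ_[ρ] (h k)))]
  refine Submodule.add_mem _ (Submodule.mem_sup_right fun l _ hl =>
    S.decay_fwdDiffs_convRemainder hw hd hχ hp (hh k ρ) hF hl) ?_
  refine Submodule.sum_mem _ fun σ _ => Submodule.smul_mem _ _ ?_
  exact fwdDiffs_mem_sup hw P hh k (l := ρ :: σ.map a) (by simp)

end MultipoleSpace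

/-! ### Square-summable functions -/

section SquareSummable

variable {Z E F : Type*} [NormedAddCommGroup E] [NormedAddCommGroup F]

lemma memℓp_two_iff {f : Z → E} : Memℓp f 2 ↔ Summable fun z => ‖f z‖ ^ 2 := by
  simpa using memℓp_gen_iff (p := 2) (f := f) (by simp)

lemma summable_norm_mul_norm {f : Z → E} {g : Z → F} (hf : Memℓp f 2) (hg : Memℓp g 2) :
    Summable fun z => ‖f z‖ * ‖g z‖ := by
  refine ((memℓp_two_iff.1 hf).add (memℓp_two_iff.1 hg)).of_nonneg_of_le
    (fun z => by positivity) fun z => ?_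
  nlinarith [sq_nonneg (‖f z‖ - ‖g z‖), sq_nonneg ‖f z‖, sq_nonneg ‖g z‖]

lemma summable_clm_apply_apply [NormedSpace ℝ E] [NormedSpace ℝ F] (B : E →L[ℝ] F →L[ℝ] ℝ)
    {f : Z → E} {g : Z → F} (hf : Memℓp f 2) (hg : Memℓp g 2) :
    Summable fun z => B (f z) (g z) :=
  .of_norm_bounded ((summable_norm_mul_norm hf hg).mul_left ‖B‖) fun _ =>
    (B.le_opNorm₂ _ _).trans_eq (mul_assoc _ _ _)

variable [AddCommGroup Z] {f : Z → E}

lemma memℓp_two_comp_add_right (hf : Memℓp f 2) (τ : Z) : Memℓp (fun z => f (z + τ)) 2 := by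
  rw [memℓp_two_iff] at hf ⊢
  exact (Equiv.addRight τ).summable_iff (f := fun z => ‖f z‖ ^ 2) |>.2 hf

lemma memℓp_two_fwdDiff (hf : Memℓp f 2) (τ : Z) : Memℓp (Δ_[τ] f) 2 :=
  (memℓp_two_comp_add_right hf τ).sub hf

lemma memℓp_two_fwdDiff_of_closure_eq_top {ι : Type*} {r : ι → Z}
    (hr : AddSubgroup.closure (Set.range r) = ⊤) (hf : ∀ ρ, Memℓp (Δ_[r ρ] f) 2) (τ : Z) :
    Memℓp (Δ_[τ] f) 2 := by
  induction hr ▸ AddSubgroup.mem_top τ using AddSubgroup.closure_induction with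
  | mem _ hx =>
    obtain ⟨ρ, rfl⟩ := hx
    exact hf ρ
  | zero =>
    rw [fwdDiff_zero_left]
    exact zero_memℓp
  | add σ τ _ _ hσ hτ =>
    rw [fwdDiff_add_left]
    exact (memℓp_two_comp_add_right hσ τ).add hτ
  | neg τ _ hτ =>
    rw [fwdDiff_neg_left]
    exact (memℓp_two_comp_add_right hτ (-τ)).neg

lemma Decay.memℓp_two {d s : ℕ} {w : Z → ℝ} (hf : Decay w s f) (hw : LatticeWeight d w)
    (hs : d + 1 ≤ 2 * s) : Memℓp f 2 := by
  obtain ⟨C, -, hf⟩ := hf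
  refine memℓp_two_iff.2 (((hw.summable_inv_pow hs).mul_left (C ^ 2)).of_nonneg_of_le
    (fun z => by positivity) fun z => ?_)
  calc ‖f z‖ ^ 2 ≤ (C * (w z ^ s)⁻¹) ^ 2 := by gcongr; exact hf () z
    _ = C ^ 2 * (w z ^ (2 * s))⁻¹ := by rw [mul_pow, inv_pow, ← pow_mul, mul_comm s]

/-- The convolution is an absolutely convergent series of translates of `K` in `ℓ²`. -/
lemma memℓp_two_latticeConv [NormedSpace ℝ E] [CompleteSpace E] {F : Z → ℝ} {K : Z → E}
    (hF : Summable F) (hK : Memℓp K 2) : Memℓp (latticeConv F K) 2 := by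
  have : Fact ((1 : ENNReal) ≤ 2) := ⟨one_le_two⟩
  let translate (m : Z) : lp (fun _ : Z => E) 2 :=
    ⟨fun z => K (z - m), by
      simpa only [sub_eq_add_neg] using! memℓp_two_comp_add_right hK (-m)⟩
  have norm_translate (m : Z) : ‖translate m‖ = ‖translate 0‖ := by
    rw [lp.norm_eq_tsum_rpow (by simp), lp.norm_eq_tsum_rpow (by simp)]
    refine congrArg (· ^ _) (((Equiv.subRight m).tsum_eq fun z => ‖K z‖ ^ _).trans ?_)
    simp [translate]
  have hsum : Summable fun m => F m • translate m :=
    .of_norm_bounded (hF.abs.mul_right ‖translate 0‖) fun m => by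
      rw [norm_smul, norm_translate, Real.norm_eq_abs]
  convert lp.memℓp (∑' m, F m • translate m) using 1
  funext z
  exact ((lp.evalCLM (𝕜 := ℝ) (fun _ : Z => E) 2 z).map_tsum hsum).symm

end SquareSummable

/-! ### Stable second-order lattice operators -/

section Truncation

lemma tendsto_indicator_apply {Z E : Type*} [TopologicalSpace E] [Zero E] (v : Z → E)
    (z : Z) :
    Tendsto (fun S : Finset Z => (S : Set Z).indicator v z) atTop (𝓝 (v z)) := by
  refine tendsto_const_nhds.congr' ?_
  filter_upwards [eventually_ge_atTop {z}] with S hS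
  exact (Set.indicator_of_mem (hS (Finset.mem_singleton_self z)) v).symm

variable {Z E : Type*} [AddCommGroup Z] [NormedAddCommGroup E]

lemma tendsto_fwdDiff_indicator (v : Z → E) (τ z : Z) :
    Tendsto (fun S : Finset Z => Δ_[τ] ((S : Set Z).indicator v) z) atTop (𝓝 (Δ_[τ] v z)) :=
  (tendsto_indicator_apply v _).sub (tendsto_indicator_apply v _)

lemma finite_support_fwdDiff {u : Z → E} (hu : u.support.Finite) (τ : Z) :
    (Δ_[τ] u).support.Finite := by
  refine ((hu.preimage (add_left_injective τ).injOn).union hu).subset ?_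
  exact Function.support_sub (fun z => u (z + τ)) u

lemma summable_sum_norm_fwdDiff_sq {ι : Type*} [Fintype ι] {r : ι → Z} {u : Z → E}
    (hu : u.support.Finite) :
    Summable fun z => ∑ ρ, ‖Δ_[r ρ] u z‖ ^ 2 :=
  summable_sum fun ρ _ => summable_of_hasFiniteSupport <|
    (finite_support_fwdDiff hu (r ρ)).subset fun z hz => by
      contrapose! hz
      simp [Function.notMem_support.1 hz]

end Truncation

section LatticeOperator

variable {Z ι E : Type*} [AddCommGroup Z] [NormedAddCommGroup E] [NormedSpace ℝ E] [Fintype ι]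

/-- The density of the bilinear form `∑_z ∑_{σ ρ} β_{σρ}(D_σ u(z), D_ρ v(z))`. -/
def formDensity (r : ι → Z) (β : ι → ι → E →L[ℝ] E →L[ℝ] ℝ) (u v : Z → E) (z : Z) : ℝ :=
  ∑ σ, ∑ ρ, β σ ρ (Δ_[r σ] u z) (Δ_[r ρ] v z)

/-- The linearised operator `H`, tested against a vector: `latticeOperator r β e v z` is
`e · H[v](z)`, which makes sense for coefficients `β` that are bilinear forms. -/
def latticeOperator (r : ι → Z) (β : ι → ι → E →L[ℝ] E →L[ℝ] ℝ) (e : E) (v : Z → E) (z : Z) : ℝ :=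
  ∑ σ, ∑ ρ, (β σ ρ e (Δ_[r ρ] v (z - r σ)) - β σ ρ e (Δ_[r ρ] v z))

/-- Stability of `H` on finitely supported displacements. -/
def StableForm (r : ι → Z) (β : ι → ι → E →L[ℝ] E →L[ℝ] ℝ) : Prop :=
  ∃ c₀ : ℝ, 0 < c₀ ∧ ∀ u : Z → E, u.support.Finite →
    c₀ * ∑' z, ∑ ρ, ‖Δ_[r ρ] u z‖ ^ 2 ≤ ∑' z, formDensity r β u u z

variable {r : ι → Z} {β : ι → ι → E →L[ℝ] E →L[ℝ] ℝ} {u v : Z → E}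

lemma tsum_formDensity_eq (hu : Memℓp u 2) (hv : Memℓp v 2) :
    ∑' z, formDensity r β u v z = ∑' z, latticeOperator r β (u z) v z := by
  have hsum₁ (σ ρ : ι) : Summable fun z => β σ ρ (u z) (Δ_[r ρ] v (z - r σ)) := by
    simpa only [sub_eq_add_neg] using summable_clm_apply_apply (β σ ρ) hu
      (memℓp_two_comp_add_right (memℓp_two_fwdDiff hv (r ρ)) (-r σ))
  have hsum₂ (σ ρ : ι) : Summable fun z => β σ ρ (u z) (Δ_[r ρ] v z) :=
    summable_clm_apply_apply (β σ ρ) hu (memℓp_two_fwdDiff hv (r ρ))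
  have hoperator := hasSum_sum fun σ (_ : σ ∈ Finset.univ) =>
    hasSum_sum fun ρ (_ : ρ ∈ Finset.univ) => (hsum₁ σ ρ).hasSum.sub (hsum₂ σ ρ).hasSum
  refine HasSum.tsum_eq ?_ |>.trans hoperator.tsum_eq.symm
  refine hasSum_sum fun σ _ => hasSum_sum fun ρ _ => ?_
  simpa [fwdDiff, Function.comp_def] using
    ((Equiv.addRight (r σ)).hasSum_iff.2 (hsum₁ σ ρ).hasSum).sub (hsum₂ σ ρ).hasSum

lemma tendsto_tsum_formDensity_indicator (hv : Memℓp v 2) :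
    Tendsto (fun S : Finset Z =>
      ∑' z, formDensity r β ((S : Set Z).indicator v) ((S : Set Z).indicator v) z) atTop
      (𝓝 (∑' z, formDensity r β v v z)) := by
  set m : ι → Z → ℝ := fun σ z => ‖v (z + r σ)‖ + ‖v z‖
  have hm (σ : ι) : Memℓp (m σ) 2 := (memℓp_two_comp_add_right hv.norm (r σ)).add hv.norm
  have hle (S : Finset Z) (σ : ι) (z : Z) : ‖Δ_[r σ] ((S : Set Z).indicator v) z‖ ≤ ‖m σ z‖ :=
    ((norm_sub_le _ _).trans (add_le_add (norm_indicator_le_norm_self _ _)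
      (norm_indicator_le_norm_self _ _))).trans (Real.le_norm_self _)
  refine tendsto_tsum_of_dominated_convergence
    (bound := fun z => ∑ σ, ∑ ρ, ‖β σ ρ‖ * (‖m σ z‖ * ‖m ρ z‖)) ?_ (fun z => ?_) ?_
  · exact summable_sum fun σ _ => summable_sum fun ρ _ =>
      (summable_norm_mul_norm (hm σ) (hm ρ)).mul_left _
  · exact tendsto_finsetSum _ fun σ _ => tendsto_finsetSum _ fun ρ _ =>
      ((β σ ρ).continuous₂.tendsto (Δ_[r σ] v z, Δ_[r ρ] v z)).comp
        ((tendsto_fwdDiff_indicator v (r σ) z).prodMk_nhds (tendsto_fwdDiff_indicator v (r ρ) z))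
  · refine .of_forall fun S z => norm_sum_le_of_le _ fun σ _ => norm_sum_le_of_le _ fun ρ _ => ?_
    refine ((β σ ρ).le_opNorm₂ _ _).trans ?_
    rw [mul_assoc]
    gcongr <;> exact hle S _ z

/-- Both sides are continuous in `v ∈ ℓ²`, where finitely supported displacements are dense. -/
lemma StableForm.exists_mul_norm_sq_le (hst : StableForm r β) (hv : Memℓp v 2) :
    ∃ c₀ : ℝ, 0 < c₀ ∧ ∀ ρ z, c₀ * ‖Δ_[r ρ] v z‖ ^ 2 ≤ ∑' z, formDensity r β v v z := by
  obtain ⟨c₀, hc₀, hst⟩ := hst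
  refine ⟨c₀, hc₀, fun ρ z => ?_⟩
  refine le_of_tendsto_of_tendsto'
    (((tendsto_fwdDiff_indicator v (r ρ) z).norm.pow 2).const_mul c₀)
    (tendsto_tsum_formDensity_indicator hv) fun S => ?_
  have hS : ((S : Set Z).indicator v).support.Finite :=
    S.finite_toSet.subset Set.support_indicator_subset
  refine le_trans ?_ (hst _ hS)
  gcongr
  refine le_trans ?_ ((summable_sum_norm_fwdDiff_sq hS).le_tsum z fun _ _ => by positivity)
  exact Finset.single_le_sum (f := fun ρ => ‖Δ_[r ρ] ((S : Set Z).indicator v) z‖ ^ 2)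
    (fun _ _ => by positivity) (Finset.mem_univ ρ)

lemma StableForm.fwdDiff_eq_zero (hst : StableForm r β) (hv : Memℓp v 2)
    (hL : ∀ e z, latticeOperator r β e v z = 0) (ρ : ι) : Δ_[r ρ] v = 0 := by
  obtain ⟨c₀, hc₀, hle⟩ := hst.exists_mul_norm_sq_le hv
  funext z
  have hz := hle ρ z
  rw [tsum_formDensity_eq hv hv, tsum_congr fun z => hL (v z) z, tsum_zero] at hz
  have hsq : ‖Δ_[r ρ] v z‖ ^ 2 ≤ 0 := nonpos_of_mul_nonpos_right hz hc₀
  exact norm_eq_zero.1 (pow_eq_zero_iff two_ne_zero |>.1 (hsq.antisymm (sq_nonneg _)))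

lemma StableForm.eq_zero [Infinite Z] (hst : StableForm r β)
    (hr : AddSubgroup.closure (Set.range r) = ⊤) (hv : Memℓp v 2)
    (hL : ∀ e z, latticeOperator r β e v z = 0) : v = 0 := by
  have hdiff (τ : Z) : Δ_[τ] v = 0 := by
    induction hr ▸ AddSubgroup.mem_top τ using AddSubgroup.closure_induction with
    | mem _ hx =>
      obtain ⟨ρ, rfl⟩ := hx
      exact hst.fwdDiff_eq_zero hv hL ρ
    | zero => exact fwdDiff_zero_left v
    | add σ τ _ _ hσ hτ => rw [fwdDiff_add_left, hσ, hτ]; simp; rfl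
    | neg τ _ hτ => rw [fwdDiff_neg_left, hτ]; simp; rfl
  have hconst (z : Z) : v z = v 0 := by
    simpa [fwdDiff, sub_eq_zero] using congrFun (hdiff z) 0
  have hsum : Summable fun _ : Z => ‖v 0‖ ^ 2 := by
    simpa only [hconst] using memℓp_two_iff.1 hv
  funext z
  exact (hconst z).trans (norm_eq_zero.1 (pow_eq_zero_iff two_ne_zero |>.1
    ((summable_const_iff _).1 hsum)))

end LatticeOperator

/-! ### Representation by fundamental solutions -/

section Representation

variable {Z ι κ E : Type*} [AddCommGroup Z] [NormedAddCommGroup E] [NormedSpace ℝ E] [Fintype ι]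
  {r : ι → Z} {β : ι → ι → E →L[ℝ] E →L[ℝ] ℝ} {e : E}

lemma latticeOperator_sub (u v : Z → E) :
    latticeOperator r β e (u - v) = latticeOperator r β e u - latticeOperator r β e v := by
  funext z
  simp only [latticeOperator, fwdDiff_sub, Pi.sub_apply, map_sub, ← Finset.sum_sub_distrib]
  exact Finset.sum_congr rfl fun σ _ => Finset.sum_congr rfl fun ρ _ => by ring

lemma latticeOperator_finsetSum (s : Finset κ) (u : κ → Z → E) :
    latticeOperator r β e (∑ k ∈ s, u k) = ∑ k ∈ s, latticeOperator r β e (u k) := by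
  funext z
  simp only [latticeOperator, fwdDiff_finsetSum, Finset.sum_apply, map_sum,
    ← Finset.sum_sub_distrib]
  rw [Finset.sum_comm (s := s)]
  exact Finset.sum_congr rfl fun σ _ => Finset.sum_comm

lemma latticeOperator_fwdDiff (τ : Z) (u : Z → E) :
    latticeOperator r β e (Δ_[τ] u) = Δ_[τ] (latticeOperator r β e u) := by
  funext z
  rw [fwdDiff]
  simp only [latticeOperator, fwdDiff_comm (r _) τ u, ← Finset.sum_sub_distrib]
  refine Finset.sum_congr rfl fun σ _ => Finset.sum_congr rfl fun ρ _ => ?_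
  rw [fwdDiff.eq_1 τ, fwdDiff.eq_1 τ, map_sub, map_sub, add_sub_right_comm z τ]
  ring

lemma latticeOperator_latticeConv [CompleteSpace E] {F : Z → ℝ} {K : Z → E} (hF : Summable F)
    (hK : ∃ C, ∀ z, ‖K z‖ ≤ C) :
    latticeOperator r β e (latticeConv F K) = latticeConv F (latticeOperator r β e K) := by
  have hterm (L : E →L[ℝ] ℝ) (ρ : ι) (y : Z) :
      HasSum (fun m => F m • L (Δ_[r ρ] K (y - m))) (L (Δ_[r ρ] (latticeConv F K) y)) := by
    rw [fwdDiff_latticeConv hF hK]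
    simpa only [map_smul, latticeConv] using
      L.hasSum (summable_latticeConv hF (exists_norm_fwdDiff_le hK (r ρ)) y).hasSum
  funext z
  refine HasSum.tsum_eq ?_ |>.symm
  simp only [latticeOperator, Finset.smul_sum, smul_sub]
  refine hasSum_sum fun σ _ => hasSum_sum fun ρ _ => .sub ?_ (hterm _ _ _)
  simpa only [sub_right_comm] using hterm (β σ ρ e) ρ (z - r σ)

lemma latticeConv_single_zero [DecidableEq Z] (F : Z → ℝ) (c : ℝ) :
    latticeConv F (Pi.single 0 c) = fun z => F z * c := by
  funext z
  refine (tsum_eq_single z fun m hm => ?_).trans (by simp)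
  rw [Pi.single_eq_of_ne (sub_ne_zero.2 hm.symm), smul_zero]

/-- The family `G` solves `H G_k = φ_k δ₀`, where `φ_k` is a linear functional on the target space,
and the differences of `G` have the decay of the gradient of a Green's function in dimension `d`. -/
structure IsGreenFamily [DecidableEq Z] (w : Z → ℝ) (d : ℕ) (r : ι → Z)
    (β : ι → ι → E →L[ℝ] E →L[ℝ] ℝ) (φ : κ → E → ℝ) (G : κ → Z → E) : Prop where
  latticeOperator_eq : ∀ k e, latticeOperator r β e (G k) = Pi.single 0 (φ k e)
  symbol_fwdDiff : ∀ k τ n, Symbol w n (d - 1) (Δ_[τ] (G k))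

/-- The solution `∑_{ρ k} F_{ρk} ∗ D_{-ρ} G_k` of the equation with right-hand side the discrete
divergence of `F`. -/
def greenPotential [Fintype κ] (r : ι → Z) (G : κ → Z → E) (F : ι → κ → Z → ℝ) : Z → E :=
  ∑ ρ, ∑ k, latticeConv (F ρ k) (Δ_[-r ρ] (G k))

namespace IsGreenFamily

variable [DecidableEq Z] {w : Z → ℝ} {d : ℕ} {φ : κ → E → ℝ} {G : κ → Z → E}

lemma exists_norm_fwdDiff_le (hG : IsGreenFamily w d r β φ G) (hw : LatticeWeight d w) (k : κ)
    (τ : Z) : ∃ C, ∀ z, ‖Δ_[τ] (G k) z‖ ≤ C :=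
  hw.exists_norm_le (hG.symbol_fwdDiff k τ 0).decay

variable [CompleteSpace E] [Fintype κ] {F : ι → κ → Z → ℝ}

lemma fwdDiff_greenPotential (hG : IsGreenFamily w d r β φ G) (hw : LatticeWeight d w)
    (hF : ∀ ρ k, Summable (F ρ k)) (τ : Z) :
    Δ_[τ] (greenPotential r G F) =
      ∑ ρ, ∑ k, latticeConv (F ρ k) (Δ_[τ] (Δ_[-r ρ] (G k))) := by
  simp only [greenPotential, fwdDiff_finsetSum]
  exact Finset.sum_congr rfl fun ρ _ => Finset.sum_congr rfl fun k _ =>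
    fwdDiff_latticeConv (hF ρ k) (hG.exists_norm_fwdDiff_le hw k _) τ

lemma latticeOperator_greenPotential (hG : IsGreenFamily w d r β φ G) (hw : LatticeWeight d w)
    (hF : ∀ ρ k, Summable (F ρ k)) :
    latticeOperator r β e (greenPotential r G F) =
      ∑ ρ, ∑ k, fun z => (F ρ k (z - r ρ) - F ρ k z) * φ k e := by
  simp only [greenPotential, latticeOperator_finsetSum]
  refine Finset.sum_congr rfl fun ρ _ => Finset.sum_congr rfl fun k _ => ?_
  have hbdd : ∃ C, ∀ z, ‖(Pi.single 0 (φ k e) : Z → ℝ) z‖ ≤ C := by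
    refine ⟨‖φ k e‖, fun z => ?_⟩
    rcases eq_or_ne z 0 with rfl | hz
    · simp
    · simp [hz]
  rw [latticeOperator_latticeConv (hF ρ k) (hG.exists_norm_fwdDiff_le hw k _),
    latticeOperator_fwdDiff, hG.latticeOperator_eq, ← fwdDiff_latticeConv (hF ρ k) hbdd,
    latticeConv_single_zero]
  funext z
  rw [fwdDiff, sub_mul, sub_eq_add_neg z]

lemma memℓp_two_fwdDiff_greenPotential (hG : IsGreenFamily w d r β φ G) (hw : LatticeWeight d w)
    (hF : ∀ ρ k, Summable (F ρ k)) (τ : Z) : Memℓp (Δ_[τ] (greenPotential r G F)) 2 := by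
  rw [hG.fwdDiff_greenPotential hw hF]
  simp only [Finset.sum_fn]
  refine .finsetSum _ fun ρ _ => .finsetSum _ fun k _ => ?_
  have hdecay : Decay w (d - 1 + 1) (Δ_[τ] (Δ_[-r ρ] (G k))) :=
    hG.symbol_fwdDiff k (-r ρ) 1 [τ] le_rfl
  exact memℓp_two_latticeConv (hF ρ k) (hdecay.memℓp_two hw (by omega))

/-- Stability makes the difference of the two gradients vanish. -/
lemma fwdDiff_eq_fwdDiff_greenPotential [Infinite Z] (hG : IsGreenFamily w d r β φ G)
    (hw : LatticeWeight d w) (hst : StableForm r β)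
    (hr : AddSubgroup.closure (Set.range r) = ⊤) (hF : ∀ ρ k, Summable (F ρ k)) {u : Z → E}
    (hu : ∀ ρ, Memℓp (Δ_[r ρ] u) 2)
    (hequ : ∀ e, latticeOperator r β e u = ∑ ρ, ∑ k, fun z => (F ρ k (z - r ρ) - F ρ k z) * φ k e)
    (τ : Z) : Δ_[τ] u = Δ_[τ] (greenPotential r G F) := by
  rw [← sub_eq_zero, ← fwdDiff_sub]
  refine hst.eq_zero hr ?_ fun e z => ?_
  · rw [fwdDiff_sub]
    exact (memℓp_two_fwdDiff_of_closure_eq_top hr hu τ).sub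
      (hG.memℓp_two_fwdDiff_greenPotential hw hF τ)
  · rw [latticeOperator_fwdDiff, latticeOperator_sub, hequ,
      hG.latticeOperator_greenPotential hw hF, sub_self]
    exact sub_self 0

end IsGreenFamily

end Representation

/-! ### Decay of square-summable solutions -/

section SelfImprovement

lemma le_two_mul_of_forall_le_add_half {Z : Type*} [Nonempty Z] {f : Z → ℝ} {C : ℝ}
    (hf : BddAbove (Set.range f)) (h : ∀ S, (∀ z, f z ≤ S) → ∀ z, f z ≤ C + S / 2) (z : Z) :
    f z ≤ 2 * C := by
  have hle := le_ciSup hf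
  have hsup : ⨆ z, f z ≤ C + (⨆ z, f z) / 2 := ciSup_le (h _ hle)
  linarith [hle z]

lemma exists_finset_tsum_indicator_compl_le {Z : Type*} (f : Z → ℝ) {ε : ℝ} (hε : 0 < ε) :
    ∃ Q : Finset Z, ∑' m, (Q : Set Z)ᶜ.indicator f m ≤ ε := by
  obtain ⟨Q, hQ⟩ := ((tendsto_tsum_compl_atTop_zero f).eventually (ge_mem_nhds hε)).exists
  exact ⟨Q, (tsum_subtype (Q : Set Z)ᶜ f).symm.trans_le hQ⟩

lemma exists_pos_forall_mul_add_inv_mul_le_half {D B : ℝ} (hD : 0 ≤ D) (hB : 0 ≤ B) :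
    ∃ θ > 0, ∃ ε > 0, ∀ t ≤ ε, D * (θ * B + θ⁻¹ * t) ≤ 1 / 2 := by
  refine ⟨(4 * (D * B + 1))⁻¹, by positivity, (4 * (D * B + 1))⁻¹ / (4 * (D + 1)), by positivity,
    fun t ht => ?_⟩
  have hhead : D * ((4 * (D * B + 1))⁻¹ * B) ≤ 1 / 4 := by
    field_simp
    linarith
  have htail : D * ((4 * (D * B + 1))⁻¹⁻¹ * t) ≤ 1 / 4 := by
    calc D * ((4 * (D * B + 1))⁻¹⁻¹ * t)
        ≤ D * ((4 * (D * B + 1))⁻¹⁻¹ * ((4 * (D * B + 1))⁻¹ / (4 * (D + 1)))) := by gcongr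
      _ = D / (4 * (D + 1)) := by field_simp
      _ ≤ 1 / 4 := by
        field_simp
        linarith
  linarith

lemma mul_le_mul_sq_add_inv_mul_sq {θ : ℝ} (hθ : 0 < θ) {x y : ℝ} (hxy : 0 ≤ x * y) :
    x * y ≤ θ * y ^ 2 + θ⁻¹ * x ^ 2 := by
  have hsq : 0 ≤ θ⁻¹ * (x - θ * y) ^ 2 := by positivity
  have hexpand : θ⁻¹ * (x - θ * y) ^ 2 = θ⁻¹ * x ^ 2 - 2 * (x * y) + θ * y ^ 2 := by
    field_simp
    ring
  linarith

variable {Z : Type*} [AddCommGroup Z] {d : ℕ} {w : Z → ℝ}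

lemma LatticeWeight.min_pow_le (hw : LatticeWeight d w) {T : ℝ} (hT : 1 ≤ T) (z m : Z) :
    min (w z) T ^ d ≤ 2 ^ d * (min (w (z - m)) T ^ d + min (w m) T ^ d) := by
  have hm : 0 < min (w m) T := lt_min (hw.pos m) (by linarith)
  have hzm : 0 < min (w (z - m)) T := lt_min (hw.pos _) (by linarith)
  have hz : 0 < min (w z) T := lt_min (hw.pos z) (by linarith)
  have hsub : min (w z) T ≤ min (w (z - m)) T + min (w m) T := by
    have := hw.le_map_sub_add z m
    have := hw.pos m
    have := hw.pos (z - m)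
    grind
  calc min (w z) T ^ d ≤ (min (w (z - m)) T + min (w m) T) ^ d := by gcongr
    _ ≤ 2 ^ (d - 1) * (min (w (z - m)) T ^ d + min (w m) T ^ d) := add_pow_le hzm.le hm.le d
    _ ≤ 2 ^ d * (min (w (z - m)) T ^ d + min (w m) T ^ d) := by
      gcongr
      · norm_num
      · exact d.sub_le 1

variable {M : Z → ℝ} {S T θ : ℝ} (Q : Finset Z)

lemma sq_mul_inv_pow_mul_min_pow_le (hw : LatticeWeight d w) (hM : ∀ z, 0 ≤ M z)
    (hT : 1 ≤ T) (hS : ∀ z, M z * min (w z) T ^ d ≤ S) (hθ : 0 < θ) (z m : Z) :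
    M m ^ 2 * ((w (z - m) ^ d)⁻¹ * min (w m) T ^ d) ≤
      (Q : Set Z).indicator (fun m => M m ^ 2 * w m ^ d) m +
        S * (θ * (w (z - m) ^ (2 * d))⁻¹ + θ⁻¹ * (Q : Set Z)ᶜ.indicator (fun m => M m ^ 2) m) := by
  have hωm : 0 < min (w m) T := lt_min (hw.pos m) (by linarith)
  have hS₀ : 0 ≤ S := (mul_nonneg (hM m) (by positivity)).trans (hS m)
  have hzm := hw.pos (z - m)
  have hMm := hM m
  have hsq : (w (z - m) ^ (2 * d))⁻¹ = (w (z - m) ^ d)⁻¹ ^ 2 := by rw [inv_pow, ← pow_mul']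
  have hv : (w (z - m) ^ d)⁻¹ ≤ 1 := inv_le_one_of_one_le₀ (one_le_pow₀ (hw.one_le _))
  rw [hsq]
  by_cases hmQ : m ∈ (Q : Set Z)
  · rw [Set.indicator_of_mem hmQ, Set.indicator_of_notMem (by simpa using hmQ)]
    refine le_add_of_le_of_nonneg ?_ (by positivity)
    gcongr
    exact (mul_le_of_le_one_left (by positivity) hv).trans (by gcongr; exact min_le_left _ _)
  · rw [Set.indicator_of_notMem hmQ, Set.indicator_of_mem hmQ, zero_add]
    calc M m ^ 2 * ((w (z - m) ^ d)⁻¹ * min (w m) T ^ d)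
        = (M m * min (w m) T ^ d) * (M m * (w (z - m) ^ d)⁻¹) := by ring
      _ ≤ S * (M m * (w (z - m) ^ d)⁻¹) := by
        gcongr
        exact hS m
      _ ≤ _ := by
        gcongr
        exact mul_le_mul_sq_add_inv_mul_sq hθ (by positivity)

lemma inv_pow_mul_min_pow_le (hw : LatticeWeight d w) (hT : 1 ≤ T) (z m : Z) :
    (w m ^ (2 * d))⁻¹ * ((w (z - m) ^ d)⁻¹ * min (w m) T ^ d) ≤
      (w m ^ (2 * d))⁻¹ + (w (z - m) ^ (2 * d))⁻¹ := by
  have : 0 < min (w m) T := lt_min (hw.pos m) (by linarith)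
  have hm := hw.pos m
  have hzm := hw.pos (z - m)
  set x := (w m ^ d)⁻¹ with hx
  set v := (w (z - m) ^ d)⁻¹ with hv
  have hx₂ : (w m ^ (2 * d))⁻¹ = x ^ 2 := by rw [hx, inv_pow, ← pow_mul']
  have hv₂ : (w (z - m) ^ (2 * d))⁻¹ = v ^ 2 := by rw [hv, inv_pow, ← pow_mul']
  have hx₁ : x * min (w m) T ^ d ≤ 1 := by
    rw [hx, inv_mul_le_iff₀ (by positivity), mul_one]
    gcongr
    exact min_le_left _ _
  calc (w m ^ (2 * d))⁻¹ * (v * min (w m) T ^ d) = x * min (w m) T ^ d * (x * v) := by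
        rw [hx₂]
        ring
    _ ≤ 1 * (x * v) := by gcongr
    _ ≤ (w m ^ (2 * d))⁻¹ + (w (z - m) ^ (2 * d))⁻¹ := by
      rw [hx₂, hv₂]
      nlinarith [sq_nonneg (x - v), sq_nonneg x, sq_nonneg v]

lemma source_mul_min_pow_le (hw : LatticeWeight d w) (hM : ∀ z, 0 ≤ M z) (hT : 1 ≤ T)
    (hS : ∀ z, M z * min (w z) T ^ d ≤ S) (hθ : 0 < θ) (z m : Z) :
    ((w m ^ (2 * d))⁻¹ + M m ^ 2) * (w (z - m) ^ d)⁻¹ * min (w z) T ^ d ≤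
      2 ^ d * (((w m ^ (2 * d))⁻¹ + M m ^ 2) + (((w m ^ (2 * d))⁻¹ + (w (z - m) ^ (2 * d))⁻¹) +
        ((Q : Set Z).indicator (fun m => M m ^ 2 * w m ^ d) m + S * (θ * (w (z - m) ^ (2 * d))⁻¹ +
          θ⁻¹ * (Q : Set Z)ᶜ.indicator (fun m => M m ^ 2) m)))) := by
  have hm := hw.pos m
  have hzm := hw.pos (z - m)
  have hnear : (w (z - m) ^ d)⁻¹ * min (w (z - m)) T ^ d ≤ 1 := by
    rw [inv_mul_le_iff₀ (by positivity), mul_one]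
    gcongr
    exact min_le_left _ _
  calc ((w m ^ (2 * d))⁻¹ + M m ^ 2) * (w (z - m) ^ d)⁻¹ * min (w z) T ^ d
      ≤ ((w m ^ (2 * d))⁻¹ + M m ^ 2) * (w (z - m) ^ d)⁻¹ *
          (2 ^ d * (min (w (z - m)) T ^ d + min (w m) T ^ d)) := by
        gcongr
        exact hw.min_pow_le hT z m
    _ = 2 ^ d * (((w m ^ (2 * d))⁻¹ + M m ^ 2) * ((w (z - m) ^ d)⁻¹ * min (w (z - m)) T ^ d) +
          ((w m ^ (2 * d))⁻¹ * ((w (z - m) ^ d)⁻¹ * min (w m) T ^ d) +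
            M m ^ 2 * ((w (z - m) ^ d)⁻¹ * min (w m) T ^ d))) := by ring
    _ ≤ _ := by
        gcongr
        · exact mul_le_of_le_one_right (by positivity) hnear
        · exact inv_pow_mul_min_pow_le hw hT z m
        · exact sq_mul_inv_pow_mul_min_pow_le Q hw hM hT hS hθ z m

lemma tsum_source_mul_min_pow_le (hw : LatticeWeight d w) (hd : 1 ≤ d) (hM : ∀ z, 0 ≤ M z)
    (hMs : Summable fun z => M z ^ 2) (hT : 1 ≤ T)
    (hS : ∀ z, M z * min (w z) T ^ d ≤ S)
    (hθ : 0 < θ) (z : Z) :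
    (∑' m, ((w m ^ (2 * d))⁻¹ + M m ^ 2) * (w (z - m) ^ d)⁻¹) * min (w z) T ^ d ≤
      2 ^ d * ((∑' m, (w m ^ (2 * d))⁻¹ + ∑' m, M m ^ 2) +
        ((∑' m, (w m ^ (2 * d))⁻¹ + ∑' m, (w m ^ (2 * d))⁻¹) +
          (∑' m, (Q : Set Z).indicator (fun m => M m ^ 2 * w m ^ d) m +
            S * (θ * ∑' m, (w m ^ (2 * d))⁻¹ +
              θ⁻¹ * ∑' m, (Q : Set Z)ᶜ.indicator (fun m => M m ^ 2) m)))) := by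
  have hdim : d + 1 ≤ 2 * d := by lia
  have hsum := (hw.summable_inv_pow hdim).hasSum
  have hsum_z : HasSum (fun m => (w (z - m) ^ (2 * d))⁻¹) (∑' m, (w m ^ (2 * d))⁻¹) :=
    (Equiv.subLeft z).hasSum_iff.2 hsum
  have hQ : Summable ((Q : Set Z).indicator fun m => M m ^ 2 * w m ^ d) :=
    summable_of_hasFiniteSupport (Q.finite_toSet.subset Set.support_indicator_subset)
  have hmajorant := ((hsum.add hMs.hasSum).add ((hsum.add hsum_z).add (hQ.hasSum.add
    (((hsum_z.mul_left θ).add ((hMs.indicator (Q : Set Z)ᶜ).hasSum.mul_left θ⁻¹)).mul_left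
      S)))).mul_left (2 ^ d)
  rw [← tsum_mul_right]
  refine (Real.le_norm_self _).trans (tsum_of_norm_bounded hmajorant fun m => ?_)
  have hz : 0 < min (w z) T := lt_min (hw.pos z) (by linarith)
  have := hw.pos m
  have := hw.pos (z - m)
  rw [Real.norm_of_nonneg (by positivity)]
  exact source_mul_min_pow_le Q hw hM hT hS hθ z m

/-- Weighting by `min (w z) T` keeps the supremum finite; the part of the quadratic source outside
a large finite set is then absorbed, uniformly in `T`. -/
lemma exists_le_mul_inv_pow_of_le_tsum (hw : LatticeWeight d w) (hd : 1 ≤ d)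
    (hM : ∀ z, 0 ≤ M z) (hMs : Summable fun z => M z ^ 2) {C : ℝ} (hC : 0 ≤ C)
    (hconv : ∀ z, M z ≤ C * ∑' m, ((w m ^ (2 * d))⁻¹ + M m ^ 2) * (w (z - m) ^ d)⁻¹) :
    ∃ C', ∀ z, M z ≤ C' * (w z ^ d)⁻¹ := by
  set B := ∑' m, (w m ^ (2 * d))⁻¹
  set A := ∑' m, M m ^ 2
  have hB : 0 ≤ B := tsum_nonneg fun z => inv_nonneg.2 (pow_nonneg (hw.pos z).le _)
  obtain ⟨θ, hθ, ε, hε, hsmall⟩ :=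
    exists_pos_forall_mul_add_inv_mul_le_half (mul_nonneg hC (pow_nonneg zero_le_two d)) hB
  obtain ⟨Q, hQ⟩ := exists_finset_tsum_indicator_compl_le (fun m => M m ^ 2) hε
  set near := ∑' m, (Q : Set Z).indicator (fun m => M m ^ 2 * w m ^ d) m
  set tail := ∑' m, (Q : Set Z)ᶜ.indicator (fun m => M m ^ 2) m
  set C₀ := C * 2 ^ d * (B + A + (B + B + near))
  have hbound (T : ℝ) (hT : 1 ≤ T) (z : Z) : M z * min (w z) T ^ d ≤ 2 * C₀ := by
    have hpos (z : Z) : 0 < min (w z) T := lt_min (hw.pos z) (by linarith)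
    refine le_two_mul_of_forall_le_add_half (f := fun z => M z * min (w z) T ^ d)
      ⟨(A + 1) * T ^ d, ?_⟩ (fun S hS z => ?_) z
    · rintro _ ⟨z, rfl⟩
      have hMz : M z ≤ A + 1 := by nlinarith [hMs.le_tsum z fun _ _ => sq_nonneg _]
      have hA : 0 ≤ A := tsum_nonneg fun z => sq_nonneg (M z)
      exact mul_le_mul hMz (pow_le_pow_left₀ (hpos z).le (min_le_right _ _) d)
        (pow_nonneg (hpos z).le d) (by linarith)
    · have hS₀ : 0 ≤ S := (mul_nonneg (hM z) (pow_nonneg (hpos z).le d)).trans (hS z)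
      calc M z * min (w z) T ^ d
          ≤ (C * ∑' m, ((w m ^ (2 * d))⁻¹ + M m ^ 2) * (w (z - m) ^ d)⁻¹) * min (w z) T ^ d :=
            mul_le_mul_of_nonneg_right (hconv z) (pow_nonneg (hpos z).le d)
        _ = C * ((∑' m, ((w m ^ (2 * d))⁻¹ + M m ^ 2) * (w (z - m) ^ d)⁻¹) * min (w z) T ^ d) :=
            mul_assoc _ _ _
        _ ≤ C * _ :=
            mul_le_mul_of_nonneg_left (tsum_source_mul_min_pow_le Q hw hd hM hMs hT hS hθ z) hC
        _ = C₀ + S * (C * 2 ^ d * (θ * B + θ⁻¹ * tail)) := by ring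
        _ ≤ C₀ + S * (1 / 2) := by
            gcongr
            exact hsmall tail hQ
        _ = C₀ + S / 2 := by ring
  refine ⟨2 * C₀, fun z => ?_⟩
  rw [← div_eq_mul_inv, le_div_iff₀ (pow_pos (hw.pos z) d)]
  simpa only [min_self] using hbound (w z) (hw.one_le z) z

end SelfImprovement

/-! ### Nonlinear bootstrap -/

section Nonlinearity

variable {X Y : Type*} [NormedAddCommGroup X] [NormedSpace ℝ X] [NormedAddCommGroup Y]
  [NormedSpace ℝ Y] {φ : X → Y}

lemma norm_integral_pow_smul_iteratedFDeriv_le {n : ℕ} {B C : ℝ}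
    (hC : ∀ y, ‖y‖ ≤ B → ‖iteratedFDeriv ℝ (n + 1) φ y‖ ≤ C) {x : X} (hx : ‖x‖ ≤ B) :
    ‖∫ t in (0 : ℝ)..1, (1 - t) ^ n • iteratedFDeriv ℝ (n + 1) φ (t • x) fun _ => x‖ ≤
      C * ‖x‖ ^ (n + 1) := by
  suffices H : ∀ t ∈ Set.uIoc (0 : ℝ) 1,
      ‖(1 - t) ^ n • iteratedFDeriv ℝ (n + 1) φ (t • x) fun _ => x‖ ≤ C * ‖x‖ ^ (n + 1) by
    simpa using intervalIntegral.norm_integral_le_of_norm_le_const H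
  intro t ht
  rw [Set.uIoc_of_le zero_le_one] at ht
  have ht₁ : ‖(1 - t) ^ n‖ ≤ 1 := by
    rw [norm_pow, Real.norm_of_nonneg (by linarith [ht.2])]
    exact pow_le_one₀ (by linarith [ht.2]) (by linarith [ht.1])
  have htx : ‖t • x‖ ≤ B := by
    rw [norm_smul, Real.norm_of_nonneg ht.1.le]
    exact (mul_le_of_le_one_left (norm_nonneg _) ht.2).trans hx
  calc ‖(1 - t) ^ n • iteratedFDeriv ℝ (n + 1) φ (t • x) fun _ => x‖
      ≤ ‖iteratedFDeriv ℝ (n + 1) φ (t • x) fun _ => x‖ := by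
        rw [norm_smul]
        exact mul_le_of_le_one_left (norm_nonneg _) ht₁
    _ ≤ ‖iteratedFDeriv ℝ (n + 1) φ (t • x)‖ * ‖x‖ ^ (n + 1) := by
        simpa using (iteratedFDeriv ℝ (n + 1) φ (t • x)).le_opNorm fun _ => x
    _ ≤ C * ‖x‖ ^ (n + 1) := by gcongr; exact hC _ htx

lemma exists_norm_sub_taylor_le [ProperSpace X] [CompleteSpace Y] {n : ℕ}
    (hφ : ContDiff ℝ (n + 1) φ) (B : ℝ) :
    ∃ C, 0 ≤ C ∧ ∀ x, ‖x‖ ≤ B →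
      ‖φ x - ∑ k ∈ Finset.range (n + 1),
        (k.factorial : ℝ)⁻¹ • iteratedFDeriv ℝ k φ 0 fun _ => x‖ ≤ C * ‖x‖ ^ (n + 1) := by
  have hcont : Continuous (iteratedFDeriv ℝ (n + 1) φ) :=
    hφ.continuous_iteratedFDeriv (by exact_mod_cast le_rfl)
  obtain ⟨C, hC⟩ := (isCompact_closedBall (0 : X) B).exists_bound_of_continuousOn hcont.continuousOn
  refine ⟨(n.factorial : ℝ)⁻¹ * max C 0, by positivity, fun x hx => ?_⟩
  have htaylor := map_add_eq_sum_add_integral_iteratedFDeriv (f := φ) (x := 0) (y := x) (n := n)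
    fun t _ => hφ.contDiffAt
  simp only [zero_add] at htaylor
  rw [htaylor, add_sub_cancel_left, norm_smul, Real.norm_of_nonneg (by positivity), mul_assoc]
  gcongr
  exact norm_integral_pow_smul_iteratedFDeriv_le
    (fun y hy => (hC y (by simpa using hy)).trans (le_max_left C 0)) hx

/-- `φ` is of class `C^n` and vanishes to second order at the origin. -/
structure VanishesToSecondOrder (n : ℕ) (φ : X → Y) : Prop where
  contDiff : ContDiff ℝ n φ
  map_zero : φ 0 = 0
  fderiv_zero : fderiv ℝ φ 0 = 0

lemma VanishesToSecondOrder.of_le {m n : ℕ} (hφ : VanishesToSecondOrder n φ) (hm : m ≤ n) :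
    VanishesToSecondOrder m φ :=
  ⟨hφ.contDiff.of_le (by exact_mod_cast hm), hφ.map_zero, hφ.fderiv_zero⟩

lemma VanishesToSecondOrder.exists_norm_le_sq [ProperSpace X] [CompleteSpace Y]
    (hφ : VanishesToSecondOrder 2 φ) (B : ℝ) :
    ∃ C, 0 ≤ C ∧ ∀ x, ‖x‖ ≤ B → ‖φ x‖ ≤ C * ‖x‖ ^ 2 := by
  have h := exists_norm_sub_taylor_le (n := 1) (by exact_mod_cast hφ.contDiff) B
  simpa [Finset.sum_range_succ, hφ.map_zero, hφ.fderiv_zero] using h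

variable {Z I : Type*} [AddCommGroup Z] {w : I → Z → ℝ}

lemma UniformSymbol.taylorPolynomial (hw : SlowlyVarying w) {n d : ℕ} {f : I → Z → X}
    (hf : UniformSymbol w n d f) (m : ℕ) (h₀ : φ 0 = 0) (h₁ : fderiv ℝ φ 0 = 0) :
    UniformSymbol w n (2 * d) fun i => ∑ k ∈ Finset.range m, fun z =>
      (k.factorial : ℝ)⁻¹ • iteratedFDeriv ℝ k φ 0 fun _ => f i z := by
  refine .sum _ fun k _ => ?_
  match k with
  | 0 => simpa [h₀] using! UniformSymbol.zero n (2 * d)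
  | 1 => simpa [h₁] using! UniformSymbol.zero n (2 * d)
  | k + 2 =>
    have hT := UniformSymbol.const (w := w) n
      (((k + 2).factorial : ℝ)⁻¹ • iteratedFDeriv ℝ (k + 2) φ 0)
    exact (multilinear_diag hw hf (k + 2) hT).mono hw (by nlinarith)

lemma VanishesToSecondOrder.symbol_comp [ProperSpace X] [CompleteSpace Y]
    (hw : SlowlyVarying w) {n : ℕ} (hφ : VanishesToSecondOrder (n + 2) φ)
    {d : ℕ} (hd : 1 ≤ d) {f : I → Z → X} (hf : UniformSymbol w n d f) :
    UniformSymbol w n (2 * d) fun i z => φ (f i z) := by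
  obtain ⟨A, hA, hfA⟩ := hf.decay
  have hbdd (i z) : ‖f i z‖ ≤ A := (hfA i z).trans
    (mul_le_of_le_one_right hA (inv_le_one_of_one_le₀ (one_le_pow₀ (hw.one_le i z))))
  have hcont : ContDiff ℝ ((n + 1 : ℕ) + 1) φ := by exact_mod_cast hφ.contDiff
  obtain ⟨C, hC, htaylor⟩ := exists_norm_sub_taylor_le hcont A
  set T : I → Z → Y := fun i => ∑ k ∈ Finset.range (n + 2), fun z =>
    (k.factorial : ℝ)⁻¹ • iteratedFDeriv ℝ k φ 0 fun _ => f i z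
  have hrem : UniformDecay w (d * (n + 2)) (fun i z => φ (f i z) - T i z) := by
    refine ⟨C * A ^ (n + 2), by positivity, fun i z => ?_⟩
    calc ‖φ (f i z) - T i z‖ ≤ C * ‖f i z‖ ^ (n + 2) := by
          simpa only [T, Finset.sum_apply] using htaylor _ (hbdd i z)
      _ ≤ C * (A * (w i z ^ d)⁻¹) ^ (n + 2) := by gcongr; exact hfA i z
      _ = C * A ^ (n + 2) * (w i z ^ (d * (n + 2)))⁻¹ := by
        rw [mul_pow, inv_pow, ← pow_mul, mul_assoc]
  have hsymb : UniformSymbol w n (2 * d) (fun i z => φ (f i z) - T i z) :=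
    .of_decay hw (hrem.mono hw (by nlinarith))
  convert hsymb.add (hf.taylorPolynomial hw (n + 2) hφ.map_zero hφ.fderiv_zero) using 2
  funext z
  exact (sub_add_cancel _ _).symm

end Nonlinearity

section Bootstrap

variable {Z ι κ E : Type*} [AddCommGroup Z] [NormedAddCommGroup E] {d : ℕ} {w : Z → ℝ}
  {r : ι → Z}

/-- The finite differences of `u` along the vectors `r ρ`. -/
def latticeGradient (r : ι → Z) (u : Z → E) : Z → ι → E := fun z ρ => Δ_[r ρ] u z

variable [Fintype ι] {u : Z → E}

lemma summable_norm_latticeGradient_sq (hu : ∀ ρ, Memℓp (Δ_[r ρ] u) 2) :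
    Summable fun z => ‖latticeGradient r u z‖ ^ 2 := by
  refine .of_nonneg_of_le (fun z => by positivity) (fun z => ?_)
    (summable_sum (s := Finset.univ) fun ρ _ => memℓp_two_iff.1 (hu ρ))
  have hnonneg : 0 ≤ ∑ ρ, ‖Δ_[r ρ] u z‖ ^ 2 := by positivity
  refine (Real.le_sqrt (norm_nonneg _) hnonneg).1 ?_
  refine (pi_norm_le_iff_of_nonneg (Real.sqrt_nonneg _)).2 fun ρ => Real.le_sqrt_of_sq_le ?_
  exact Finset.single_le_sum (f := fun ρ => ‖Δ_[r ρ] u z‖ ^ 2) (fun ρ _ => by positivity)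
    (Finset.mem_univ ρ)

variable [NormedSpace ℝ E]

lemma norm_latticeConv_le_mul_tsum (hw : LatticeWeight d w) {F f : Z → ℝ} {K : Z → E} {C C' : ℝ}
    (hf : Summable f) (hf₀ : ∀ m, 0 ≤ f m) (hC : 0 ≤ C) (hF : ∀ m, ‖F m‖ ≤ C * f m)
    (hK : ∀ z, ‖K z‖ ≤ C' * (w z ^ d)⁻¹) (z : Z) :
    ‖latticeConv F K z‖ ≤ C * C' * ∑' m, f m * (w (z - m) ^ d)⁻¹ := by
  have hsum : Summable fun m => f m * (w (z - m) ^ d)⁻¹ := by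
    refine .of_nonneg_of_le (fun m => ?_) (fun m => ?_) hf
    · exact mul_nonneg (hf₀ m) (inv_nonneg.2 (pow_nonneg (hw.pos _).le d))
    · exact mul_le_of_le_one_right (hf₀ m)
        (inv_le_one_of_one_le₀ (one_le_pow₀ (hw.one_le _)))
  rw [← tsum_mul_left]
  refine tsum_of_norm_bounded (hsum.mul_left (C * C')).hasSum fun m => ?_
  calc ‖F m • K (z - m)‖ = ‖F m‖ * ‖K (z - m)‖ := norm_smul _ _
    _ ≤ (C * f m) * (C' * (w (z - m) ^ d)⁻¹) :=
      mul_le_mul (hF m) (hK _) (norm_nonneg _) (mul_nonneg hC (hf₀ m))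
    _ = C * C' * (f m * (w (z - m) ^ d)⁻¹) := by ring

/-- The total source `g - Φ(Du)` of the linearised equation: the defect force minus the
nonlinearity. -/
def totalSource (r : ι → Z) (g : ι → κ → Z → ℝ) (Φ : ι → κ → (ι → E) → ℝ) (u : Z → E) (ρ : ι)
    (k : κ) (z : Z) : ℝ :=
  g ρ k z - Φ ρ k (latticeGradient r u z)

variable {g : ι → κ → Z → ℝ} {Φ : ι → κ → (ι → E) → ℝ}

lemma exists_norm_totalSource_le [ProperSpace E] (hw : LatticeWeight d w)
    (hu : ∀ ρ, Memℓp (Δ_[r ρ] u) 2) (hΦ : ∀ ρ k, VanishesToSecondOrder 2 (Φ ρ k))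
    (hg : ∀ ρ k, Decay w (2 * d) (g ρ k)) (ρ : ι) (k : κ) :
    ∃ C, 0 ≤ C ∧ ∀ m, ‖totalSource r g Φ u ρ k m‖ ≤
      C * ((w m ^ (2 * d))⁻¹ + ‖latticeGradient r u m‖ ^ 2) := by
  have hsum := summable_norm_latticeGradient_sq hu
  have hbdd (z) : ‖latticeGradient r u z‖ ≤ 1 + ∑' z, ‖latticeGradient r u z‖ ^ 2 := by
    have := hsum.le_tsum z fun _ _ => by positivity
    nlinarith [sq_nonneg (‖latticeGradient r u z‖ - 1), norm_nonneg (latticeGradient r u z)]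
  obtain ⟨C₁, hC₁, hg⟩ := hg ρ k
  obtain ⟨C₂, hC₂, hΦ⟩ := (hΦ ρ k).exists_norm_le_sq (1 + ∑' z, ‖latticeGradient r u z‖ ^ 2)
  refine ⟨C₁ + C₂, by positivity, fun m => ?_⟩
  have hwm : 0 ≤ (w m ^ (2 * d))⁻¹ := by have := hw.pos m; positivity
  calc ‖totalSource r g Φ u ρ k m‖ ≤ ‖g ρ k m‖ + ‖Φ ρ k (latticeGradient r u m)‖ :=
        norm_sub_le _ _
    _ ≤ C₁ * (w m ^ (2 * d))⁻¹ + C₂ * ‖latticeGradient r u m‖ ^ 2 :=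
        add_le_add (hg () m) (hΦ _ (hbdd m))
    _ ≤ _ := by nlinarith [mul_nonneg hC₁ (sq_nonneg ‖latticeGradient r u m‖), mul_nonneg hC₂ hwm]

/-- `u` is a finite-energy solution of `H u = div (g - Φ(Du))`, tested against the functionals
`φ k`. -/
structure IsFiniteEnergySolution [Fintype κ] (r : ι → Z) (β : ι → ι → E →L[ℝ] E →L[ℝ] ℝ)
    (φ : κ → E → ℝ) (g : ι → κ → Z → ℝ) (Φ : ι → κ → (ι → E) → ℝ) (u : Z → E) : Prop where
  memℓp : ∀ ρ, Memℓp (Δ_[r ρ] u) 2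
  equation : ∀ e, latticeOperator r β e u = ∑ ρ, ∑ k, fun z =>
    (totalSource r g Φ u ρ k (z - r ρ) - totalSource r g Φ u ρ k z) * φ k e

variable [DecidableEq Z] [Fintype κ] {β : ι → ι → E →L[ℝ] E →L[ℝ] ℝ} {φ : κ → E → ℝ} {G : κ → Z → E}

lemma IsGreenFamily.exists_norm_fwdDiff_greenPotential_le [CompleteSpace E]
    (hG : IsGreenFamily w d r β φ G) (hw : LatticeWeight d w) (hd : 1 ≤ d) {F : ι → κ → Z → ℝ}
    {f : Z → ℝ} (hf : Summable f) (hf₀ : ∀ m, 0 ≤ f m)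
    (hF : ∀ ρ k, ∃ C, 0 ≤ C ∧ ∀ m, ‖F ρ k m‖ ≤ C * f m) (τ : Z) :
    ∃ C, 0 ≤ C ∧ ∀ z, ‖Δ_[τ] (greenPotential r G F) z‖ ≤ C * ∑' m, f m * (w (z - m) ^ d)⁻¹ := by
  choose C hC hF using hF
  have hGbound (ρ k) : Decay w (d - 1 + 1) (Δ_[τ] (Δ_[-r ρ] (G k))) :=
    hG.symbol_fwdDiff k (-r ρ) 1 [τ] le_rfl
  simp only [Nat.sub_add_cancel hd] at hGbound
  choose C' hC' hG' using hGbound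
  refine ⟨∑ ρ, ∑ k, C ρ k * C' ρ k, Finset.sum_nonneg fun ρ _ => Finset.sum_nonneg fun k _ =>
    mul_nonneg (hC ρ k) (hC' ρ k), fun z => ?_⟩
  rw [hG.fwdDiff_greenPotential hw fun ρ k => .of_norm_bounded (hf.mul_left (C ρ k)) (hF ρ k)]
  simp only [Finset.sum_apply, Finset.sum_mul]
  exact norm_sum_le_of_le _ fun ρ _ => norm_sum_le_of_le _ fun k _ =>
    norm_latticeConv_le_mul_tsum hw hf hf₀ (hC ρ k) (hF ρ k) (hG' ρ k ()) z

variable [Infinite Z] [ProperSpace E]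

lemma IsFiniteEnergySolution.decay_latticeGradient (hw : LatticeWeight d w) (hd : 1 ≤ d)
    (hr : AddSubgroup.closure (Set.range r) = ⊤) (hst : StableForm r β)
    (hG : IsGreenFamily w d r β φ G) (hu : IsFiniteEnergySolution r β φ g Φ u)
    (hΦ : ∀ ρ k, VanishesToSecondOrder 2 (Φ ρ k)) (hg : ∀ ρ k, Decay w (2 * d) (g ρ k)) :
    Decay w d (latticeGradient r u) := by
  set f : Z → ℝ := fun m => (w m ^ (2 * d))⁻¹ + ‖latticeGradient r u m‖ ^ 2
  have hf₀ (m) : 0 ≤ f m := by have := hw.pos m; positivity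
  have hsq := summable_norm_latticeGradient_sq hu.memℓp
  have hf : Summable f := (hw.summable_inv_pow (by omega)).add hsq
  have hF := exists_norm_totalSource_le hw hu.memℓp hΦ hg
  have hFsum (ρ k) : Summable (totalSource r g Φ u ρ k) := by
    obtain ⟨C, _, h⟩ := hF ρ k
    exact .of_norm_bounded (hf.mul_left C) h
  choose C hC hbound using fun ρ => hG.exists_norm_fwdDiff_greenPotential_le hw hd hf hf₀ hF (r ρ)
  have hS₀ (z) : 0 ≤ ∑' m, f m * (w (z - m) ^ d)⁻¹ := tsum_nonneg fun m =>
    mul_nonneg (hf₀ m) (inv_nonneg.2 (pow_nonneg (hw.pos _).le d))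
  have hC₀ : 0 ≤ ∑ ρ, C ρ := Finset.sum_nonneg fun ρ _ => hC ρ
  have hconv (z) : ‖latticeGradient r u z‖ ≤
      (∑ ρ, C ρ) * ∑' m, f m * (w (z - m) ^ d)⁻¹ := by
    refine (pi_norm_le_iff_of_nonneg (mul_nonneg hC₀ (hS₀ z))).2 fun ρ => ?_
    rw [latticeGradient, hG.fwdDiff_eq_fwdDiff_greenPotential hw hst hr hFsum hu.memℓp hu.equation]
    exact (hbound ρ z).trans (mul_le_mul_of_nonneg_right
      (Finset.single_le_sum (fun ρ _ => hC ρ) (Finset.mem_univ ρ)) (hS₀ z))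
  obtain ⟨C', hC'⟩ := exists_le_mul_inv_pow_of_le_tsum hw hd (fun z => norm_nonneg _) hsq hC₀ hconv
  exact ⟨max C' 0, le_max_right _ _, fun _ z => (hC' z).trans <| mul_le_mul_of_nonneg_right
    (le_max_left _ _) (inv_nonneg.2 (pow_nonneg (hw.pos _).le d))⟩

variable {ν : Type*} [Finite ν] {a : ν → Z} {χ : Z → Z → ℝ} {p n : ℕ}

lemma IsFiniteEnergySolution.mem_sup_of_symbol (hw : LatticeWeight d w) (hd : 2 ≤ d)
    (hr : AddSubgroup.closure (Set.range r) = ⊤) (hst : StableForm r β)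
    (hG : IsGreenFamily w d r β φ G) (hu : IsFiniteEnergySolution r β φ g Φ u)
    (P : ShortPaths E w a) (hχ : IsSmoothCutoff w χ) (hp : p + 1 ≤ d)
    (hF : ∀ ρ k, Symbol w n (2 * d) (totalSource r g Φ u ρ k)) :
    u ∈ multipoleSpan a p G ⊔ remainderSpace w (d - 1 + p) (n + 2) := by
  set U := greenPotential r G (totalSource r g Φ u) with hU
  have hFsum (ρ k) : Summable (totalSource r g Φ u ρ k) := hw.summable (hF ρ k).decay (by omega)
  rw [← add_sub_cancel U u]
  refine Submodule.add_mem _ (Submodule.sum_mem _ fun ρ _ => Submodule.sum_mem _ fun k _ =>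
    latticeConv_fwdDiff_mem_sup hw hd P hχ hp hG.symbol_fwdDiff k (-r ρ) (hF ρ k))
    (Submodule.mem_sup_right ?_)
  rintro (_ | ⟨τ, l⟩) h₁ _
  · simp at h₁
  · rw [fwdDiffs_cons, fwdDiff_sub,
      hG.fwdDiff_eq_fwdDiff_greenPotential hw hst hr hFsum hu.memℓp hu.equation τ, ← hU, sub_self,
      fwdDiffs_zero]
    exact .zero _

/-- Knowing `n` differences of `Du` gives `n` differences of the source, hence (by the case `p = 0`
of the expansion) `n + 1` differences of `Du`. -/
theorem IsFiniteEnergySolution.mem_multipoleSpan_sup_remainderSpace (hw : LatticeWeight d w)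
    (hd : 2 ≤ d) (hr : AddSubgroup.closure (Set.range r) = ⊤) (hst : StableForm r β)
    (hG : IsGreenFamily w d r β φ G) (hu : IsFiniteEnergySolution r β φ g Φ u)
    (P : ShortPaths E w a) (hχ : IsSmoothCutoff w χ) (hp : p + 1 ≤ d)
    (hΦ : ∀ ρ k, VanishesToSecondOrder (n + 2) (Φ ρ k))
    (hg : ∀ ρ k n, Symbol w n (2 * d) (g ρ k)) :
    u ∈ multipoleSpan a p G ⊔ remainderSpace w (d - 1 + p) (n + 2) := by
  have hsource {j} (hj : j ≤ n) (hgrad : Symbol w j d (latticeGradient r u)) (ρ k) :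
      Symbol w j (2 * d) (totalSource r g Φ u ρ k) :=
    (hg ρ k j).sub (((hΦ ρ k).of_le (by omega)).symbol_comp hw.slowlyVarying (by omega) hgrad)
  suffices hgrad : ∀ j ≤ n, Symbol w j d (latticeGradient r u) from
    hu.mem_sup_of_symbol hw hd hr hst hG P hχ hp (hsource le_rfl (hgrad n le_rfl))
  intro j
  induction j with
  | zero =>
    exact fun _ => .of_decay hw.slowlyVarying (hu.decay_latticeGradient hw (by omega) hr hst hG
      (fun ρ k => (hΦ ρ k).of_le (by omega)) fun ρ k => (hg ρ k 0).decay)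
  | succ j ih =>
    intro hj
    have hmem := hu.mem_sup_of_symbol hw hd hr hst hG P hχ (p := 0) (by omega)
      (hsource (by omega) (ih (by omega)))
    have hbot : multipoleSpan a 0 G = ⊥ := by
      rw [multipoleSpan, Submodule.span_eq_bot]
      rintro f ⟨σ, k, h₁, h₂, _⟩
      omega
    rw [hbot, bot_sup_eq] at hmem
    refine .pi hw.slowlyVarying fun ρ l hl => ?_
    have hdecay := hmem (r ρ :: l) (by simp) (by simp; omega)
    rwa [List.length_cons, fwdDiffs_cons,
      show d - 1 + 0 + (l.length + 1) = d + l.length by omega] at hdecay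

end Bootstrap

/-! ### The weight `⟨ℓ⟩` on a Bravais lattice -/

section EuclideanNorm

variable {n : ℕ}

lemma enorm_eq_norm (v : Vec n) : enorm v = ‖WithLp.toLp 2 v‖ := by
  simp [EuclideanSpace.norm_eq, enorm]

lemma enorm_nonneg (v : Vec n) : 0 ≤ enorm v := Real.sqrt_nonneg _

lemma enorm_zero : enorm (0 : Vec n) = 0 := by simp [enorm]

lemma enorm_neg (v : Vec n) : enorm (-v) = enorm v := by simp [enorm]

lemma enorm_add_le (v u : Vec n) : enorm (v + u) ≤ enorm v + enorm u := by
  simpa only [enorm_eq_norm, WithLp.toLp_add] using norm_add_le _ _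

lemma norm_le_enorm (v : Vec n) : ‖v‖ ≤ enorm v := by
  refine (pi_norm_le_iff_of_nonneg (enorm_nonneg v)).2 fun i => ?_
  simpa [enorm_eq_norm] using PiLp.norm_apply_le (WithLp.toLp 2 v) i

lemma abs_le_enorm (v : Vec n) (i : Fin n) : |v i| ≤ enorm v :=
  (norm_le_pi_norm v i).trans (norm_le_enorm v)

lemma enorm_sq (v : Vec n) : enorm v ^ 2 = ∑ i, v i ^ 2 :=
  Real.sq_sqrt (Finset.sum_nonneg fun _ _ => sq_nonneg _)

lemma enorm_sq_le (v : Vec n) : enorm v ^ 2 ≤ n * ‖v‖ ^ 2 := by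
  rw [enorm_sq]
  refine (Finset.sum_le_card_nsmul _ _ (‖v‖ ^ 2) fun i _ => ?_).trans (by simp)
  simpa using pow_le_pow_left₀ (norm_nonneg _) (norm_le_pi_norm v i) 2

end EuclideanNorm

section BravaisLattice

variable {d : ℕ} (A : Matrix (Fin d) (Fin d) ℝ)

/-- The parametrization `z ↦ A z` of the Bravais lattice as a group homomorphism. -/
def latticeHom : (Fin d → ℤ) →+ Vec d where
  toFun := latticePt d A
  map_zero' := funext fun i => by simp [latticePt]
  map_add' z y := funext fun i => by simp [latticePt, mul_add, Finset.sum_add_distrib]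

lemma latticePt_zero : latticePt d A 0 = 0 := map_zero (latticeHom A)

lemma latticePt_add (z y : Fin d → ℤ) :
    latticePt d A (z + y) = latticePt d A z + latticePt d A y := map_add (latticeHom A) z y

lemma latticePt_neg (z : Fin d → ℤ) : latticePt d A (-z) = -latticePt d A z :=
  map_neg (latticeHom A) z

lemma latticePt_sub (z y : Fin d → ℤ) :
    latticePt d A (z - y) = latticePt d A z - latticePt d A y := map_sub (latticeHom A) z y

variable {A}

lemma exists_abs_coord_le (hA : IsUnit A.det) : ∃ C : ℝ, 1 ≤ C ∧ ∀ (z : Fin d → ℤ) i,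
    |(z i : ℝ)| ≤ C * enorm (latticePt d A z) := by
  have hsum : 0 ≤ ∑ i, ∑ j, |A⁻¹ i j| := by positivity
  refine ⟨1 + ∑ i, ∑ j, |A⁻¹ i j|, by linarith, fun z i => ?_⟩
  have hinv : A⁻¹.mulVec (latticePt d A z) = fun i => (z i : ℝ) := by
    change A⁻¹.mulVec (A.mulVec fun i => (z i : ℝ)) = _
    rw [Matrix.mulVec_mulVec, Matrix.nonsing_inv_mul _ hA, Matrix.one_mulVec]
  calc |(z i : ℝ)| = |∑ j, A⁻¹ i j * latticePt d A z j| := by rw [← congrFun hinv i]; rfl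
    _ ≤ ∑ j, |A⁻¹ i j * latticePt d A z j| := Finset.abs_sum_le_sum_abs _ _
    _ ≤ ∑ j, |A⁻¹ i j| * enorm (latticePt d A z) := by
      gcongr with j
      rw [abs_mul]
      exact mul_le_mul_of_nonneg_left (abs_le_enorm _ _) (abs_nonneg _)
    _ = (∑ j, |A⁻¹ i j|) * enorm (latticePt d A z) := by rw [Finset.sum_mul]
    _ ≤ (1 + ∑ i, ∑ j, |A⁻¹ i j|) * enorm (latticePt d A z) := by
      refine mul_le_mul_of_nonneg_right ?_ (enorm_nonneg _)
      have := Finset.single_le_sum (f := fun i => ∑ j, |A⁻¹ i j|)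
        (fun i _ => by positivity) (Finset.mem_univ i)
      linarith

lemma latticePt_injective (hA : IsUnit A.det) : Function.Injective (latticePt d A) := by
  refine (injective_iff_map_eq_zero (latticeHom A)).2 fun z hz => ?_
  obtain ⟨C, -, hC⟩ := exists_abs_coord_le hA
  have hz : latticePt d A z = 0 := hz
  refine funext fun i => ?_
  simpa [hz, enorm_zero] using hC z i

lemma latticePt_eq_zero (hA : IsUnit A.det) {z : Fin d → ℤ} : latticePt d A z = 0 ↔ z = 0 := by
  rw [← latticePt_zero A, (latticePt_injective hA).eq_iff]

lemma finite_enorm_latticePt_lt (hA : IsUnit A.det) (b : ℝ) :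
    {z : Fin d → ℤ | enorm (latticePt d A z) < b}.Finite := by
  obtain ⟨C, hC1, hC⟩ := exists_abs_coord_le hA
  refine (Set.finite_Icc (fun _ : Fin d => -⌈C * b⌉) fun _ => ⌈C * b⌉).subset fun z hz => ?_
  have hbound : ∀ i, |z i| ≤ ⌈C * b⌉ := fun i => by
    have : |(z i : ℝ)| ≤ ⌈C * b⌉ := (hC z i).trans <|
      (mul_le_mul_of_nonneg_left (le_of_lt hz) (by linarith)).trans (Int.le_ceil _)
    exact_mod_cast this
  exact ⟨fun i => (abs_le.1 (hbound i)).1, fun i => (abs_le.1 (hbound i)).2⟩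

variable (A) in
lemma exists_forall_le_enorm_notMem {S : Set (Fin d → ℤ)} (hS : S.Finite) :
    ∃ b : ℝ, ∀ z, b ≤ enorm (latticePt d A z) → z ∉ S := by
  obtain ⟨b, hb⟩ := (hS.image fun z => enorm (latticePt d A z)).bddAbove
  exact ⟨b + 1, fun z hz hzS => by linarith [hb ⟨z, hzS, rfl⟩]⟩

/-- The shift by `1 / 2` avoids the junk value of `0⁻¹` at the origin. -/
lemma summable_norm_sub_half_inv_pow (d : ℕ) :
    Summable fun z : Fin d → ℤ => (‖fun i => (z i : ℝ) - 1 / 2‖ ^ (d + 1))⁻¹ := by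
  let L := Submodule.span ℤ (Set.range (Pi.basisFun ℝ (Fin d)))
  have hrank : Module.finrank ℤ L < d + 1 := by rw [ZLattice.rank ℝ L]; simp
  have hmem (z : Fin d → ℤ) : (fun i => (z i : ℝ)) ∈ L := by
    have : (fun i => (z i : ℝ)) = ∑ i, z i • Pi.basisFun ℝ (Fin d) i := by
      funext j
      simp [Finset.sum_apply, Pi.single_apply]
    rw [this]
    exact Submodule.sum_mem _ fun i _ =>
      Submodule.smul_mem _ _ (Submodule.subset_span ⟨i, rfl⟩)
  have hinj : Function.Injective fun z : Fin d → ℤ => (⟨_, hmem z⟩ : L) := fun z y h =>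
    funext fun i => Int.cast_injective (α := ℝ) (congrFun (congrArg Subtype.val h) i)
  simpa [Function.comp_def, Pi.sub_def] using
    (ZLattice.summable_norm_sub_inv_pow L (d + 1) hrank fun _ => (1 / 2 : ℝ)).comp_injective hinj

lemma summable_inv_ang_latticePt_pow (hd : 1 ≤ d) (hA : IsUnit A.det) :
    Summable fun z => (ang (latticePt d A z) ^ (d + 1))⁻¹ := by
  obtain ⟨C, hC1, hC⟩ := exists_abs_coord_le hA
  refine ((summable_norm_sub_half_inv_pow d).mul_left (C ^ (d + 1))).of_nonneg_of_le
    (fun z => ?_) fun z => ?_ <;> have hnn := enorm_nonneg (latticePt d A z)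
  · unfold ang
    positivity
  have hang : 0 < ang (latticePt d A z) := by unfold ang; positivity
  have hle : ‖fun i => (z i : ℝ) - 1 / 2‖ ≤ C * ang (latticePt d A z) := by
    refine (pi_norm_le_iff_of_nonneg (by positivity)).2 fun i => ?_
    have h := abs_sub (z i : ℝ) (1 / 2)
    rw [abs_of_pos (one_half_pos (α := ℝ))] at h
    rw [Real.norm_eq_abs, ang]
    nlinarith [hC z i]
  have hpos : 0 < ‖fun i => (z i : ℝ) - 1 / 2‖ := by
    refine norm_pos_iff.2 fun h => ?_
    have h0 : (z ⟨0, hd⟩ : ℝ) - 1 / 2 = 0 := congrFun h ⟨0, hd⟩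
    have : 2 * z ⟨0, hd⟩ = 1 := by exact_mod_cast (by linarith : (2 * z ⟨0, hd⟩ : ℝ) = 1)
    omega
  rw [← inv_pow, ← inv_pow, ← mul_pow]
  refine pow_le_pow_left₀ (by positivity) ?_ _
  rwa [inv_le_iff_one_le_mul₀ hang, ← div_eq_mul_inv, div_mul_eq_mul_div, one_le_div hpos]

lemma latticeWeight_ang (hd : 1 ≤ d) (hA : IsUnit A.det) :
    LatticeWeight d fun z => ang (latticePt d A z) where
  two_le z := by simp [ang, enorm_nonneg]
  map_neg z := by simp only [ang, latticePt_neg, enorm_neg]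
  map_add_le z y := by
    simp only [ang, latticePt_add]
    linarith [enorm_add_le (latticePt d A z) (latticePt d A y)]
  summable_inv_pow_succ := summable_inv_ang_latticePt_pow hd hA

end BravaisLattice

/-! ### Short paths along a lattice basis -/

section LatticePath

namespace LatticeWeight

variable {Z ι : Type*} [AddCommGroup Z] {d : ℕ} {w : Z → ℝ}

lemma map_nsmul_le (hw : LatticeWeight d w) (y : Z) (k : ℕ) : w (k • y) ≤ (k + 2) * w y := by
  induction k with
  | zero => simpa using hw.map_zero_le y
  | succ k ih =>
    rw [succ_nsmul]
    push_cast
    linarith [hw.map_add_le (k • y) y]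

lemma map_zsmul_le (hw : LatticeWeight d w) (y : Z) (c : ℤ) :
    w (c • y) ≤ (c.natAbs + 2) * w y := by
  obtain h | h := Int.natAbs_eq c <;> nth_rewrite 1 [h]
  · rw [natCast_zsmul]
    exact hw.map_nsmul_le y _
  · rw [neg_smul, natCast_zsmul, hw.map_neg]
    exact hw.map_nsmul_le y _

lemma map_sum_le (hw : LatticeWeight d w) (m : ι → Z) (S : Finset ι) :
    w (∑ i ∈ S, m i) ≤ w 0 + ∑ i ∈ S, w (m i) := by
  classical
  induction S using Finset.induction_on with
  | empty => simp
  | insert j S hj ih =>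
    rw [Finset.sum_insert hj, Finset.sum_insert hj]
    linarith [hw.map_add_le (m j) (∑ i ∈ S, m i)]

end LatticeWeight

variable {Z ι κ E : Type*} [AddCommGroup Z] [NormedAddCommGroup E] [NormedSpace ℝ E]
  {d : ℕ} {w : Z → ℝ} {a : κ → Z}

namespace LatticePath

variable {n n' : ℕ} {B B' : ℝ} {m m' : Z}

/-- The empty path. -/
def nil (E : Type*) [NormedAddCommGroup E] [NormedSpace ℝ E] (w : Z → ℝ) (a : κ → Z) (B : ℝ) :
    LatticePath E w a 0 B 0 where
  sign := Fin.elim0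
  gen := Fin.elim0
  base := Fin.elim0
  abs_sign_le := Fin.rec0
  weight_base_le := Fin.rec0
  sub_eq_sum h z := by simp

/-- The one-step path to a generator. -/
def forward (E : Type*) [NormedAddCommGroup E] [NormedSpace ℝ E] (w : Z → ℝ) (a : κ → Z) (i : κ) :
    LatticePath E w a 1 (w 0) (a i) where
  sign _ := 1
  gen _ := i
  base _ := 0
  abs_sign_le _ := by simp
  weight_base_le _ := le_rfl
  sub_eq_sum h z := by simp [fwdDiff]

/-- The one-step path to the negative of a generator. -/
def backward (E : Type*) [NormedAddCommGroup E] [NormedSpace ℝ E] (w : Z → ℝ) (a : κ → Z)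
    (i : κ) : LatticePath E w a 1 (w (-a i)) (-a i) where
  sign _ := -1
  gen _ := i
  base _ := -a i
  abs_sign_le _ := by simp
  weight_base_le _ := le_rfl
  sub_eq_sum h z := by simp [fwdDiff]

/-- Concatenation of paths, where the second one is translated to start at the end of the first. -/
def append (hw : LatticeWeight d w) (P : LatticePath E w a n B m) (Q : LatticePath E w a n' B' m')
    {B'' : ℝ} (hB : B ≤ B'') (hB' : w m + B' ≤ B'') :
    LatticePath E w a (n + n') B'' (m + m') where
  sign := Fin.append P.sign Q.sign
  gen := Fin.append P.gen Q.gen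
  base := Fin.append P.base fun t => m + Q.base t
  abs_sign_le t := by
    induction t using Fin.addCases with
    | left t => simpa using P.abs_sign_le t
    | right t => simpa using Q.abs_sign_le t
  weight_base_le t := by
    induction t using Fin.addCases with
    | left t => simpa using (P.weight_base_le t).trans hB
    | right t =>
      rw [Fin.append_right]
      linarith [hw.map_add_le m (Q.base t), Q.weight_base_le t]
  sub_eq_sum h z := by
    simp only [Fin.sum_univ_add, Fin.append_left, Fin.append_right, ← add_assoc,
      ← P.sub_eq_sum, ← Q.sub_eq_sum]
    abel

lemma nonempty_nsmul (hw : LatticeWeight d w) (P : LatticePath E w a 1 B m) (k : ℕ) :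
    Nonempty (LatticePath E w a k (B + (k + 1) * w m) (k • m)) := by
  induction k with
  | zero => exact ⟨by simpa using nil E w a (B + w m)⟩
  | succ k ih =>
    obtain ⟨Q⟩ := ih
    rw [succ_nsmul]
    refine ⟨Q.append hw P ?_ ?_⟩ <;> push_cast
    · linarith [hw.pos m]
    · linarith [hw.map_nsmul_le m k]

lemma nonempty_zsmul (E : Type*) [NormedAddCommGroup E] [NormedSpace ℝ E]
    (hw : LatticeWeight d w) (a : κ → Z) (i : κ) (c : ℤ) :
    Nonempty (LatticePath E w a c.natAbs ((c.natAbs + 3) * w (a i)) (c • a i)) := by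
  have extend {m : Z} {B : ℝ} (hm : w m = w (a i)) (hB : B ≤ 2 * w (a i))
      (P : LatticePath E w a 1 B m) :
      Nonempty (LatticePath E w a c.natAbs ((c.natAbs + 3) * w (a i)) (c.natAbs • m)) := by
    obtain ⟨Q⟩ := P.nonempty_nsmul hw c.natAbs
    refine ⟨{ Q with weight_base_le := fun t => (Q.weight_base_le t).trans ?_ }⟩
    rw [hm]
    linarith
  obtain h | h := Int.natAbs_eq c
  · have := extend rfl (hw.map_zero_le (a i)) (forward E w a i)
    rwa [← natCast_zsmul, ← h] at this
  · have := extend (hw.map_neg (a i)) (by linarith [hw.map_neg (a i), hw.pos (a i)])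
      (backward E w a i)
    rwa [smul_neg, ← natCast_zsmul, ← neg_smul, ← h] at this

lemma nonempty_sum (hw : LatticeWeight d w) {n : ι → ℕ} {B : ι → ℝ} {m : ι → Z}
    (hB : ∀ i, 0 ≤ B i) (hP : ∀ i, Nonempty (LatticePath E w a (n i) (B i) (m i)))
    (S : Finset ι) :
    Nonempty (LatticePath E w a (∑ i ∈ S, n i) (w 0 + ∑ i ∈ S, (B i + w (m i)))
      (∑ i ∈ S, m i)) := by
  classical
  induction S using Finset.induction_on with
  | empty => exact ⟨nil E w a _⟩
  | insert j S hj ih =>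
    obtain ⟨Q⟩ := ih
    obtain ⟨P⟩ := hP j
    simp only [Finset.sum_insert hj]
    rw [add_comm (n j), add_comm (m j)]
    refine ⟨Q.append hw P ?_ ?_⟩
    · linarith [hB j, hw.pos (m j)]
    · have := hw.map_sum_le m S
      have := Finset.sum_nonneg fun i (_ : i ∈ S) => hB i
      rw [Finset.sum_add_distrib]
      linarith [hw.pos (m j)]

end LatticePath

lemma nonempty_shortPaths_of_coords [Fintype κ] (hw : LatticeWeight d w) (a : κ → Z) {C : ℝ}
    (hC : 0 ≤ C)
    (h : ∀ m : Z, ∃ c : κ → ℤ, m = ∑ i, c i • a i ∧ ∀ i, ((c i).natAbs : ℝ) ≤ C * w m) :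
    Nonempty (ShortPaths E w a) := by
  choose c hc hcw using h
  let D : ℝ := 2 + ∑ i, (2 * C + 5) * w (a i)
  have hD : 2 ≤ D := le_add_of_nonneg_right <| Finset.sum_nonneg fun i _ => by
    have := hw.pos (a i)
    positivity
  have hcard : 0 ≤ Fintype.card κ * C := by positivity
  have path (m : Z) : Nonempty (LatticePath E w a (∑ i, (c m i).natAbs)
      ((Fintype.card κ * C + D) * w m) m) := by
    obtain ⟨P⟩ := LatticePath.nonempty_sum hw
      (fun i => mul_nonneg (by positivity) (hw.pos (a i)).le)
      (fun i => LatticePath.nonempty_zsmul E hw a i (c m i)) Finset.univ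
    rw [← hc m] at P
    refine ⟨{ P with weight_base_le := fun t => (P.weight_base_le t).trans ?_ }⟩
    calc w 0 + ∑ i, (((c m i).natAbs + 3) * w (a i) + w (c m i • a i))
        ≤ 2 * w m + ∑ i, (2 * C + 5) * w (a i) * w m := by
          gcongr with i
          · exact hw.map_zero_le m
          · have := hw.map_zsmul_le (a i) (c m i)
            have : (2 * (c m i).natAbs + 5 : ℝ) ≤ (2 * C + 5) * w m := by
              nlinarith [hcw m i, hw.one_le m]
            nlinarith [hw.pos (a i)]
      _ = D * w m := by rw [← Finset.sum_mul, ← add_mul]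
      _ ≤ (Fintype.card κ * C + D) * w m := by
          have := hw.pos m
          gcongr
          linarith
  refine ⟨⟨Fintype.card κ * C + D, by linarith, fun m => ∑ i, (c m i).natAbs, fun m => ?_,
    fun m => (path m).some⟩⟩
  push_cast
  calc ∑ i, ((c m i).natAbs : ℝ) ≤ ∑ _i : κ, C * w m := Finset.sum_le_sum fun i _ => hcw m i
    _ = Fintype.card κ * C * w m := by simp [mul_assoc]
    _ ≤ (Fintype.card κ * C + D) * w m := by
      have := hw.pos m
      gcongr
      linarith

lemma exists_lift_nonempty_shortPaths {A : Matrix (Fin d) (Fin d) ℝ} (hd : 1 ≤ d)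
    (hA : IsUnit A.det) {s : Fin d → Vec d} (hslat : ∀ i, s i ∈ Lattice d A)
    (hsind : LinearIndependent ℝ s)
    (hsspan : ∀ x ∈ Lattice d A, ∃ z : Fin d → ℤ, x = ∑ i, (z i : ℝ) • s i) :
    ∃ a : Fin d → Fin d → ℤ, (∀ i, latticePt d A (a i) = s i) ∧
      Nonempty (ShortPaths E (fun z => ang (latticePt d A z)) a) := by
  choose a ha using hslat
  have : Nonempty (Fin d) := ⟨⟨0, hd⟩⟩
  let b := basisOfLinearIndependentOfCardEqFinrank hsind (by simp)
  let f (i : Fin d) : Vec d →L[ℝ] ℝ := (b.coord i).toContinuousLinearMap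
  have hf (c : Fin d → ℤ) (i : Fin d) : f i (∑ i, (c i : ℝ) • s i) = c i := by
    change b.coord i _ = _
    have hb : s = b := by simp [b]
    rw [hb, Module.Basis.coord_apply, Module.Basis.repr_sum_self]
  refine ⟨a, ha, nonempty_shortPaths_of_coords (latticeWeight_ang hd hA) a (C := ∑ i, ‖f i‖)
    (by positivity) fun m => ?_⟩
  obtain ⟨c, hc⟩ := hsspan _ ⟨m, rfl⟩
  refine ⟨c, latticePt_injective hA ?_, fun i => ?_⟩
  · change _ = latticeHom A _
    rw [map_sum, hc]
    refine Finset.sum_congr rfl fun i _ => ?_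
    rw [map_zsmul, Int.cast_smul_eq_zsmul, ← ha]
    rfl
  · calc ((c i).natAbs : ℝ) = ‖f i (latticePt d A m)‖ := by
          rw [hc, hf, Nat.cast_natAbs, Int.cast_abs, Real.norm_eq_abs]
      _ ≤ ‖f i‖ * ‖latticePt d A m‖ := (f i).le_opNorm _
      _ ≤ (∑ i, ‖f i‖) * ang (latticePt d A m) := by
          gcongr
          · exact Finset.single_le_sum (f := fun i => ‖f i‖) (fun i _ => norm_nonneg _)
              (Finset.mem_univ i)
          · exact (norm_le_enorm _).trans (le_add_of_nonneg_right two_pos.le)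

end LatticePath

/-! ### Smooth cutoffs -/

section Cutoff

lemma hasFDerivAt_fwdDiffs {X F : Type*} [NormedAddCommGroup X] [NormedSpace ℝ X]
    [NormedAddCommGroup F] [NormedSpace ℝ F] (l : List X) {f : X → F} {f' : X → X →L[ℝ] F}
    (hf : ∀ x, HasFDerivAt f (f' x) x) (x : X) :
    HasFDerivAt (fwdDiffs l f) (fwdDiffs l f' x) x := by
  induction l generalizing f f' with
  | nil => exact hf x
  | cons v _ ih =>
    exact ih fun y => ((hasFDerivAt_comp_add_right v).2 (hf (y + v))).sub (hf y)

lemma norm_fwdDiffs_le.{u} {X F : Type u} [NormedAddCommGroup X] [NormedSpace ℝ X]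
    [NormedAddCommGroup F] [NormedSpace ℝ F] {l : List X} {f : X → F} {C : ℝ}
    (hf : ContDiff ℝ l.length f) (hC : ∀ x, ‖iteratedFDeriv ℝ l.length f x‖ ≤ C) (x : X) :
    ‖fwdDiffs l f x‖ ≤ C * (l.map norm).prod := by
  induction l generalizing F x with
  | nil => simpa using hC x
  | cons v l ih =>
    have hderiv (y : X) : ‖fwdDiffs l (fderiv ℝ f) y‖ ≤ C * (l.map norm).prod :=
      ih (hf.fderiv_right (by simp)) (fun y => by
        rw [norm_iteratedFDeriv_fderiv]
        exact hC y) y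
    have hdiff (y : X) : HasFDerivAt f (fderiv ℝ f y) y :=
      (hf.differentiable (by simp) y).hasFDerivAt
    have hmvt := convex_univ.norm_image_sub_le_of_norm_hasFDerivWithin_le
      (fun y _ => (hasFDerivAt_fwdDiffs l hdiff y).hasFDerivWithinAt) (fun y _ => hderiv y)
      (Set.mem_univ x) (Set.mem_univ (x + v))
    calc ‖fwdDiffs (v :: l) f x‖ = ‖fwdDiffs l f (x + v) - fwdDiffs l f x‖ := by
          rw [fwdDiffs_cons, fwdDiffs_fwdDiff]
          rfl
      _ ≤ C * (l.map norm).prod * ‖x + v - x‖ := hmvt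
      _ = C * ((v :: l).map norm).prod := by
          rw [add_sub_cancel_left, List.map_cons, List.prod_cons]
          ring

lemma prod_norm_smul {X : Type*} [NormedAddCommGroup X] [NormedSpace ℝ X]
    (c : ℝ) (l : List X) :
    (l.map fun x => ‖c • x‖).prod = |c| ^ l.length * (l.map norm).prod := by
  induction l with
  | nil => simp
  | cons x l ih =>
    rw [List.map_cons, List.prod_cons, ih, norm_smul, Real.norm_eq_abs, List.length_cons,
      List.map_cons, List.prod_cons]
    ring

variable {Z : Type*} {X : Type} [AddCommGroup Z] [NormedAddCommGroup X] [NormedSpace ℝ X]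
  [HasContDiffBump X] {d : ℕ} {w : Z → ℝ}

/-- The bump function `θ` rescaled to be centered at `P z` with width comparable to `w z`. Where
`w z` is small the cutoff vanishes identically, as there is no room for it at scale `w z`. -/
def scaledCutoff (w : Z → ℝ) (P : Z →+ X) (θ : ContDiffBump (0 : X)) (z m : Z) : ℝ :=
  if w z < 16 then 0 else θ ((w z)⁻¹ • P (m - z))

lemma uniformSymbol_scaledCutoff [FiniteDimensional ℝ X] (hw : LatticeWeight d w) (P : Z →+ X)
    (θ : ContDiffBump (0 : X)) (n : ℕ) :
    UniformSymbol (fun z m => min (w m) (w z)) n 0 (scaledCutoff w P θ) := fun l _ => by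
  obtain ⟨C, hC⟩ := (θ.hasCompactSupport.iteratedFDeriv (𝕜 := ℝ) l.length
    ).exists_bound_of_continuous ((θ.contDiff (n := l.length)).continuous_iteratedFDeriv le_rfl)
  have hC0 : 0 ≤ C := (norm_nonneg _).trans (hC 0)
  have hprod : 0 ≤ ((l.map P).map norm).prod := List.prod_nonneg fun x hx => by
    obtain ⟨y, -, rfl⟩ := List.mem_map.1 hx
    exact norm_nonneg y
  refine ⟨C * ((l.map P).map norm).prod, by positivity, fun z m => ?_⟩
  change ‖fwdDiffs l (scaledCutoff w P θ z) m‖ ≤ _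
  have hmin : 0 < min (w m) (w z) := lt_min (hw.pos m) (hw.pos z)
  by_cases hz : w z < 16
  · have : scaledCutoff w P θ z = 0 := funext fun m => if_pos hz
    rw [this, fwdDiffs_zero, Pi.zero_apply, norm_zero]
    positivity
  let T : Z →+ X := (DistribSMul.toAddMonoidHom X (w z)⁻¹).comp P
  have hχ : scaledCutoff w P θ z = fun m => θ (T m + -T z) := funext fun m => by
    simp [scaledCutoff, if_neg hz, T, sub_eq_add_neg]
  have hT : ((l.map T).map norm).prod =
      (w z ^ l.length)⁻¹ * ((l.map P).map norm).prod := by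
    have := prod_norm_smul (w z)⁻¹ (l.map P)
    rw [List.length_map, abs_of_pos (inv_pos.2 (hw.pos z)), inv_pow] at this
    rw [← this, List.map_map, List.map_map]
    rfl
  have hdiffs := fwdDiffs_comp_addMonoidHom T (.id ℝ) l θ (-T z)
  simp only [AddMonoidHom.id_apply] at hdiffs
  calc ‖fwdDiffs l (scaledCutoff w P θ z) m‖ = ‖fwdDiffs (l.map T) θ (T m + -T z)‖ := by
        rw [hχ, hdiffs]
    _ ≤ C * ((l.map T).map norm).prod :=
        norm_fwdDiffs_le θ.contDiff (fun x => (List.length_map T).symm ▸ hC x) _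
    _ = C * ((l.map P).map norm).prod * (w z ^ l.length)⁻¹ := by rw [hT]; ring
    _ ≤ C * ((l.map P).map norm).prod * (min (w m) (w z) ^ (0 + l.length))⁻¹ := by
        rw [zero_add]
        gcongr
        exact min_le_right _ _

lemma isSmoothCutoff_scaledCutoff [FiniteDimensional ℝ X] (hw : LatticeWeight d w) {P : Z →+ X}
    (hP : ∀ z, w z = ‖P z‖ + 2) {θ : ContDiffBump (0 : X)} (hin : θ.rIn = 1 / 16)
    (hout : θ.rOut = 1 / 4) : IsSmoothCutoff w (scaledCutoff w P θ) where
  symbol := uniformSymbol_scaledCutoff hw P θ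
  weight_sub_le z m h := by
    by_cases hz : w z < 16
    · exact absurd (if_pos hz) h
    rw [scaledCutoff, if_neg hz, ← Function.mem_support, θ.support_eq, Metric.mem_ball,
      dist_zero_right, hout, norm_smul, Real.norm_of_nonneg (inv_nonneg.2 (hw.pos z).le),
      inv_mul_lt_iff₀ (hw.pos z), map_sub, norm_sub_rev, ← map_sub] at h
    linarith [hP (z - m)]
  eq_one := by
    refine ⟨1 / 16, by norm_num, fun z m h => ?_⟩
    have hzm := hP (z - m)
    have hz : ¬w z < 16 := by linarith [norm_nonneg (P (z - m))]
    rw [scaledCutoff, if_neg hz]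
    refine θ.one_of_mem_closedBall ?_
    rw [Metric.mem_closedBall, dist_zero_right, hin, norm_smul,
      Real.norm_of_nonneg (inv_nonneg.2 (hw.pos z).le), inv_mul_le_iff₀ (hw.pos z), map_sub,
      norm_sub_rev, ← map_sub]
    linarith

lemma exists_isSmoothCutoff_ang {A : Matrix (Fin d) (Fin d) ℝ} (hd : 1 ≤ d) (hA : IsUnit A.det) :
    ∃ χ, IsSmoothCutoff (fun z => ang (latticePt d A z)) χ :=
  ⟨_, isSmoothCutoff_scaledCutoff (latticeWeight_ang hd hA)
    (P := (WithLp.linearEquiv 2 ℝ (Vec d)).symm.toLinearMap.toAddMonoidHom.comp (latticeHom A))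
    (fun z => congrArg (· + 2) (enorm_eq_norm _))
    (θ := ⟨1 / 16, 1 / 4, by norm_num, by norm_num⟩) rfl rfl⟩

end Cutoff

/-! ### Differences along the interaction range -/

section InteractionRange

variable {I Z ι E : Type*} [AddCommGroup Z] [NormedAddCommGroup E]
  {w : I → Z → ℝ} {r : ι → Z}

lemma UniformDecay.fwdDiff_of_closure_eq_top (hw : SlowlyVarying w)
    (hr : AddSubgroup.closure (Set.range r) = ⊤) {s : ℕ} {f : I → Z → E}
    (hf : ∀ ρ, UniformDecay w s fun i => Δ_[r ρ] (f i)) (τ : Z) :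
    UniformDecay w s fun i => Δ_[τ] (f i) := by
  induction hr ▸ AddSubgroup.mem_top τ using AddSubgroup.closure_induction with
  | mem _ hx =>
    obtain ⟨ρ, rfl⟩ := hx
    exact hf ρ
  | zero =>
    simp only [fwdDiff_zero_left]
    exact .zero s
  | add σ τ _ _ hσ hτ =>
    simp only [fwdDiff_add_left]
    exact (hσ.shift hw τ).add hτ
  | neg τ _ hτ =>
    simp only [fwdDiff_neg_left]
    exact (hτ.shift hw (-τ)).neg

lemma UniformDecay.fwdDiffs_of_closure_eq_top (hw : SlowlyVarying w)
    (hr : AddSubgroup.closure (Set.range r) = ⊤) {s : ℕ} {f : I → Z → E}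
    (hf : ∀ l : List ι, l ≠ [] →
      UniformDecay w (s + l.length) fun i => Defect.fwdDiffs (l.map r) (f i))
    {l : List Z} (hl : l ≠ []) :
    UniformDecay w (s + l.length) fun i => Defect.fwdDiffs l (f i) := by
  suffices H : ∀ l' : List ι, l ≠ [] ∨ l' ≠ [] →
      UniformDecay w (s + (l'.length + l.length)) fun i =>
        Defect.fwdDiffs l (Defect.fwdDiffs (l'.map r) (f i)) by
    simpa using H [] (.inl hl)
  clear hl
  induction l with
  | nil => exact fun l' hl' => by simpa using hf l' (by simpa using hl')
  | cons τ l ih =>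
    intro l' _
    simp only [fwdDiffs_cons, fwdDiffs_fwdDiff]
    refine .fwdDiff_of_closure_eq_top hw hr (fun ρ => ?_) τ
    simpa [add_assoc, add_comm 1, fwdDiffs_fwdDiff] using ih (ρ :: l') (.inr (by simp))

lemma sum_powerset_smul_eq_fwdDiffs {M : Type*} [AddCommGroup M] [Module ℝ M] [DecidableEq ι]
    (ζ : ι → Z) {l : List ι} (hl : l.Nodup) (f : Z → M) (z : Z) :
    ∑ S ∈ l.toFinset.powerset, (-1 : ℝ) ^ (l.length - S.card) • f (z + ∑ i ∈ S, ζ i) =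
      fwdDiffs (l.map ζ) f z := by
  induction l generalizing f with
  | nil => simp
  | cons a l ih =>
    rw [List.nodup_cons] at hl
    have ha : a ∉ l.toFinset := by simpa using hl.1
    rw [List.map_cons, fwdDiffs_cons, ← ih hl.2, List.toFinset_cons,
      Finset.sum_powerset_insert ha, ← Finset.sum_add_distrib]
    refine Finset.sum_congr rfl fun S hS => ?_
    have haS : a ∉ S := fun h => ha (Finset.mem_powerset.1 hS h)
    have hcard : S.card ≤ l.length :=
      (Finset.card_le_card (Finset.mem_powerset.1 hS)).trans (List.toFinset_card_le l)
    rw [Finset.card_insert_of_notMem haS, Finset.sum_insert haS, List.length_cons,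
      Nat.add_sub_add_right, Nat.sub_add_comm hcard, pow_succ, fwdDiff, smul_sub, add_comm (ζ a),
      ← add_assoc]
    module

variable {d N : ℕ} {A : Matrix (Fin d) (Fin d) ℝ}

lemma Dmulti_latticePt {M : Type} [AddCommGroup M] [Module ℝ M] {j : ℕ} {ζ : Fin j → Fin d → ℤ}
    {ρs : Fin j → Vec d} (hζ : ∀ i, latticePt d A (ζ i) = ρs i) (u : Vec d → M)
    (z : Fin d → ℤ) :
    Dmulti ρs u (latticePt d A z) = fwdDiffs (List.ofFn ζ) (fun z => u (latticePt d A z)) z := by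
  rw [List.ofFn_eq_map, ← sum_powerset_smul_eq_fwdDiffs ζ (List.nodup_finRange j),
    List.length_finRange, List.toFinset_finRange, Finset.powerset_univ, Dmulti]
  refine Finset.sum_congr rfl fun S _ => ?_
  have hsum : latticePt d A (∑ i ∈ S, ζ i) = ∑ i ∈ S, ρs i :=
    (map_sum (latticeHom A) ζ S).trans (Finset.sum_congr rfl fun _ _ => hζ _)
  rw [latticePt_add, hsum]

lemma enorm_le_mul_norm (v : Vec N) : enorm v ≤ Real.sqrt N * ‖v‖ :=
  le_of_sq_le_sq (by simpa [mul_pow] using enorm_sq_le v) (by positivity)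

lemma sqrt_sum_sq_le {α : Type*} [Fintype α] {x : α → ℝ} (hx : ∀ i, 0 ≤ x i) :
    Real.sqrt (∑ i, x i ^ 2) ≤ ∑ i, x i :=
  Real.sqrt_le_iff.2 ⟨Finset.sum_nonneg fun i _ => hx i,
    Finset.sum_sq_le_sq_sum_of_nonneg fun i _ => hx i⟩

lemma le_sqrt_sum_sq {α : Type*} [Fintype α] (x : α → ℝ) (i : α) :
    x i ≤ Real.sqrt (∑ i, x i ^ 2) :=
  Real.le_sqrt_of_sq_le <|
    Finset.single_le_sum (f := fun i => x i ^ 2) (fun _ _ => sq_nonneg _) (Finset.mem_univ i)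

lemma rpow_eq_inv_pow {x e : ℝ} (hx : 0 ≤ x) {n : ℕ} (he : e = -(n : ℝ)) :
    x ^ e = (x ^ n)⁻¹ := by
  rw [he, Real.rpow_neg hx, Real.rpow_natCast]

lemma ang_pos (v : Vec N) : 0 < ang v := add_pos_of_nonneg_of_pos (enorm_nonneg v) two_pos

variable {R : Finset (Vec d)} {r : {x // x ∈ R} → Fin d → ℤ}

lemma closure_range_eq_top_of_lattice_span (hA : IsUnit A.det)
    (hr : ∀ ρ, latticePt d A (r ρ) = ρ)
    (hRspan : ∀ x ∈ Lattice d A, ∃ c : Vec d → ℤ, x = ∑ ρ ∈ R, (c ρ : ℝ) • ρ) :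
    AddSubgroup.closure (Set.range r) = ⊤ := by
  refine (AddSubgroup.eq_top_iff' _).2 fun z => ?_
  obtain ⟨c, hc⟩ := hRspan _ ⟨z, rfl⟩
  have hz : z = ∑ ρ : {x // x ∈ R}, c ρ • r ρ := by
    refine latticePt_injective hA ?_
    change _ = latticeHom A _
    rw [hc, map_sum, ← Finset.sum_coe_sort R fun ρ => (c ρ : ℝ) • ρ]
    refine Finset.sum_congr rfl fun ρ _ => ?_
    rw [map_zsmul, Int.cast_smul_eq_zsmul, ← hr ρ]
    rfl
  rw [hz]
  exact sum_mem fun ρ _ => zsmul_mem (AddSubgroup.subset_closure (Set.mem_range_self ρ)) _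

lemma norm_fwdDiffs_col_le_DnormJmat (hr : ∀ ρ, latticePt d A (r ρ) = ρ)
    (G : Vec d → Fin N → Fin N → ℝ) (k : Fin N) (l : List {x // x ∈ R}) (z : Fin d → ℤ) :
    ‖fwdDiffs (l.map r) (fun z => col G k (latticePt d A z)) z‖ ≤
      DnormJmat R l.length G (latticePt d A z) := by
  have hl : l.map r = List.ofFn fun i => r (l.get i) :=
    List.ext_getElem (by simp) (by intros; simp)
  rw [hl, ← Dmulti_latticePt (fun i => hr (l.get i))]
  exact (norm_le_enorm _).trans <|
    (le_sqrt_sum_sq (fun ρs : Fin l.length → {x // x ∈ R} =>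
      enorm (Dmulti (fun i => (ρs i : Vec d)) (col G k) (latticePt d A z))) l.get).trans <|
    le_sqrt_sum_sq (fun k => DnormJ R l.length (col G k) (latticePt d A z)) k

lemma symbol_fwdDiff_col (hd : 2 ≤ d) (hA : IsUnit A.det) (hr : ∀ ρ, latticePt d A (r ρ) = ρ)
    (hgen : AddSubgroup.closure (Set.range r) = ⊤) {G : Vec d → Fin N → Fin N → ℝ}
    (hG : ∀ j : ℕ, 1 ≤ j → ∃ c : ℝ, ∀ z : Fin d → ℤ,
      DnormJmat R j G (latticePt d A z) ≤ c * ang (latticePt d A z) ^ ((2 : ℝ) - d - j))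
    (k : Fin N) (τ : Fin d → ℤ) (n : ℕ) :
    Symbol (fun z => ang (latticePt d A z)) n (d - 1)
      (Δ_[τ] fun z => col G k (latticePt d A z)) := fun l _ => by
  have hdecay : ∀ l : List {x // x ∈ R}, l ≠ [] →
      Decay (fun z => ang (latticePt d A z)) (d - 2 + l.length)
        (fwdDiffs (l.map r) fun z => col G k (latticePt d A z)) := fun l hl => by
    obtain ⟨c, hc⟩ := hG l.length (List.length_pos_iff.2 hl)
    refine ⟨|c|, abs_nonneg _, fun _ z => ?_⟩
    have := ang_pos (latticePt d A z)
    rw [← rpow_eq_inv_pow this.le (e := (2 : ℝ) - d - l.length) (by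
      rw [Nat.cast_add, Nat.cast_sub hd]
      push_cast
      ring)]
    exact (norm_fwdDiffs_col_le_DnormJmat hr G k l z).trans <| (hc z).trans <| by
      gcongr
      exact le_abs_self c
  have hexp : d - 2 + (τ :: l).length = d - 1 + l.length := by
    rw [List.length_cons]
    omega
  rw [← hexp]
  exact .fwdDiffs_of_closure_eq_top (latticeWeight_ang (one_le_two.trans hd) hA).slowlyVarying
    hgen hdecay (List.cons_ne_nil τ l)

lemma exists_DnormJ_le (hr : ∀ ρ, latticePt d A (r ρ) = ρ) {u : Vec d → Vec N} {s j : ℕ}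
    (hu : ∀ l : List (Fin d → ℤ), l.length = j →
      Decay (fun z => ang (latticePt d A z)) s (fwdDiffs l fun z => u (latticePt d A z))) :
    ∃ C : ℝ, ∀ z : Fin d → ℤ,
      DnormJ R j u (latticePt d A z) ≤ C * (ang (latticePt d A z) ^ s)⁻¹ := by
  choose C _ hC using fun ρs : Fin j → {x // x ∈ R} =>
    hu (List.ofFn fun i => r (ρs i)) List.length_ofFn
  refine ⟨∑ ρs, Real.sqrt N * C ρs, fun z => ?_⟩
  rw [Finset.sum_mul]
  refine (sqrt_sum_sq_le fun _ => enorm_nonneg _).trans (Finset.sum_le_sum fun ρs _ => ?_)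
  refine (enorm_le_mul_norm _).trans ?_
  rw [Dmulti_latticePt fun i => hr (ρs i), mul_assoc]
  exact mul_le_mul_of_nonneg_left (hC ρs () z) (Real.sqrt_nonneg _)

end InteractionRange

/-! ### The lattice problem in coordinates -/

section LatticeProblem

variable {d N : ℕ} {A : Matrix (Fin d) (Fin d) ℝ} {R : Finset (Vec d)}
  {r : {x // x ∈ R} → Fin d → ℤ}

lemma dotV_eq_dotProduct (x y : Vec N) : dotV x y = x ⬝ᵥ y := rfl

/-- The bilinear form `(x, y) ↦ x · M y`. -/
def matrixForm (M : Matrix (Fin N) (Fin N) ℝ) : Vec N →L[ℝ] Vec N →L[ℝ] ℝ :=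
  (Matrix.toLinearMap₂' ℝ M).toContinuousBilinearMap

lemma matrixForm_apply (M : Fin N → Fin N → ℝ) (x y : Vec N) :
    matrixForm M x y = dotV x (mulV M y) :=
  Matrix.toLinearMap₂'_apply' M x y

lemma D1_latticePt (hr : ∀ ρ, latticePt d A (r ρ) = ρ) (u : Vec d → Vec N) (ρ : {x // x ∈ R})
    (z : Fin d → ℤ) :
    D1 (ρ : Vec d) u (latticePt d A z) = Δ_[r ρ] (fun z => u (latticePt d A z)) z := by
  simp only [D1, fwdDiff, latticePt_add, hr]

lemma Dnorm1Sq_latticePt (hr : ∀ ρ, latticePt d A (r ρ) = ρ) (u : Vec d → Vec N)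
    (z : Fin d → ℤ) :
    Dnorm1Sq R u (latticePt d A z) =
      ∑ ρ, enorm (Δ_[r ρ] (fun z => u (latticePt d A z)) z) ^ 2 := by
  simp only [Dnorm1Sq, ← D1_latticePt hr]
  exact (Finset.sum_coe_sort R fun ρ => enorm (D1 ρ u (latticePt d A z)) ^ 2).symm

lemma extend_latticePt (hA : IsUnit A.det) (u : (Fin d → ℤ) → Vec N) :
    (fun z => Function.extend (latticePt d A) u 0 (latticePt d A z)) = u :=
  funext fun z => (latticePt_injective hA).extend_apply u 0 z

lemma inHc_of_finite_support (hr : ∀ ρ, latticePt d A (r ρ) = ρ) {u : Vec d → Vec N}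
    (hu : (fun z => u (latticePt d A z)).support.Finite) : InHc A R u := by
  obtain ⟨b, hb⟩ := exists_forall_le_enorm_notMem A <|
    Set.finite_iUnion fun ρ => finite_support_fwdDiff hu (r ρ)
  refine ⟨b, fun z hz ρ hρ => ?_⟩
  rw [D1_latticePt hr u ⟨ρ, hρ⟩]
  by_contra hne
  exact hb z hz (Set.mem_iUnion.2 ⟨⟨ρ, hρ⟩, hne⟩)

lemma stableForm_of_isStable (hA : IsUnit A.det) (hr : ∀ ρ, latticePt d A (r ρ) = ρ)
    {C : Vec d → Vec d → Fin N → Fin N → ℝ} (hC : IsStable d N A R C) :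
    StableForm r fun σ ρ : {x // x ∈ R} => matrixForm (C σ ρ) := by
  obtain ⟨c, hc, h⟩ := hC
  refine ⟨c, hc, fun u hu => ?_⟩
  have hext := extend_latticePt hA u
  set U : Vec d → Vec N := Function.extend (latticePt d A) u 0
  have hform (z : Fin d → ℤ) : (∑ σ ∈ R, ∑ ρ ∈ R,
      dotV (D1 σ U (latticePt d A z)) (mulV (C σ ρ) (D1 ρ U (latticePt d A z)))) =
        formDensity r (fun σ ρ : {x // x ∈ R} => matrixForm (C σ ρ)) u u z := by
    simp only [formDensity, matrixForm_apply, ← hext, ← D1_latticePt hr]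
    simp only [← Finset.sum_coe_sort R]
  have hU := h U (inHc_of_finite_support hr (by rwa [hext]))
  simp only [hform, Dnorm1Sq_latticePt hr, hext] at hU
  refine (mul_le_mul_of_nonneg_left (Summable.tsum_le_tsum (fun z => ?_)
    (summable_sum_norm_fwdDiff_sq hu) ?_) hc.le).trans hU
  · gcongr
    exact norm_le_enorm _
  · exact summable_sum fun ρ _ => summable_of_hasFiniteSupport <|
      (finite_support_fwdDiff hu (r ρ)).subset fun z hz => by
        contrapose! hz
        simp [Function.notMem_support.1 hz, enorm_zero]

lemma latticeOperator_matrixForm (hr : ∀ ρ, latticePt d A (r ρ) = ρ)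
    (C : Vec d → Vec d → Fin N → Fin N → ℝ) (u : Vec d → Vec N) (e : Vec N) (z : Fin d → ℤ) :
    latticeOperator r (fun σ ρ : {x // x ∈ R} => matrixForm (C σ ρ)) e
      (fun z => u (latticePt d A z)) z = dotV e (Hop d N R C u (latticePt d A z)) := by
  simp only [latticeOperator, ← D1_latticePt hr, latticePt_sub, hr, matrixForm_apply, Hop,
    dotV_eq_dotProduct, dotProduct_sum, dotProduct_sub]
  simp only [← Finset.sum_coe_sort R]

lemma isGreenFamily_col (hd : 2 ≤ d) (hA : IsUnit A.det) (hr : ∀ ρ, latticePt d A (r ρ) = ρ)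
    (hgen : AddSubgroup.closure (Set.range r) = ⊤) {C : Vec d → Vec d → Fin N → Fin N → ℝ}
    {G : Vec d → Fin N → Fin N → ℝ} (hG : IsLatticeGreen d N A R C G) :
    IsGreenFamily (fun z => ang (latticePt d A z)) d r
      (fun σ ρ : {x // x ∈ R} => matrixForm (C σ ρ)) (fun k e => e k)
      fun k z => col G k (latticePt d A z) where
  latticeOperator_eq k e := by
    funext z
    rw [latticeOperator_matrixForm hr, hG.1, dotV_eq_dotProduct]
    rcases eq_or_ne z 0 with rfl | hz
    · simp [latticePt_zero]
    · simp [hz, latticePt_eq_zero hA]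
  symbol_fwdDiff := symbol_fwdDiff_col hd hA hr hgen hG.2

lemma memℓp_fwdDiff_of_inH1 (hr : ∀ ρ, latticePt d A (r ρ) = ρ) {u : Vec d → Vec N}
    (hu : InH1 A R u) (ρ : {x // x ∈ R}) :
    Memℓp (Δ_[r ρ] fun z => u (latticePt d A z)) 2 := by
  refine memℓp_two_iff.2 (hu.of_nonneg_of_le (fun _ => by positivity) fun z => ?_)
  rw [Dnorm1Sq_latticePt hr]
  exact (pow_le_pow_left₀ (norm_nonneg _) (norm_le_enorm _) 2).trans <|
    Finset.single_le_sum (f := fun ρ => enorm (Δ_[r ρ] (fun z => u (latticePt d A z)) z) ^ 2)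
      (fun _ _ => sq_nonneg _) (Finset.mem_univ ρ)

lemma symbol_of_finite_support {Z E : Type*} [AddCommGroup Z] [NormedAddCommGroup E]
    {w : Z → ℝ} (hw : SlowlyVarying fun _ : Unit => w) {f : Z → E} (hf : f.support.Finite)
    (n s : ℕ) : Symbol w n s f := by
  have hpos (z : Z) : 0 < w z := one_pos.trans_le (hw.one_le () z)
  have hterm (z : Z) : 0 ≤ ‖f z‖ * w z ^ (s + n) := by
    have := hpos z
    positivity
  refine .of_decay hw ⟨∑ z ∈ hf.toFinset, ‖f z‖ * w z ^ (s + n),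
    Finset.sum_nonneg fun z _ => hterm z, fun _ z => ?_⟩
  have := hpos z
  rw [← div_eq_mul_inv, le_div_iff₀ (by positivity)]
  by_cases hz : f z = 0
  · simpa [hz] using Finset.sum_nonneg fun z _ => hterm z
  · exact Finset.single_le_sum (f := fun z => ‖f z‖ * w z ^ (s + n)) (fun z _ => hterm z)
      (hf.mem_toFinset.2 hz)

end LatticeProblem

/-! ### The equilibrium equation -/

section Equilibrium

lemma vanishesToSecondOrder_sub_affine {X Y : Type*} [NormedAddCommGroup X] [NormedSpace ℝ X]
    [NormedAddCommGroup Y] [NormedSpace ℝ Y] {n : ℕ} (hn : 1 ≤ n) {f : X → Y}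
    (hf : ContDiff ℝ n f) :
    VanishesToSecondOrder n fun x => f x - f 0 - fderiv ℝ f 0 x where
  contDiff := (hf.sub contDiff_const).sub (fderiv ℝ f 0).contDiff
  map_zero := by simp
  fderiv_zero := by
    have hdiff : DifferentiableAt ℝ f 0 :=
      hf.differentiable (by exact_mod_cast (one_pos.trans_le hn).ne') 0
    simpa using! ((hdiff.hasFDerivAt.sub_const (f 0)).sub (fderiv ℝ f 0).hasFDerivAt).fderiv

lemma clm_apply_eq_sum_single {ι : Type*} [Fintype ι] [DecidableEq ι] {N : ℕ}
    (L : (ι → Vec N) →L[ℝ] ℝ) (x : ι → Vec N) :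
    L x = ∑ i, ∑ j, L (Pi.single i (Pi.single j 1)) * x i j := by
  conv_lhs => rw [← Finset.univ_sum_single x]
  rw [map_sum]
  refine Finset.sum_congr rfl fun i _ => ?_
  conv_lhs => rw [← Finset.univ_sum_single (x i)]
  rw [← LinearMap.single_apply ℝ, map_sum, map_sum]
  refine Finset.sum_congr rfl fun j _ => ?_
  rw [mul_comm, ← smul_eq_mul, ← map_smul, LinearMap.single_apply, ← Pi.single_smul,
    ← Pi.single_smul, smul_eq_mul, mul_one]

variable {d N : ℕ} {A : Matrix (Fin d) (Fin d) ℝ} {R : Finset (Vec d)}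
  {r : {x // x ∈ R} → Fin d → ℤ} {V : ({x // x ∈ R} → Vec N) → ℝ}

/-- The part of the site force `∂V/∂g_ρ` in the direction `k` which is superlinear at the reference
configuration. -/
def nonlinearForce (R : Finset (Vec d)) (V : ({x // x ∈ R} → Vec N) → ℝ) (ρ : {x // x ∈ R})
    (k : Fin N) (x : {x // x ∈ R} → Vec N) : ℝ :=
  gradV R V ρ x k - gradV R V ρ 0 k - fderiv ℝ (fun y => gradV R V ρ y k) 0 x

lemma vanishesToSecondOrder_nonlinearForce {n : ℕ} (hn : 1 ≤ n) (hV : ContDiff ℝ (n + 1 : ℕ) V)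
    (ρ : {x // x ∈ R}) (k : Fin N) : VanishesToSecondOrder n (nonlinearForce R V ρ k) :=
  vanishesToSecondOrder_sub_affine hn <|
    (hV.fderiv_right (by exact_mod_cast le_rfl)).clm_apply contDiff_const

lemma fderiv_gradV (hV : ContDiff ℝ 2 V) (ρ : {x // x ∈ R}) (k : Fin N)
    (x : {x // x ∈ R} → Vec N) :
    fderiv ℝ (fun y => gradV R V ρ y k) 0 x =
      ∑ ρ' : {x // x ∈ R}, ∑ j, CofV R V ρ ρ' k j * x ρ' j := by
  have hdiff : DifferentiableAt ℝ (fderiv ℝ V) 0 :=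
    (hV.fderiv_right (m := 1) (by norm_num)).differentiable one_ne_zero 0
  have hsymm : IsSymmSndFDerivAt ℝ V 0 := hV.contDiffAt.isSymmSndFDerivAt (by simp)
  calc fderiv ℝ (fun y => gradV R V ρ y k) 0 x
      = fderiv ℝ (fderiv ℝ V) 0 x (Pi.single ρ (Pi.single k 1)) := by
        simp [gradV, fderiv_clm_apply hdiff]
    _ = fderiv ℝ (fderiv ℝ V) 0 (Pi.single ρ (Pi.single k 1)) x := hsymm.eq _ _
    _ = _ := by
        rw [clm_apply_eq_sum_single]
        simp [CofV, iteratedFDeriv_two_apply]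

lemma sum_matrixForm_CofV (hV : ContDiff ℝ 2 V) (ρ : {x // x ∈ R}) (e : Vec N)
    (x : {x // x ∈ R} → Vec N) :
    ∑ ρ' : {x // x ∈ R}, matrixForm (CofV R V ρ ρ') e (x ρ') =
      ∑ k, (gradV R V ρ x k - gradV R V ρ 0 k - nonlinearForce R V ρ k x) * e k := by
  simp only [nonlinearForce, sub_sub_cancel, fderiv_gradV hV, matrixForm_apply, dotV, mulV]
  rw [Finset.sum_comm]
  refine Finset.sum_congr rfl fun k _ => ?_
  rw [← Finset.mul_sum, mul_comm]

lemma tsum_dotV_fwdDiff_single {ι Z : Type*} [Fintype ι] [AddCommGroup Z] [DecidableEq Z]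
    (r : ι → Z) (F : ι → Z → Vec N) (e : Vec N) (z₀ : Z) :
    ∑' z, ∑ ρ, dotV (F ρ z) (Δ_[r ρ] (Pi.single z₀ e : Z → Vec N) z) =
      ∑ ρ, dotV e (F ρ (z₀ - r ρ) - F ρ z₀) := by
  refine (hasSum_sum fun ρ _ => ?_).tsum_eq
  simp only [fwdDiff, dotV_eq_dotProduct, dotProduct_sub, dotProduct_comm e, sub_dotProduct]
  have hleft : HasSum (fun z => F ρ z ⬝ᵥ (Pi.single z₀ e : Z → Vec N) (z + r ρ))
      (F ρ (z₀ - r ρ) ⬝ᵥ e) := by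
    convert hasSum_single (z₀ - r ρ) fun z hz => ?_ using 1
    · simp
    · rw [Pi.single_eq_of_ne fun h => hz (eq_sub_of_add_eq h), dotProduct_zero]
  have hright : HasSum (fun z => F ρ z ⬝ᵥ (Pi.single z₀ e : Z → Vec N) z) (F ρ z₀ ⬝ᵥ e) := by
    convert hasSum_single z₀ fun z hz => ?_ using 1
    · simp
    · rw [Pi.single_eq_of_ne hz, dotProduct_zero]
  exact hleft.sub hright

/-- `u` satisfies `δE(u)[v] = ∑_ℓ ∑_ρ g_ρ(ℓ) · D_ρ v(ℓ)` for all test fields `v ∈ 𝓗ᶜ`. -/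
def IsEquilibrium (A : Matrix (Fin d) (Fin d) ℝ) (V : ({x // x ∈ R} → Vec N) → ℝ)
    (g : Vec d → {x // x ∈ R} → Vec N) (u : Vec d → Vec N) : Prop :=
  ∀ v : Vec d → Vec N, InHc A R v →
    (∑' z : Fin d → ℤ, deltaEsite R V u v (latticePt d A z)) =
      ∑' z : Fin d → ℤ, ∑ ρ ∈ R.attach,
        dotV (g (latticePt d A z) ρ) (D1 (ρ : Vec d) v (latticePt d A z))

lemma IsEquilibrium.sum_dotV_gradV_sub_eq (hA : IsUnit A.det)
    (hr : ∀ ρ, latticePt d A (r ρ) = ρ) {g : Vec d → {x // x ∈ R} → Vec N} {u : Vec d → Vec N}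
    (hequil : IsEquilibrium A V g u)
    (e : Vec N) (z : Fin d → ℤ) :
    ∑ ρ, dotV e (gradV R V ρ (latticeGradient r (fun y => u (latticePt d A y)) (z - r ρ)) -
        gradV R V ρ (latticeGradient r (fun y => u (latticePt d A y)) z)) =
      ∑ ρ, dotV e (g (latticePt d A (z - r ρ)) ρ - g (latticePt d A z) ρ) := by
  have hext := extend_latticePt hA (Pi.single z e)
  set v : Vec d → Vec N := Function.extend (latticePt d A) (Pi.single z e) 0
  have hv : InHc A R v := inHc_of_finite_support hr <| by
    rw [hext]
    exact (Set.finite_singleton z).subset Pi.support_single_subset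
  have hD (y : Fin d → ℤ) : Dstencil R u (latticePt d A y) =
      latticeGradient r (fun y => u (latticePt d A y)) y := funext fun ρ => D1_latticePt hr u ρ y
  have htest := hequil v hv
  simp only [deltaEsite, D1_latticePt hr, hext, hD, ← Finset.univ_eq_attach] at htest
  rwa [tsum_dotV_fwdDiff_single r fun ρ y =>
    gradV R V ρ (latticeGradient r (fun y => u (latticePt d A y)) y),
    tsum_dotV_fwdDiff_single r fun ρ y => g (latticePt d A y) ρ] at htest

lemma IsEquilibrium.isFiniteEnergySolution (hA : IsUnit A.det)
    (hr : ∀ ρ, latticePt d A (r ρ) = ρ) (hV : ContDiff ℝ 2 V)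
    {g : Vec d → {x // x ∈ R} → Vec N} {u : Vec d → Vec N} (hu : InH1 A R u)
    (hequil : IsEquilibrium A V g u) :
    IsFiniteEnergySolution r (fun σ ρ : {x // x ∈ R} => matrixForm (CofV R V σ ρ))
      (fun k e => e k) (fun ρ k z => g (latticePt d A z) ρ k) (nonlinearForce R V)
      fun z => u (latticePt d A z) where
  memℓp := memℓp_fwdDiff_of_inH1 hr hu
  equation e := by
    funext z
    have hforce := hequil.sum_dotV_gradV_sub_eq hA hr e z
    set p := latticeGradient r fun y => u (latticePt d A y)
    have hform (ρ : {x // x ∈ R}) (y : Fin d → ℤ) :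
        ∑ ρ' : {x // x ∈ R}, matrixForm (CofV R V ρ ρ') e
          (Δ_[r ρ'] (fun y => u (latticePt d A y)) y) =
        ∑ k, (gradV R V ρ (p y) k - gradV R V ρ 0 k - nonlinearForce R V ρ k (p y)) * e k :=
      sum_matrixForm_CofV hV ρ e (p y)
    let F (ρ : {x // x ∈ R}) : ℝ :=
      ∑ k, (nonlinearForce R V ρ k (p (z - r ρ)) - nonlinearForce R V ρ k (p z)) * e k
    simp only [latticeOperator, Finset.sum_sub_distrib, hform, Finset.sum_apply, totalSource]
    calc _ = ∑ ρ, dotV e (gradV R V ρ (p (z - r ρ)) - gradV R V ρ (p z)) - ∑ ρ, F ρ := by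
          simp only [F, dotV, ← Finset.sum_sub_distrib, Pi.sub_apply]
          exact Finset.sum_congr rfl fun ρ _ => Finset.sum_congr rfl fun k _ => by ring
      _ = ∑ ρ, dotV e (g (latticePt d A (z - r ρ)) ρ - g (latticePt d A z) ρ) - ∑ ρ, F ρ := by
          rw [hforce]
      _ = _ := by
          simp only [F, dotV, ← Finset.sum_sub_distrib, Pi.sub_apply]
          exact Finset.sum_congr rfl fun ρ _ => Finset.sum_congr rfl fun k _ => by ring

end Equilibrium

/-! ### Multipole expansions with symmetric coefficients -/

section MultipoleExpansion

variable {Z E κ ν : Type*} [AddCommGroup Z] [NormedAddCommGroup E] [NormedSpace ℝ E]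

/-- The average of the coefficient arrays over all permutations of their indices. -/
def symmetrize (b : (i : ℕ) → κ → (Fin i → ν) → ℝ) (i : ℕ) (k : κ) (σ : Fin i → ν) : ℝ :=
  (i.factorial : ℝ)⁻¹ * ∑ π : Equiv.Perm (Fin i), b i k (σ ∘ π)

lemma symmetrize_comp_perm (b : (i : ℕ) → κ → (Fin i → ν) → ℝ) (i : ℕ) (k : κ)
    (π : Equiv.Perm (Fin i)) (σ : Fin i → ν) :
    symmetrize b i k (σ ∘ π) = symmetrize b i k σ :=
  congrArg ((i.factorial : ℝ)⁻¹ * ·) <|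
    Equiv.sum_comp (Equiv.mulLeft π) fun π' : Equiv.Perm (Fin i) => b i k (σ ∘ π')

variable [Fintype κ] [Fintype ν]

/-- The combination `∑_{i=1}^p ∑_k b^{(i,k)} : D^i h_k` of the differences of the fields `h_k` along
the directions `a`, as a linear function of the coefficient arrays `b`. -/
def multipoleExpansion (a : ν → Z) (p : ℕ) (h : κ → Z → E) :
    ((i : ℕ) → κ → (Fin i → ν) → ℝ) →ₗ[ℝ] Z → E where
  toFun b := ∑ i ∈ Finset.Icc 1 p, ∑ k, ∑ σ : Fin i → ν,
    b i k σ • fwdDiffs (List.ofFn (a ∘ σ)) (h k)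
  map_add' b c := by simp only [Pi.add_apply, add_smul, Finset.sum_add_distrib]
  map_smul' t b := by
    simp only [Pi.smul_apply, smul_assoc, Finset.smul_sum, RingHom.id_apply]

lemma multipoleExpansion_apply (a : ν → Z) (p : ℕ) (h : κ → Z → E)
    (b : (i : ℕ) → κ → (Fin i → ν) → ℝ) :
    multipoleExpansion a p h b = ∑ i ∈ Finset.Icc 1 p, ∑ k, ∑ σ : Fin i → ν,
      b i k σ • fwdDiffs (List.ofFn (a ∘ σ)) (h k) := rfl

lemma multipoleSpan_le_range_multipoleExpansion (a : ν → Z) (p : ℕ) (h : κ → Z → E) :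
    multipoleSpan a p h ≤ LinearMap.range (multipoleExpansion a p h) := by
  classical
  refine Submodule.span_le.2 ?_
  rintro _ ⟨σ, k, h1, hp, rfl⟩
  refine ⟨fun i k' τ => if k' = k ∧ List.ofFn τ = σ then 1 else 0, ?_⟩
  rw [multipoleExpansion_apply, Finset.sum_eq_single σ.length, Finset.sum_eq_single k,
    Finset.sum_eq_single σ.get]
  · rw [← List.map_ofFn, List.ofFn_get, if_pos ⟨rfl, rfl⟩, one_smul]
  · intro τ _ hτ
    rw [if_neg, zero_smul]
    rintro ⟨-, hσ⟩
    exact hτ (List.ofFn_injective (hσ.trans (List.ofFn_get σ).symm))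
  · simp
  · exact fun k' _ hk => Finset.sum_eq_zero fun τ _ => by simp [hk]
  · simp
  · intro i _ hi
    refine Finset.sum_eq_zero fun k' _ => Finset.sum_eq_zero fun τ _ => ?_
    rw [if_neg, zero_smul]
    rintro ⟨-, hσ⟩
    exact hi (by simp [← hσ])
  · exact fun hn => absurd (Finset.mem_Icc.2 ⟨h1, hp⟩) hn

lemma multipoleExpansion_symmetrize (a : ν → Z) (p : ℕ) (h : κ → Z → E)
    (b : (i : ℕ) → κ → (Fin i → ν) → ℝ) :
    multipoleExpansion a p h (symmetrize b) = multipoleExpansion a p h b := by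
  rw [multipoleExpansion_apply, multipoleExpansion_apply]
  refine Finset.sum_congr rfl fun i _ => Finset.sum_congr rfl fun k _ => ?_
  have hperm (π : Equiv.Perm (Fin i)) :
      ∑ σ : Fin i → ν, b i k (σ ∘ π) • fwdDiffs (List.ofFn (a ∘ σ)) (h k) =
        ∑ σ : Fin i → ν, b i k σ • fwdDiffs (List.ofFn (a ∘ σ)) (h k) := by
    rw [← (Equiv.arrowCongr π (.refl ν)).sum_comp]
    refine Finset.sum_congr rfl fun σ _ => ?_
    have hσ : Equiv.arrowCongr π (.refl ν) σ = σ ∘ π.symm := rfl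
    rw [hσ, Function.comp_assoc, Equiv.symm_comp_self, Function.comp_id, ← Function.comp_assoc,
      fwdDiffs_perm (Equiv.Perm.ofFn_comp_perm π.symm (a ∘ σ))]
  simp only [symmetrize, mul_smul, Finset.sum_smul]
  rw [← Finset.smul_sum, Finset.sum_comm, Finset.sum_congr rfl fun π _ => hperm π,
    Finset.sum_const, Finset.card_univ, Fintype.card_perm, Fintype.card_fin,
    ← Nat.cast_smul_eq_nsmul ℝ, inv_smul_smul₀ (by exact_mod_cast i.factorial_ne_zero)]

end MultipoleExpansion

section Lattice

variable {d N : ℕ} {A : Matrix (Fin d) (Fin d) ℝ} {R : Finset (Vec d)}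

lemma symbol_of_forall_le_enorm {E : Type*} [NormedAddCommGroup E] (hd : 1 ≤ d)
    (hA : IsUnit A.det) {f : (Fin d → ℤ) → E} {b : ℝ}
    (hf : ∀ z, b ≤ enorm (latticePt d A z) → f z = 0) (n s : ℕ) :
    Symbol (fun z => ang (latticePt d A z)) n s f :=
  symbol_of_finite_support (latticeWeight_ang hd hA).slowlyVarying
    ((finite_enorm_latticePt_lt hA b).subset fun z hz => not_le.1 fun h => hz (hf z h)) n s

lemma sum_multipole_latticePt {s : Fin d → Vec d} {a : Fin d → Fin d → ℤ}
    (ha : ∀ i, latticePt d A (a i) = s i) {κ : Type*} [Fintype κ] (p : ℕ)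
    (h : κ → Vec d → Vec N) (b : (i : ℕ) → κ → (Fin i → Fin d) → ℝ) (z : Fin d → ℤ) :
    ∑ i ∈ Finset.Icc 1 p, ∑ k, multipole d N s i (b i k) (h k) (latticePt d A z) =
      multipoleExpansion a p (fun k z => h k (latticePt d A z)) b z := by
  simp only [multipoleExpansion_apply, Finset.sum_apply, Pi.smul_apply, multipole]
  refine Finset.sum_congr rfl fun i _ => Finset.sum_congr rfl fun k _ =>
    Finset.sum_congr rfl fun σ _ => ?_
  rw [Dmulti_latticePt fun m => ha (σ m)]
  rfl

lemma exists_DnormJ_le_rpow (hd : 1 ≤ d) {r : {x // x ∈ R} → Fin d → ℤ}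
    (hr : ∀ ρ, latticePt d A (r ρ) = ρ) {q : Vec d → Vec N} {p j J : ℕ}
    (hq : (fun z => q (latticePt d A z)) ∈
      remainderSpace (fun z => ang (latticePt d A z)) (d - 1 + p) J) (h1 : 1 ≤ j) (hj : j ≤ J) :
    ∃ C : ℝ, ∀ z : Fin d → ℤ,
      DnormJ R j q (latticePt d A z) ≤ C * ang (latticePt d A z) ^ ((1 : ℝ) - d - p - j) := by
  obtain ⟨C, hC⟩ := exists_DnormJ_le (s := d - 1 + p + j) hr fun l hl => by
    simpa only [hl] using hq l (by omega) (by omega)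
  refine ⟨C, fun z => ?_⟩
  rw [rpow_eq_inv_pow (ang_pos _).le (n := d - 1 + p + j)]
  · exact hC z
  · push_cast [Nat.cast_sub hd]
    ring

end Lattice

theorem point_defect_pure_multipole_expansion_general
    (d N : ℕ) (hd : 2 ≤ d)
    (A : Matrix (Fin d) (Fin d) ℝ) (hA : IsUnit A.det)
    (R : Finset (Vec d)) (hRlat : ∀ ρ ∈ R, ρ ∈ Lattice d A)
    (hRspan : ∀ x ∈ Lattice d A, ∃ c : Vec d → ℤ, x = ∑ ρ ∈ R, (c ρ : ℝ) • ρ)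
    (p K : ℕ) (hp : p < d) (hK : 3 ≤ K)
    (V : ({x // x ∈ R} → Vec N) → ℝ) (hV : ContDiff ℝ (K : ℕ∞) V)
    (hstab : IsStable d N A R (CofV R V))
    (G : Vec d → Fin N → Fin N → ℝ) (hG : IsLatticeGreen d N A R (CofV R V) G)
    (g : Vec d → {x // x ∈ R} → Vec N)
    (hgsupp : ∃ rad : ℝ, ∀ z : Fin d → ℤ, rad ≤ enorm (latticePt d A z) →
      ∀ ρ : {x // x ∈ R}, g (latticePt d A z) ρ = 0)
    (ubar : Vec d → Vec N) (hubar : InH1 A R ubar) (hequil : IsEquilibrium A V g ubar)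
    (s : Fin d → Vec d) (hslat : ∀ i, s i ∈ Lattice d A)
    (hsind : LinearIndependent ℝ s)
    (hsspan : ∀ x ∈ Lattice d A, ∃ z : Fin d → ℤ, x = ∑ i, (z i : ℝ) • s i) :
    ∃ b : (i : ℕ) → Fin N → (Fin i → Fin d) → ℝ,
      (∀ (i : ℕ) (k : Fin N), SymArr (b i k)) ∧
      (∀ j : ℕ, 1 ≤ j → j + 1 ≤ K → ∃ Cj : ℝ, ∀ z : Fin d → ℤ,
        DnormJ R j
          (fun ℓ => ubar ℓ -
            ∑ i ∈ Finset.Icc 1 p, ∑ k : Fin N,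
              multipole d N s i (b i k) (col G k) ℓ)
          (latticePt d A z) ≤
          Cj * ang (latticePt d A z) ^ ((1 : ℝ) - d - p - j)) := by
  have hd1 : 1 ≤ d := by omega
  have hw := latticeWeight_ang hd1 hA
  obtain ⟨n, rfl⟩ := Nat.exists_eq_add_of_le' hK
  have : Nonempty (Fin d) := ⟨⟨0, hd1⟩⟩
  choose r hr using fun ρ : {x // x ∈ R} => hRlat ρ ρ.2
  obtain ⟨rad, hrad⟩ := hgsupp
  obtain ⟨χ, hχ⟩ := exists_isSmoothCutoff_ang hd1 hA
  obtain ⟨a, ha, ⟨P⟩⟩ := exists_lift_nonempty_shortPaths (E := Vec N) hd1 hA hslat hsind hsspan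
  have hgen := closure_range_eq_top_of_lattice_span hA hr hRspan
  have hV2 : ContDiff ℝ (2 : ℕ) V := hV.of_le (Nat.cast_le.2 (by omega : 2 ≤ n + 3))
  have hu := hequil.isFiniteEnergySolution hA hr hV2 hubar
  obtain ⟨x, hx, q, hq, hsum⟩ := Submodule.mem_sup.1 <|
    hu.mem_multipoleSpan_sup_remainderSpace hw hd hgen (stableForm_of_isStable hA hr hstab)
      (isGreenFamily_col hd hA hr hgen hG) P hχ hp
      (vanishesToSecondOrder_nonlinearForce (by omega) hV)
      fun ρ k m => symbol_of_forall_le_enorm hd1 hA (fun z hz => congrFun (hrad z hz ρ) k) m _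
  obtain ⟨b, rfl⟩ := multipoleSpan_le_range_multipoleExpansion a p _ hx
  refine ⟨symmetrize b, fun i k => symmetrize_comp_perm b i k, fun j h1 hj =>
    exists_DnormJ_le_rpow hd1 hr ?_ h1 (Nat.le_of_succ_le_succ hj)⟩
  simp only [sum_multipole_latticePt ha, multipoleExpansion_symmetrize]
  convert hq using 1
  rw [eq_sub_of_add_eq' hsum]
  rfl

/-- Remark: low-order pure multipole expansion for point
defects, with no logarithmic factor. -/
theorem point_defect_pure_multipole_expansion
    (d : ℕ) (hd : 2 ≤ d)
    (A : Matrix (Fin d) (Fin d) ℝ) (hA : IsUnit A.det)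
    (R : Finset (Vec d)) (hR0 : (0 : Vec d) ∉ R)
    (hRlat : ∀ ρ ∈ R, ρ ∈ Lattice d A)
    (hRsym : ∀ ρ ∈ R, -ρ ∈ R)
    (hRspan : ∀ x ∈ Lattice d A, ∃ c : Vec d → ℤ, x = ∑ ρ ∈ R, (c ρ : ℝ) • ρ)
    (p J K : ℕ) (hp : p < d) (hK : J + 2 ≤ K)
    (V : ({x // x ∈ R} → Vec d) → ℝ)
    (hV : ContDiff ℝ (K : ℕ∞) V)
    (hVsym : PointSym R hRsym V)
    (hstab : IsStable d d A R (CofV R V))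
    (G : Vec d → Fin d → Fin d → ℝ) (hG : IsLatticeGreen d d A R (CofV R V) G)
    (g : Vec d → {x // x ∈ R} → Vec d)
    (hgsupp : ∃ rad : ℝ, ∀ z : Fin d → ℤ, rad ≤ enorm (latticePt d A z) →
      ∀ ρ : {x // x ∈ R}, g (latticePt d A z) ρ = 0)
    (ubar : Vec d → Vec d) (hubar : InH1 A R ubar)
    (hequil : ∀ v : Vec d → Vec d, InHc A R v →
      (∑' z : Fin d → ℤ, deltaEsite R V ubar v (latticePt d A z)) =
        ∑' z : Fin d → ℤ, ∑ ρ ∈ R.attach,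
          dotV (g (latticePt d A z) ρ) (D1 (ρ : Vec d) v (latticePt d A z)))
    (s : Fin d → Vec d) (hslat : ∀ i, s i ∈ Lattice d A)
    (hsind : LinearIndependent ℝ s)
    (hsspan : ∀ x ∈ Lattice d A, ∃ z : Fin d → ℤ, x = ∑ i, (z i : ℝ) • s i) :
    ∃ b : (i : ℕ) → Fin d → (Fin i → Fin d) → ℝ,
      (∀ (i : ℕ) (k : Fin d), SymArr (b i k)) ∧
      (∀ j : ℕ, 1 ≤ j → j ≤ J → ∃ Cj : ℝ, ∀ z : Fin d → ℤ,
        DnormJ R j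
          (fun ℓ => ubar ℓ -
            ∑ i ∈ Finset.Icc 1 p, ∑ k : Fin d,
              multipole d d s i (b i k) (col G k) ℓ)
          (latticePt d A z) ≤
          Cj * ang (latticePt d A z) ^ ((1 : ℝ) - d - p - j)) := by
  obtain rfl | hJ := J.eq_zero_or_pos
  · exact ⟨fun _ _ _ => 0, fun _ _ _ _ => rfl, fun j h1 h0 => absurd (h1.trans h0) (by simp)⟩
  obtain ⟨b, hb, hdecay⟩ := point_defect_pure_multipole_expansion_general d d hd A hA R hRlat
    hRspan p K hp (by omega) V hV hstab G hG g hgsupp ubar hubar hequil s hslat hsind hsspan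
  exact ⟨b, hb, fun j h1 hj => hdecay j h1 (by omega)⟩

end Defect
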